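/- arXiv:1803.10483 — 7 statements merged into one kernel-verified Lean document; each statement's English description precedes it below -/
import Mathlib

section
/- Let A and B be unital complex C*-algebras and T : A → B a continuous unital algebra homomorphism satisfying the Riesz property. Then the set of T-Riesz elements of A equals ker T + QN(A); more precisely: (i) for every a ∈ A with σ_B(T a) ⊆ {0} there exist c, d ∈ A with a = c + d, c quasinilpotent (σ_A(c) = {0}), T d = 0, and d normal (d* · d = d · d*); and (ii) conversely, for any c, d ∈ A with c quasinilpotent and T d = 0, the element a = c + d satisfies σ_B(T a) ⊆ {0}. -/
/-!
Write `J = ker T`. Part (ii) is immediate, since `T (c + d) = T c` and homomorphisms shrink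
spectra.

For (i), the decomposition is a greedy Schur triangularisation of `a` which uses neither
holomorphic functional calculus nor corner algebras.

* `exists_eigenproj`: if `T a` is quasinilpotent, some `l ∈ σ(a)` of maximal modulus satisfies
  `a * e = l • e` for a projection `e ∈ J`, nonzero unless `l = 0`. For `l ≠ 0`, put
  `u = a - l`. As `l` lies on the boundary of the spectrum, `u` has no left inverse, so
  `0 ∈ σ(u⋆u)`. Invertibility of `T u` forces `f(u⋆u) ∈ J` for bump functions `f` concentrated
  near `0`, the Riesz property then makes `0` isolated in `σ(u⋆u)`, and `e` is the corresponding
  spectral projection.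
* `exists_schur`: iterating this from `a₀ = a`, `aₙ₊₁ = (1 - eₙ) aₙ` gives orthogonal projections
  `eₙ ∈ J` and scalars `lₙ` with `aₙ = (1 - e₀ - ⋯ - eₙ₋₁) a`, `aₙ eₙ = lₙ eₙ` and
  `σ(aₙ) ⊆ {|z| ≤ |lₙ|}`.
* `tendsto_ker_mul`: `j eₙ → 0` for every `j ∈ J`. By the Riesz property, projections in `J`
  satisfy the descending chain condition, so by well-founded induction one may replace `j` by a
  minimal projection `p`. Then `p eₙ p = tₙ p` with `tₙ ≥ 0` and `∑ tₙ < ∞`.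
* `tendsto_eigenvalues`: `lₙ → 0`, because `eₙ aᵏ eₙ = lₙᵏ eₙ` and `aᵏ` is within `δᵏ` of `J` for
  suitable `k` (`exists_pow_approx`).

Hence `d = ∑ lₙ eₙ` converges in norm to a normal element of `J`. If `c = a - d` were not
quasinilpotent, `exists_eigenproj` applied to `c⋆` would give `f ≠ 0` and `μ ≠ 0` with
`f c = μ f`. Triangularity yields `f eₙ = 0` for all `n`, so `f aₙ = f a = μ f` and `|μ| ≤ |lₙ|`
for all `n`, which is impossible.
-/

open Filter Topology

section helpers

variable {A B : Type*} [CStarAlgebra A] [NormedRing B] [NormedAlgebra ℂ B]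

/-! ### Distance to the kernel -/

theorem exists_bound (T : A →ₐ[ℂ] B) (hT : Continuous T) :
    ∃ C : ℝ, 1 ≤ C ∧ ∀ x, ‖T x‖ ≤ C * ‖x‖ := by
  let L : A →L[ℂ] B := ⟨T.toLinearMap, hT⟩
  refine ⟨max 1 ‖L‖, le_max_left _ _, fun x => (L.le_opNorm x).trans ?_⟩
  gcongr
  exact le_max_right _ _

/-- The squared distance of `x` to `ker T` is at most `‖T (x⋆x)‖`. With `h = x⋆x` and
`s > ‖T h‖`, any bounded function of `h` vanishing on `(-∞, s]` is divisible by all powers of `h`, with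
quotients of norm `O(s⁻ⁿ)`, and hence lies in `ker T`. -/
theorem exists_ker_approx (T : A →ₐ[ℂ] B) (hT : Continuous T) (x : A) (s : ℝ)
    (hs : ‖T (star x * x)‖ < s) : ∃ j, T j = 0 ∧ ‖x - j‖ ^ 2 ≤ s := by
  have hs0 : 0 < s := (norm_nonneg _).trans_lt hs
  obtain ⟨C, hC1, hC⟩ := exists_bound T hT
  set h := star x * x with hh
  -- `1 - G` is the function `(t - s)⁺ / t` of `h`
  have hsa : IsSelfAdjoint h := IsSelfAdjoint.star_mul_self x
  have hmax : ∀ t : ℝ, 0 < max t s := fun t => hs0.trans_le (le_max_right _ _)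
  have hmax' : ∀ t : ℝ, max t s ≠ 0 := fun t => (hmax t).ne'
  have hc1 : Continuous fun t : ℝ => s / max t s :=
    continuous_const.div (continuous_id.max continuous_const) hmax'
  set G := cfc (fun t : ℝ => s / max t s) h with hG
  have hGsa : star G = G := (cfc_predicate (fun t : ℝ => s / max t s) h : IsSelfAdjoint G)
  have hF : 1 - G = cfc (fun t : ℝ => 1 - s / max t s) h := by
    rw [cfc_sub (fun _ => (1 : ℝ)) _ h (by fun_prop) hc1.continuousOn, cfc_const_one ℝ h]
  have hTF : T (1 - G) = 0 := by
    have key : ∀ n : ℕ, ‖T (1 - G)‖ ≤ C * ((‖T h‖ / s) ^ n * ‖(1 : B)‖) := by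
      intro n
      have hc2 : Continuous fun t : ℝ => (1 - s / max t s) / (max t s) ^ n :=
        (continuous_const.sub hc1).div ((continuous_id.max continuous_const).pow n)
          fun t => pow_ne_zero n (hmax' t)
      have e1 : 1 - G = h ^ n * cfc (fun t : ℝ => (1 - s / max t s) / (max t s) ^ n) h := by
        rw [hF, ← cfc_pow_id (R := ℝ) h n, ← cfc_mul _ _ h (by fun_prop) hc2.continuousOn]
        refine cfc_congr fun t _ => ?_
        have := hmax' t
        rcases le_total t s with hts | hts
        · simp [max_eq_right hts, hs0.ne']
        · rw [max_eq_left hts] at this ⊢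
          field_simp
      have e2 : ‖cfc (fun t : ℝ => (1 - s / max t s) / (max t s) ^ n) h‖ ≤ 1 / s ^ n := by
        refine norm_cfc_le (by positivity) fun t _ => ?_
        have h1 : s / max t s ≤ 1 := (div_le_one (hmax t)).2 (le_max_right _ _)
        have h2 : 0 < s / max t s := div_pos hs0 (hmax t)
        rw [Real.norm_eq_abs, abs_of_nonneg (div_nonneg (by linarith) (pow_pos (hmax t) n).le)]
        gcongr
        · linarith
        · exact le_max_right _ _
      calc ‖T (1 - G)‖ ≤ ‖(T h) ^ n‖ * (C * (1 / s ^ n)) := by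
            rw [e1, map_mul, map_pow]
            refine (norm_mul_le _ _).trans ?_
            gcongr
            exact (hC _).trans (by gcongr)
        _ ≤ (‖T h‖ ^ n * ‖(1 : B)‖) * (C * (1 / s ^ n)) := by
            gcongr
            calc ‖(T h) ^ n‖ = ‖(T h) ^ n * 1‖ := by rw [mul_one]
              _ ≤ _ := by
                clear e1 e2 hc2
                induction n with
                | zero => simp
                | succ n ih =>
                  rw [pow_succ', mul_assoc, pow_succ', mul_assoc]
                  exact (norm_mul_le _ _).trans (by gcongr)
        _ = _ := by rw [div_pow]; ring
    have hlim : Tendsto (fun n : ℕ => C * ((‖T h‖ / s) ^ n * ‖(1 : B)‖)) atTop (𝓝 (C * (0 * ‖(1 : B)‖))) :=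
      ((tendsto_pow_atTop_nhds_zero_of_lt_one (by positivity)
        ((div_lt_one hs0).2 hs)).mul_const _).const_mul _
    have := ge_of_tendsto' hlim key
    simpa using this
  refine ⟨x - x * G, ?_, ?_⟩
  · rw [← mul_one_sub, map_mul, hTF, mul_zero]
  · rw [sub_sub_cancel, sq, ← CStarRing.norm_star_mul_self, star_mul, hGsa]
    have e : G * star x * (x * G) = cfc (fun t : ℝ => (s / max t s) * (t * (s / max t s))) h := by
      rw [cfc_mul _ _ h hc1.continuousOn (by exact (continuous_id.mul hc1).continuousOn),
        cfc_mul _ _ h (by fun_prop) hc1.continuousOn, cfc_id' ℝ h, ← hG, hh]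
      simp only [mul_assoc]
    rw [e]
    refine norm_cfc_le hs0.le fun t ht => ?_
    have ht0 : 0 ≤ t := spectrum_star_mul_self_nonneg t ht
    have h1 : s / max t s ≤ 1 := (div_le_one (hmax t)).2 (le_max_right _ _)
    have h2 : 0 < s / max t s := div_pos hs0 (hmax t)
    have h3 : t * (s / max t s) ≤ s := by
      rw [mul_div_assoc', div_le_iff₀ (hmax t), mul_comm]
      exact mul_le_mul_of_nonneg_left (le_max_left _ _) hs0.le
    have h4 : 0 ≤ t * (s / max t s) := by positivity
    rw [Real.norm_eq_abs, abs_of_nonneg (by positivity)]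
    nlinarith

/-- `ker T` is closed under the involution, although `T` need not preserve it. -/
theorem star_mem_ker (T : A →ₐ[ℂ] B) (hT : Continuous T) {x : A} (hx : T x = 0) :
    T (star x) = 0 := by
  have hcl : IsClosed {y : A | T y = 0} := isClosed_eq hT continuous_const
  refine hcl.closure_subset (Metric.mem_closure_iff.2 fun ε hε => ?_)
  obtain ⟨j, hj, hj'⟩ := exists_ker_approx T hT (star x) ((ε / 2) ^ 2) (by
    rw [star_star, map_mul, hx, zero_mul, norm_zero]; positivity)
  refine ⟨j, hj, ?_⟩
  rw [dist_eq_norm]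
  have := (abs_le_of_sq_le_sq' hj' (by positivity)).2
  linarith

/-- If `T a` is quasinilpotent, then so is `a` modulo `ker T`: powers of `a` come within
arbitrarily small geometric bounds of the kernel. -/
theorem exists_pow_approx [CompleteSpace B] (T : A →ₐ[ℂ] B) (hT : Continuous T) {a : A}
    (ha : spectrum ℂ (T a) ⊆ {0}) {δ : ℝ} (hδ : 0 < δ) :
    ∃ k : ℕ, ∃ j, T j = 0 ∧ ‖a ^ (k + 1) - j‖ < δ ^ (k + 1) := by
  obtain ⟨C, hC1, hC⟩ := exists_bound T hT
  have hr : spectralRadius ℂ (T a) = 0 := by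
    rw [spectralRadius, ← le_zero_iff]
    refine iSup₂_le fun k hk => ?_
    rw [ha hk]; simp
  -- chosen so that `‖a‖ * ε ≤ (δ / 2) ^ 2`; the spare factor `4 ^ (-k)` absorbs the constant `C`
  set ε : ℝ := (δ / 2) ^ 2 / (‖a‖ + 1) with hε
  have hε0 : 0 < ε := by positivity
  have h1 := spectrum.pow_norm_pow_one_div_tendsto_nhds_spectralRadius (T a)
  rw [hr] at h1
  have h2 : ∀ᶠ n : ℕ in atTop, ‖(T a) ^ n‖ ≤ ε ^ n := by
    have h3 := h1.eventually (gt_mem_nhds (show (0 : ENNReal) < ENNReal.ofReal ε by simpa using hε0))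
    filter_upwards [h3, eventually_gt_atTop 0] with n hn hn0
    have h4 := (ENNReal.ofReal_lt_ofReal_iff hε0).1 hn
    have h5 := pow_le_pow_left₀ (by positivity) h4.le n
    rwa [one_div, Real.rpow_inv_natCast_pow (norm_nonneg _) hn0.ne'] at h5
  have h6 : ∀ᶠ n : ℕ in atTop, C * (1/4) ^ n < 1 := by
    have : Tendsto (fun n : ℕ => C * (1/4 : ℝ) ^ n) atTop (𝓝 (C * 0)) :=
      (tendsto_pow_atTop_nhds_zero_of_lt_one (by norm_num) (by norm_num)).const_mul _
    exact this.eventually (gt_mem_nhds (by simp))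
  obtain ⟨n, hn2, hn6, hn⟩ := (h2.and (h6.and (eventually_gt_atTop 0))).exists
  obtain ⟨k, rfl⟩ : ∃ k, n = k + 1 := ⟨n - 1, by omega⟩
  have hq : ‖T (star (a ^ (k+1)) * a ^ (k+1))‖ < (δ ^ (k+1)) ^ 2 := by
    calc ‖T (star (a ^ (k+1)) * a ^ (k+1))‖ ≤ (C * ‖a‖ ^ (k+1)) * ε ^ (k+1) := by
          rw [map_mul, map_pow T a]
          refine (norm_mul_le _ _).trans ?_
          gcongr
          refine (hC _).trans ?_
          rw [norm_star]
          gcongr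
          exact norm_pow_le' a (Nat.succ_pos k)
      _ = C * (‖a‖ * ε) ^ (k+1) := by rw [mul_pow]; ring
      _ ≤ C * ((δ / 2) ^ 2) ^ (k+1) := by
          gcongr
          rw [hε, mul_div_assoc', div_le_iff₀ (by positivity), mul_comm]
          gcongr
          linarith
      _ = (C * (1/4) ^ (k+1)) * (δ ^ (k+1)) ^ 2 := by
          rw [show (δ / 2) ^ 2 = (1/4) * δ ^ 2 by ring, mul_pow]; ring
      _ < 1 * (δ ^ (k+1)) ^ 2 := by gcongr
      _ = _ := one_mul _
  obtain ⟨s, hs1, hs2⟩ := exists_between hq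
  obtain ⟨j, hj, hj'⟩ := exists_ker_approx T hT _ s hs1
  exact ⟨k, j, hj, (abs_lt_of_sq_lt_sq' (hj'.trans_lt hs2) (by positivity)).2⟩

/-- Quasinilpotency of `T a` passes to `T (star a)`: approximate powers of `a` modulo the
self-adjoint ideal `ker T`. -/
theorem star_riesz [CompleteSpace B] (T : A →ₐ[ℂ] B) (hT : Continuous T) {a : A}
    (ha : spectrum ℂ (T a) ⊆ {0}) : spectrum ℂ (T (star a)) ⊆ {0} := by
  obtain ⟨C, hC1, hC⟩ := exists_bound T hT
  set D := C * (‖(1 : B)‖ + 1) with hD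
  have hD1 : 1 ≤ D := by nlinarith [norm_nonneg (1 : B)]
  intro z hz
  by_contra hz0
  have hz0' : 0 < ‖z‖ := norm_pos_iff.2 hz0
  obtain ⟨k, j, hj, hkj⟩ := exists_pow_approx T hT ha (δ := ‖z‖ / D) (by positivity)
  have h1 : T (star a) ^ (k+1) = T (star (a ^ (k+1) - j)) := by
    rw [star_sub, map_sub, star_mem_ker T hT hj, sub_zero, star_pow, map_pow]
  have h2 := spectrum.norm_le_norm_mul_of_mem (spectrum.pow_mem_pow _ (k+1) hz)
  rw [h1, norm_pow] at h2
  have h3 : ‖T (star (a ^ (k+1) - j))‖ * ‖(1 : B)‖ ≤ D * ‖a ^ (k+1) - j‖ := by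
    have := hC (star (a ^ (k+1) - j))
    rw [norm_star] at this
    calc _ ≤ (C * ‖a ^ (k+1) - j‖) * (‖(1 : B)‖ + 1) := by gcongr; linarith
      _ = _ := by rw [hD]; ring
  have h4 : D * ‖a ^ (k+1) - j‖ < D * (‖z‖ / D) ^ (k+1) := by gcongr
  have h5 : D * (‖z‖ / D) ^ (k+1) ≤ ‖z‖ ^ (k+1) := by
    rw [div_pow, mul_div_assoc', div_le_iff₀ (by positivity), mul_comm]
    gcongr
    exact le_self_pow₀ hD1 (by omega)
  linarith

/-! ### Elements of a kernel with the Riesz property -/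

/-- The Riesz property: spectra of elements of `ker T` accumulate at most at `0`. The set on the
left is the set of accumulation points. -/
def RieszProperty (T : A →ₐ[ℂ] B) : Prop :=
  ∀ x : A, T x = 0 → {z : ℂ | z ∈ closure (spectrum ℂ x \ {z})} ⊆ {0}

theorem RieszProperty.isolated {T : A →ₐ[ℂ] B} (hR : RieszProperty T) {x : A} (hx : T x = 0)
    {s : ℝ} (hs : s ≠ 0) : ∃ ε > 0, ∀ r ∈ spectrum ℝ x, |r - s| < ε → r = s := by
  by_contra! h
  have : (s : ℂ) ∈ ({0} : Set ℂ) := by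
    refine hR x hx (Metric.mem_closure_iff.2 fun ε hε => ?_)
    obtain ⟨r, hr, hrs, hne⟩ := h ε hε
    refine ⟨(r : ℂ), ⟨spectrum.algebraMap_mem ℂ hr, by simpa using hne⟩, ?_⟩
    rw [dist_comm, dist_eq_norm, ← Complex.ofReal_sub, Complex.norm_real]
    exact hrs
  exact hs (by simpa using this)

/-- Away from `0` the spectrum of `x ∈ ker T` is discrete, so only continuity at `0` matters. -/
theorem RieszProperty.continuousOn {T : A →ₐ[ℂ] B} (hR : RieszProperty T) {x : A} (hx : T x = 0)
    {f : ℝ → ℝ} (hf : ∀ᶠ r in 𝓝 0, f r = 0) : ContinuousOn f (spectrum ℝ x) := by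
  intro s _
  by_cases h0 : s = 0
  · subst h0
    exact (continuousAt_const.congr (hf.mono fun r hr => hr.symm)).continuousWithinAt
  · obtain ⟨ε, hε, h⟩ := hR.isolated hx h0
    refine (continuousWithinAt_const (b := f s)).congr_of_eventuallyEq ?_ rfl
    have h1 : ∀ᶠ r in 𝓝[spectrum ℝ x] s, r ∈ Metric.ball s ε :=
      mem_nhdsWithin_of_mem_nhds (Metric.ball_mem_nhds s hε)
    filter_upwards [h1, self_mem_nhdsWithin] with r hr hr'
    rw [h r hr' (by simpa [Real.dist_eq] using hr)]

theorem RieszProperty.cfc_eq_mul {T : A →ₐ[ℂ] B} (hR : RieszProperty T) {x : A} (hx : T x = 0)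
    (hsa : IsSelfAdjoint x) {f : ℝ → ℝ} (hf : ∀ᶠ r in 𝓝 0, f r = 0) :
    cfc f x = x * cfc (fun r => f r / r) x := by
  have hg : ∀ᶠ r in 𝓝 (0 : ℝ), f r / r = 0 := hf.mono fun r hr => by simp [hr]
  conv_rhs => enter [1]; rw [← cfc_id' ℝ x]
  rw [← cfc_mul _ _ x (by fun_prop) (hR.continuousOn hx hg)]
  refine cfc_congr fun r _ => ?_
  by_cases h : r = 0
  · subst h; simpa using hf.self_of_nhds
  · field_simp

theorem RieszProperty.map_cfc {T : A →ₐ[ℂ] B} (hR : RieszProperty T) {x : A} (hx : T x = 0)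
    (hsa : IsSelfAdjoint x) {f : ℝ → ℝ} (hf : ∀ᶠ r in 𝓝 0, f r = 0) : T (cfc f x) = 0 := by
  rw [hR.cfc_eq_mul hx hsa hf, map_mul, hx, zero_mul]

theorem isStarProjection_cfc {x : A} {f : ℝ → ℝ} (hf : ContinuousOn f (spectrum ℝ x))
    (h01 : ∀ r, f r * f r = f r) : IsStarProjection (cfc f x) :=
  ⟨by rw [IsIdempotentElem, ← cfc_mul _ _ x hf hf]; simp only [h01], cfc_predicate f x⟩

theorem mem_spectrum_of_mul_eq {x q : A} {z : ℂ} (hq : q ≠ 0) (h : x * q = z • q) :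
    z ∈ spectrum ℂ x := by
  intro hu
  apply hq
  have : (algebraMap ℂ A z - x) * q = 0 := by
    rw [sub_mul, h, Algebra.algebraMap_eq_smul_one, smul_mul_assoc, one_mul, sub_self]
  exact hu.mul_right_eq_zero.1 this

theorem mem_spectrum_of_mul_eq' {x q : A} {z : ℂ} (hq : q ≠ 0) (h : q * x = z • q) :
    z ∈ spectrum ℂ x := by
  intro hu
  apply hq
  have : q * (algebraMap ℂ A z - x) = 0 := by
    rw [mul_sub, h, Algebra.algebraMap_eq_smul_one, mul_smul_comm, mul_one, sub_self]
  exact hu.mul_left_eq_zero.1 this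

/-- `KerProjLT T q p` says that `q` is a projection strictly below the projection `p ∈ ker T`.
Membership `T q = 0` is not recorded, as it follows from `p * q = q`. -/
def KerProjLT (T : A →ₐ[ℂ] B) (q p : A) : Prop :=
  IsStarProjection p ∧ IsStarProjection q ∧ T p = 0 ∧ p * q = q ∧ q ≠ p

theorem star_mul_eq {p q : A} (hp : IsStarProjection p) (hq : IsStarProjection q)
    {r : A} (hr : IsStarProjection r) (h : p * q = r) : q * p = r := by
  have := congrArg star h
  rwa [star_mul, hp.isSelfAdjoint.star_eq, hq.isSelfAdjoint.star_eq,
    hr.isSelfAdjoint.star_eq] at this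

/-- Descending chain condition for projections in `ker T`. For a strictly decreasing chain `pₙ`
with differences `qₙ`, the element `p₀ + ∑ 2⁻ⁿ qₙ` of the kernel would have the eigenvalues
`1 + 2⁻ⁿ`, which accumulate at `1`. -/
theorem wellFounded_kerProjLT {T : A →ₐ[ℂ] B} (hT : Continuous T) (hR : RieszProperty T) :
    WellFounded (KerProjLT T) := by
  refine wellFounded_iff_isEmpty_descending_chain.2 ⟨fun ⟨p, hp⟩ => ?_⟩
  have hP : ∀ n, IsStarProjection (p n) := fun n => (hp n).1
  have hTp : ∀ n, T (p n) = 0 := fun n => (hp n).2.2.1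
  have hle : ∀ n m, n ≤ m → p n * p m = p m := by
    intro n m hnm
    induction m, hnm using Nat.le_induction with
    | base => exact (hP n).isIdempotentElem
    | succ m _ ih => rw [← (hp m).2.2.2.1, ← mul_assoc, ih]
  have hle' : ∀ n m, n ≤ m → p m * p n = p m := fun n m h =>
    star_mul_eq (hP n) (hP m) (hP m) (hle n m h)
  set q : ℕ → A := fun n => p n - p (n + 1) with hq
  have hq0 : ∀ n, q n ≠ 0 := fun n h => (hp n).2.2.2.2 (sub_eq_zero.1 h).symm
  have hqid : ∀ n, q n * q n = q n := fun n => by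
    simp only [hq, sub_mul, mul_sub, hle n (n+1) (by omega), hle' n (n+1) (by omega),
      (hP _).isIdempotentElem.eq]
    abel
  have hqq : ∀ n m, n ≠ m → q n * q m = 0 := by
    intro n m hnm
    rcases lt_or_gt_of_ne hnm with h | h
    · simp only [hq, sub_mul, mul_sub, hle n m (by omega), hle n (m+1) (by omega),
        hle (n+1) m (by omega), hle (n+1) (m+1) (by omega)]
      abel
    · simp only [hq, sub_mul, mul_sub, hle' m n (by omega), hle' m (n+1) (by omega),
        hle' (m+1) n (by omega), hle' (m+1) (n+1) (by omega)]
      abel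
  have hsum : Summable fun n => ((1/2 : ℂ) ^ n) • q n := by
    refine Summable.of_norm_bounded (g := fun n => (1/2 : ℝ) ^ n * 2)
      ((summable_geometric_of_lt_one (by norm_num) (by norm_num)).mul_right _) fun n => ?_
    rw [norm_smul, norm_pow]
    have : ‖q n‖ ≤ 2 := (norm_sub_le _ _).trans (by
      linarith [IsStarProjection.norm_le _ (hP n), IsStarProjection.norm_le _ (hP (n+1))])
    have h2 : ‖(1/2 : ℂ)‖ = 1/2 := by simp
    rw [h2]
    gcongr
  set y := ∑' n, ((1/2 : ℂ) ^ n) • q n with hy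
  have hTy : T y = 0 := by
    have h1 := hsum.hasSum.map T hT
    have h2 : (T ∘ fun n => ((1/2 : ℂ) ^ n) • q n) = fun _ => 0 := by
      funext n; simp [hq, hTp]
    rw [h2] at h1
    exact h1.unique hasSum_zero
  have hyq : ∀ k, y * q k = ((1/2 : ℂ) ^ k) • q k := by
    intro k
    have h1 := hsum.hasSum.mul_right (q k)
    have h2 := hasSum_single (f := fun n => ((1/2 : ℂ) ^ n) • q n * q k) k (fun n hn => by
      simp only [smul_mul_assoc, hqq n k hn, smul_zero])
    rw [smul_mul_assoc, hqid] at h2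
    exact h1.unique h2
  have hspec : ∀ k, (1 + (1/2 : ℂ) ^ k) ∈ spectrum ℂ (p 0 + y) := fun k => by
    refine mem_spectrum_of_mul_eq (hq0 k) ?_
    rw [add_mul, hyq, add_smul, one_smul]
    congr 1
    simp only [hq, mul_sub, hle 0 k (by omega), hle 0 (k+1) (by omega)]
  have hacc : (1 : ℂ) ∈ ({0} : Set ℂ) := by
    refine hR (p 0 + y) (by rw [map_add, hTp, hTy, add_zero]) ?_
    refine mem_closure_of_tendsto (f := fun k : ℕ => 1 + (1/2 : ℂ) ^ k) (b := atTop) ?_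
      (Eventually.of_forall fun k => ⟨hspec k, by simp⟩)
    have : Tendsto (fun k : ℕ => (1/2 : ℂ) ^ k) atTop (𝓝 0) :=
      tendsto_pow_atTop_nhds_zero_of_norm_lt_one (by norm_num)
    simpa using this.const_add 1
  simp at hacc

/-- If `p` is a minimal projection of `ker T`, self-adjoint elements of `p A p` are multiples
of `p`: the spectral projection at a nonzero spectral value lies below `p`. -/
theorem minimal_scalar {T : A →ₐ[ℂ] B} (hR : RieszProperty T) {p : A} (hp : IsStarProjection p)
    (hTp : T p = 0) (hmin : ∀ q, KerProjLT T q p → q = 0) {x : A} (hx : IsSelfAdjoint x)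
    (hpx : p * x = x) : ∃ t : ℝ, x = (t : ℂ) • p ∧ (x ≠ 0 → t ∈ spectrum ℝ x) := by
  by_cases hx0 : x = 0
  · exact ⟨0, by simp [hx0], fun h => absurd hx0 h⟩
  have hTx : T x = 0 := by rw [← hpx, map_mul, hTp, zero_mul]
  obtain ⟨t, ht, ht0⟩ : ∃ t ∈ spectrum ℝ x, t ≠ 0 := by
    by_contra! h
    apply hx0
    rw [← cfc_id' ℝ x, cfc_congr (g := fun _ => (0 : ℝ)) (fun r hr => h r hr)]
    simp
  set f : ℝ → ℝ := fun r => if r = t then 1 else 0 with hf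
  have hf0 : ∀ᶠ r in 𝓝 (0 : ℝ), f r = 0 := by
    filter_upwards [isOpen_ne.mem_nhds (Ne.symm ht0)] with r hr
    simp only [hf, if_neg hr]
  have hfc := hR.continuousOn hTx hf0
  have hq : IsStarProjection (cfc f x) := isStarProjection_cfc hfc fun r => by
    simp only [hf]; split_ifs <;> simp
  have hpq : p * cfc f x = cfc f x := by
    rw [hR.cfc_eq_mul hTx hx hf0, ← mul_assoc, hpx]
  have hxq : x * cfc f x = (t : ℂ) • cfc f x := by
    conv_lhs => enter [1]; rw [← cfc_id' ℝ x]
    rw [← cfc_mul _ _ x (by fun_prop) hfc, Complex.coe_smul, ← cfc_smul t f x hfc]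
    refine cfc_congr fun r _ => ?_
    simp only [hf, smul_eq_mul]
    split_ifs with h <;> simp [h]
  have hq0 : cfc f x ≠ 0 := by
    intro h0
    have h1 : (1 : ℝ) ∈ spectrum ℝ (cfc f x) := by
      rw [cfc_map_spectrum f x hx hfc]
      exact ⟨t, ht, by simp [hf]⟩
    have : Nontrivial A := ⟨x, 0, hx0⟩
    rw [h0, spectrum.zero_eq] at h1
    simp at h1
  have hqp : cfc f x = p := by
    by_contra hne
    exact hq0 (hmin _ ⟨hp, hq, hTp, hpq, hne⟩)
  refine ⟨t, ?_, fun _ => ht⟩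
  rw [hqp] at hxq
  rw [← hxq]
  have := congrArg star hpx
  rw [star_mul, hx.star_eq, hp.isSelfAdjoint.star_eq] at this
  exact this.symm

theorem isStarProjection_sum {e : ℕ → A} (he : ∀ n, IsStarProjection (e n))
    (horth : ∀ m n, m ≠ n → e m * e n = 0) (N : Finset ℕ) :
    IsStarProjection (∑ n ∈ N, e n) := by
  refine ⟨?_, ?_⟩
  · rw [IsIdempotentElem, Finset.sum_mul]
    refine Finset.sum_congr rfl fun n hn => ?_
    rw [Finset.mul_sum, Finset.sum_eq_single_of_mem n hn fun m _ hm => horth n m hm.symm]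
    exact (he n).isIdempotentElem
  · rw [isSelfAdjoint_iff, star_sum]
    exact Finset.sum_congr rfl fun n _ => (he n).isSelfAdjoint.star_eq

theorem norm_mul_proj_comm {p e : A} (hp : IsStarProjection p) (he : IsStarProjection e) :
    ‖p * e‖ = ‖e * p‖ := by
  rw [← norm_star, star_mul, hp.isSelfAdjoint.star_eq, he.isSelfAdjoint.star_eq]

/-! ### Orthogonal projections tend to zero against the kernel -/

theorem tendsto_proj_mul {T : A →ₐ[ℂ] B} (hT : Continuous T) (hR : RieszProperty T) {e : ℕ → A}
    (he : ∀ n, IsStarProjection (e n)) (horth : ∀ m n, m ≠ n → e m * e n = 0) (p : A)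
    (hp : IsStarProjection p) (hTp : T p = 0) :
    Tendsto (fun n => p * e n) atTop (𝓝 0) := by
  induction p using (wellFounded_kerProjLT hT hR).induction with
  | _ p ih =>
  by_cases hmin : ∀ q, KerProjLT T q p → q = 0
  · -- `p` minimal: `p * e n * p = t n • p`, and the `t n` are summable by orthogonality
    have hsq : ∀ n, star (e n * p) * (e n * p) = p * e n * p := fun n => by
      rw [star_mul, hp.isSelfAdjoint.star_eq, (he n).isSelfAdjoint.star_eq, ← mul_assoc,
        mul_assoc p, (he n).isIdempotentElem.eq]
    have hpp : ∀ n, p * (p * e n * p) = p * e n * p := fun n => by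
      rw [← mul_assoc, ← mul_assoc, hp.isIdempotentElem.eq]
    have h1 : ∀ n, ∃ t : ℝ, 0 ≤ t ∧ p * e n * p = (t : ℂ) • p := fun n => by
      obtain ⟨t, ht, ht'⟩ := minimal_scalar hR hp hTp hmin
        (by rw [← hsq]; exact IsSelfAdjoint.star_mul_self _) (hpp n)
      by_cases h0 : p * e n * p = 0
      · exact ⟨0, le_rfl, by simp [h0]⟩
      · have := ht' h0
        rw [← hsq] at this
        exact ⟨t, spectrum_star_mul_self_nonneg t this, ht⟩
    choose t ht0 ht using h1
    by_cases hp0 : p = 0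
    · simp [hp0]
    have hsum : Summable t := by
      refine summable_of_sum_range_le ht0 (c := 1 / ‖p‖) fun N => ?_
      have h2 : p * (∑ n ∈ Finset.range N, e n) * p = ((∑ n ∈ Finset.range N, t n : ℝ) : ℂ) • p := by
        rw [Finset.mul_sum, Finset.sum_mul, Complex.ofReal_sum, Finset.sum_smul]
        exact Finset.sum_congr rfl fun n _ => ht n
      have h3 := congrArg norm h2
      rw [norm_smul, Complex.norm_real, Real.norm_eq_abs,
        abs_of_nonneg (Finset.sum_nonneg fun n _ => ht0 n)] at h3
      rw [le_div_iff₀ (norm_pos_iff.2 hp0), ← h3]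
      have hp1 := IsStarProjection.norm_le _ hp
      have hE1 := IsStarProjection.norm_le _ (isStarProjection_sum he horth (Finset.range N))
      calc _ ≤ ‖p‖ * ‖∑ n ∈ Finset.range N, e n‖ * ‖p‖ :=
            (norm_mul_le _ _).trans (by gcongr; exact norm_mul_le _ _)
        _ ≤ 1 * 1 * 1 := by gcongr
        _ = 1 := by norm_num
    have h4 : ∀ n, ‖p * e n‖ ^ 2 = t n * ‖p‖ := fun n => by
      rw [norm_mul_proj_comm hp (he n), sq, ← CStarRing.norm_star_mul_self, hsq, ht, norm_smul,
        Complex.norm_real, Real.norm_eq_abs, abs_of_nonneg (ht0 n)]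
    have h5 : Tendsto (fun n => ‖p * e n‖ ^ 2) atTop (𝓝 0) := by
      simp only [h4]
      simpa using hsum.tendsto_atTop_zero.mul_const ‖p‖
    rw [tendsto_zero_iff_norm_tendsto_zero]
    have h6 := h5.sqrt
    simpa [Real.sqrt_sq] using h6
  · -- otherwise `p` splits into two strictly smaller projections
    push Not at hmin
    obtain ⟨q, hq, hq0⟩ := hmin
    obtain ⟨-, hqP, -, hpq, hne⟩ := hq
    have hqp := star_mul_eq hp hqP hqP hpq
    have hTq : T q = 0 := by rw [← hpq, map_mul, hTp, zero_mul]
    have hr : IsStarProjection (p - q) := by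
      refine ⟨?_, hp.isSelfAdjoint.sub hqP.isSelfAdjoint⟩
      simp only [IsIdempotentElem, sub_mul, mul_sub, hpq, hqp, hp.isIdempotentElem.eq,
        hqP.isIdempotentElem.eq]
      abel
    have h1 := ih q ⟨hp, hqP, hTp, hpq, hne⟩ hqP hTq
    have h2 := ih (p - q) ⟨hp, hr, hTp, by rw [mul_sub, hpq, hp.isIdempotentElem.eq],
      fun h => hq0 (by simpa using h)⟩ hr (by rw [map_sub, hTp, hTq, sub_zero])
    have h3 := h1.add h2
    rw [add_zero] at h3
    refine h3.congr fun n => ?_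
    rw [← add_mul, add_sub_cancel]

theorem tendsto_ker_mul_sa {T : A →ₐ[ℂ] B} (hT : Continuous T) (hR : RieszProperty T) {e : ℕ → A}
    (he : ∀ n, IsStarProjection (e n)) (horth : ∀ m n, m ≠ n → e m * e n = 0) {x : A}
    (hx : IsSelfAdjoint x) (hTx : T x = 0) :
    Tendsto (fun n => x * e n) atTop (𝓝 0) := by
  rw [Metric.tendsto_atTop]
  intro ε hε
  -- `cfc f x` is the spectral projection of `x` for `|r| ≥ ε / 2`, so `x - x * cfc f x` is small
  set f : ℝ → ℝ := fun r => if |r| < ε / 2 then 0 else 1 with hf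
  have hf0 : ∀ᶠ r in 𝓝 (0 : ℝ), f r = 0 := by
    filter_upwards [Metric.ball_mem_nhds (0 : ℝ) (half_pos hε)] with r hr
    rw [Metric.mem_ball, Real.dist_eq, sub_zero] at hr
    simp only [hf, if_pos hr]
  have hfc := hR.continuousOn hTx hf0
  have hp : IsStarProjection (cfc f x) := isStarProjection_cfc hfc fun r => by
    simp only [hf]; split_ifs <;> simp
  have h1 := (tendsto_proj_mul hT hR he horth _ hp (hR.map_cfc hTx hx hf0)).const_mul x
  rw [mul_zero, Metric.tendsto_atTop] at h1
  obtain ⟨N, hN⟩ := h1 (ε / 2) (half_pos hε)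
  refine ⟨N, fun n hn => ?_⟩
  have h2 := hN n hn
  rw [dist_zero_right] at h2 ⊢
  have h3 : ‖x - x * cfc f x‖ ≤ ε / 2 := by
    have : x - x * cfc f x = cfc (fun r => r - r * f r) x := by
      rw [cfc_sub (fun r => r) (fun r => r * f r) x (by fun_prop) (by exact continuousOn_id.mul hfc),
        cfc_mul _ _ x (by fun_prop) hfc, cfc_id' ℝ x]
    rw [this]
    refine norm_cfc_le (half_pos hε).le fun r _ => ?_
    simp only [hf]
    split_ifs with h
    · simpa using h.le
    · simpa using (half_pos hε).le
  have h4 := IsStarProjection.norm_le _ (he n)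
  calc ‖x * e n‖ = ‖(x - x * cfc f x) * e n + x * (cfc f x * e n)‖ := by
        rw [sub_mul, mul_assoc x]; abel_nf
    _ ≤ ‖x - x * cfc f x‖ * ‖e n‖ + ‖x * (cfc f x * e n)‖ :=
        (norm_add_le _ _).trans (by gcongr; exact norm_mul_le _ _)
    _ < ε / 2 * 1 + ε / 2 := by
        refine add_lt_add_of_le_of_lt ?_ h2
        gcongr
    _ = ε := by ring

theorem tendsto_ker_mul {T : A →ₐ[ℂ] B} (hT : Continuous T) (hR : RieszProperty T) {e : ℕ → A}
    (he : ∀ n, IsStarProjection (e n)) (horth : ∀ m n, m ≠ n → e m * e n = 0) {x : A}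
    (hTx : T x = 0) : Tendsto (fun n => x * e n) atTop (𝓝 0) := by
  have h1 := tendsto_ker_mul_sa hT hR he horth (IsSelfAdjoint.star_mul_self x)
    (by rw [map_mul, hTx, mul_zero])
  rw [tendsto_zero_iff_norm_tendsto_zero] at h1 ⊢
  have h2 : Tendsto (fun n => ‖x * e n‖ ^ 2) atTop (𝓝 0) := by
    refine squeeze_zero (fun n => by positivity) (fun n => ?_) h1
    rw [sq, ← CStarRing.norm_star_mul_self, star_mul, (he n).isSelfAdjoint.star_eq, mul_assoc,
      ← mul_assoc (star x)]
    refine (norm_mul_le _ _).trans ?_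
    have := IsStarProjection.norm_le _ (he n)
    nlinarith [norm_nonneg (star x * x * e n)]
  simpa [Real.sqrt_sq] using h2.sqrt

/-! ### Eigenprojections -/

/-- A left invertible limit of invertible elements is invertible. -/
theorem isUnit_of_left_inv_of_approx {u v : A} (hv : v * u = 1) {w : ℕ → A}
    (hw : Tendsto w atTop (𝓝 u)) (hwu : ∀ n, IsUnit (w n)) : IsUnit u := by
  have h1 : Tendsto (fun n => v * w n) atTop (𝓝 1) := hv ▸ hw.const_mul v
  obtain ⟨n, hn⟩ := (h1.eventually (Units.isOpen.mem_nhds isUnit_one)).exists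
  have hvu : IsUnit v := by
    obtain ⟨W, hW⟩ := hwu n
    have h2 : IsUnit (v * w n) := hn
    rw [← hW] at h2
    exact (Units.isUnit_mul_units v W).1 h2
  obtain ⟨V, rfl⟩ := hvu
  have : u = ↑V⁻¹ := by
    rw [← one_mul u, ← V.inv_mul, mul_assoc, hv, mul_one]
  rw [this]
  exact Units.isUnit _

/-- When `T a` is quasinilpotent, a spectral value of `a` of maximal modulus is an eigenvalue
with an eigenprojection in `ker T`; for quasinilpotent `a` the zero projection is used. -/
theorem exists_eigenproj [Nontrivial A] {T : A →ₐ[ℂ] B} (hT : Continuous T) (hR : RieszProperty T)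
    {a : A} (ha : spectrum ℂ (T a) ⊆ {0}) :
    ∃ (e : A) (l : ℂ), IsStarProjection e ∧ T e = 0 ∧ a * e = l • e ∧ (l = 0 ↔ e = 0) ∧
      (∀ z ∈ spectrum ℂ a, ‖z‖ ≤ ‖l‖) := by
  obtain ⟨l, hl, hmax⟩ := (spectrum.isCompact (𝕜 := ℂ) a).exists_isMaxOn (spectrum.nonempty a)
    continuous_norm.continuousOn
  by_cases hl0 : l = 0
  · exact ⟨0, 0, IsStarProjection.zero _, map_zero T, by simp, by simp, fun z hz => hl0 ▸ hmax hz⟩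
  set u := a - algebraMap ℂ A l with hu
  have huni : ¬ IsUnit u := fun h => hl (by
    rw [spectrum.mem_resolventSet_iff, ← neg_sub]; exact h.neg)
  have hTu : IsUnit (T u) := by
    have : l ∉ spectrum ℂ (T a) := fun h => hl0 (ha h)
    rw [spectrum.notMem_iff] at this
    rw [hu, map_sub, AlgHom.commutes, ← neg_sub]
    exact this.neg
  set c := star u * u with hc
  have hcsa : IsSelfAdjoint c := IsSelfAdjoint.star_mul_self u
  have hcuni : ¬ IsUnit c := by
    rintro ⟨V, hV⟩
    apply huni
    -- `l` is the limit of `(1 + 1 / (n + 1)) * l`, which lie outside the spectral radius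
    refine isUnit_of_left_inv_of_approx (v := ↑V⁻¹ * star u)
      (w := fun n : ℕ => a - algebraMap ℂ A ((1 + 1 / ((n : ℂ) + 1)) * l)) ?_ ?_ ?_
    · rw [mul_assoc, ← hc, ← hV, V.inv_mul]
    · refine tendsto_const_nhds.sub ?_
      have h1 : Tendsto (fun n : ℕ => (1 + 1 / ((n : ℂ) + 1)) * l) atTop (𝓝 l) := by
        simpa using ((tendsto_one_div_add_atTop_nhds_zero_nat (𝕜 := ℂ)).const_add 1).mul_const l
      exact ((continuous_algebraMap ℂ A).tendsto l).comp h1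
    · intro n
      rw [← neg_sub]
      refine IsUnit.neg ?_
      rw [← spectrum.notMem_iff]
      intro hmem
      have h1 := hmax hmem
      have h2 : ‖(1 + 1 / ((n : ℂ) + 1))‖ = 1 + 1 / ((n : ℝ) + 1) := by
        rw [show (1 + 1 / ((n : ℂ) + 1)) = ((1 + 1 / ((n : ℝ) + 1) : ℝ) : ℂ) by push_cast; rfl,
          Complex.norm_real, Real.norm_eq_abs, abs_of_nonneg (by positivity)]
      simp only [Set.mem_ofPred_eq, norm_mul, h2] at h1
      have h3 : 0 < ‖l‖ := norm_pos_iff.2 hl0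
      have h4 : 0 < 1 / ((n : ℝ) + 1) := by positivity
      nlinarith
  have h0c : (0 : ℝ) ∈ spectrum ℝ c := by
    rw [spectrum.zero_mem_iff]; exact hcuni
  obtain ⟨C, hC1, hC⟩ := exists_bound T hT
  obtain ⟨U, hU⟩ := hTu
  set K := ‖(↑U⁻¹ : B)‖ * C with hK
  have hK0 : 0 ≤ K := by positivity
  -- `ε` is so small that `K * √(2ε) < 1`
  set ε : ℝ := 1 / (4 * (K + 1) ^ 2) with hε
  have hε0 : 0 < ε := by positivity
  set f : ℝ → ℝ := fun t => max 0 (1 - |t| / ε) with hf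
  set g : ℝ → ℝ := fun t => min 1 (max 0 (2 - |t| / ε)) with hg
  have hfc : Continuous f := by fun_prop
  have hgc : Continuous g := by fun_prop
  have hgf : ∀ t, g t * f t = f t := by
    intro t
    simp only [hf, hg]
    rcases le_total 1 (|t| / ε) with h | h
    · rw [max_eq_left (by linarith : 1 - |t| / ε ≤ 0), mul_zero]
    · rw [max_eq_right (by linarith : 0 ≤ 2 - |t| / ε), min_eq_left (by linarith), one_mul]
  -- `g f = f` and `u * g(c)` is small, so `T (f(c)) = (T u)⁻¹ * T (u * g(c)) * T (f(c))`
  -- forces `T (f(c)) = 0`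
  have hTf : T (cfc f c) = 0 := by
    have h1 : cfc g c * cfc f c = cfc f c := by
      rw [← cfc_mul g f c hgc.continuousOn hfc.continuousOn]
      exact cfc_congr fun t _ => hgf t
    have hgs : star (cfc g c) = cfc g c := (cfc_predicate g c : IsSelfAdjoint _)
    have h2 : ‖u * cfc g c‖ ^ 2 ≤ 2 * ε := by
      rw [sq, ← CStarRing.norm_star_mul_self, star_mul, hgs]
      have e : cfc g c * star u * (u * cfc g c) = cfc (fun t => g t * (t * g t)) c := by
        rw [cfc_mul g _ c hgc.continuousOn (by exact (continuous_id.mul hgc).continuousOn),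
          cfc_mul _ g c (by fun_prop) hgc.continuousOn, cfc_id' ℝ c, hc]
        simp only [mul_assoc]
      rw [e]
      refine norm_cfc_le (by positivity) fun t ht => ?_
      have ht0 : 0 ≤ t := spectrum_star_mul_self_nonneg t ht
      have hg0 : 0 ≤ g t := le_min zero_le_one (le_max_left _ _)
      have hg1 : g t ≤ 1 := min_le_left _ _
      rw [Real.norm_eq_abs, abs_of_nonneg (by positivity)]
      rcases le_total (2 * ε) t with h | h
      · have : g t = 0 := by
          have h3 : 2 ≤ |t| / ε := by rw [abs_of_nonneg ht0, le_div_iff₀ hε0]; exact h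
          simp only [hg]
          rw [max_eq_left (by linarith : 2 - |t| / ε ≤ 0), min_eq_right zero_le_one]
        rw [this]; simp [hε0.le]
      · have : t * g t ≤ t := mul_le_of_le_one_right ht0 hg1
        have h5 : 0 ≤ t * g t := by positivity
        nlinarith
    have h3 : T (cfc f c) = ↑U⁻¹ * T (u * cfc g c) * T (cfc f c) := by
      rw [map_mul, ← hU, mul_assoc, mul_assoc, ← map_mul, h1, ← mul_assoc, U.inv_mul, one_mul]
    have h4 : ‖T (cfc f c)‖ ≤ (K * ‖u * cfc g c‖) * ‖T (cfc f c)‖ := by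
      conv_lhs => rw [h3]
      refine (norm_mul_le _ _).trans ?_
      gcongr
      refine (norm_mul_le _ _).trans ?_
      rw [hK, mul_assoc]
      gcongr
      exact hC _
    have h5 : K * ‖u * cfc g c‖ < 1 := by
      have h6 : (K * ‖u * cfc g c‖) ^ 2 < 1 ^ 2 := by
        rw [mul_pow]
        calc K ^ 2 * ‖u * cfc g c‖ ^ 2 ≤ K ^ 2 * (2 * ε) := by gcongr
          _ < 1 ^ 2 := by
            rw [hε, mul_one_div, mul_div_assoc', div_lt_iff₀ (by positivity)]
            nlinarith
      exact (abs_lt_of_sq_lt_sq' h6 zero_le_one).2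
    by_contra hne
    have h7 : 0 < ‖T (cfc f c)‖ := norm_pos_iff.2 hne
    nlinarith
  -- `1` is isolated in `σ(f(c)) = f(σ(c))`, and `f r = 1` only at `r = 0`
  obtain ⟨δ, hδ, hiso⟩ := hR.isolated hTf one_ne_zero
  have hiso' : ∀ r ∈ spectrum ℝ c, |r| < min ε (ε * δ) → r = 0 := by
    intro r hr hrδ
    have h1 : |r| / ε < 1 := (div_lt_one hε0).2 (hrδ.trans_le (min_le_left _ _))
    have h2 : |r| / ε < δ := (div_lt_iff₀' hε0).2 (hrδ.trans_le (min_le_right _ _))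
    have h3 : f r = 1 - |r| / ε := max_eq_right (by linarith)
    have h4 : 0 ≤ |r| / ε := by positivity
    have h5 := hiso (f r) (by
      rw [cfc_map_spectrum f c hcsa hfc.continuousOn]; exact ⟨r, hr, rfl⟩) (by
      rw [h3, abs_lt]; constructor <;> linarith)
    rw [h3] at h5
    have h6 : |r| / ε = 0 := by linarith
    rcases div_eq_zero_iff.1 h6 with h | h
    · exact abs_eq_zero.1 h
    · exact absurd h hε0.ne'
  set χ : ℝ → ℝ := fun r => if r = 0 then 1 else 0 with hχ
  have hχc : ContinuousOn χ (spectrum ℝ c) := by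
    intro s hs
    refine (continuousWithinAt_const (b := χ s)).congr_of_eventuallyEq ?_ rfl
    by_cases h0 : s = 0
    · subst h0
      have h1 : ∀ᶠ r in 𝓝[spectrum ℝ c] (0 : ℝ), r ∈ Metric.ball 0 (min ε (ε * δ)) :=
        mem_nhdsWithin_of_mem_nhds (Metric.ball_mem_nhds _ (by positivity))
      filter_upwards [h1, self_mem_nhdsWithin] with r hr hr'
      rw [hiso' r hr' (by simpa [Real.dist_eq] using hr)]
    · filter_upwards [mem_nhdsWithin_of_mem_nhds (isOpen_ne.mem_nhds h0)] with r hr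
      simp only [hχ, if_neg h0]
      exact if_neg hr
  have he : IsStarProjection (cfc χ c) := isStarProjection_cfc hχc fun r => by
    simp only [hχ]; split_ifs <;> simp
  have hne : cfc χ c ≠ 0 := by
    intro h0
    have h1 : (1 : ℝ) ∈ spectrum ℝ (cfc χ c) := by
      rw [cfc_map_spectrum χ c hcsa hχc]
      exact ⟨0, h0c, by simp [hχ]⟩
    rw [h0, spectrum.zero_eq] at h1
    simp at h1
  refine ⟨cfc χ c, l, he, ?_, ?_, by simp [hl0, hne], fun z hz => hmax hz⟩
  · have : cfc χ c = cfc χ c * cfc f c := by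
      rw [← cfc_mul χ f c hχc hfc.continuousOn]
      refine cfc_congr fun r _ => ?_
      by_cases h : r = 0
      · simp [hχ, hf, h]
      · simp [hχ, h]
    rw [this, map_mul, hTf, mul_zero]
  · have h1 : c * cfc χ c = 0 := by
      conv_lhs => enter [1]; rw [← cfc_id' ℝ c]
      rw [← cfc_mul _ χ c (by fun_prop) hχc, cfc_congr (g := fun _ => (0 : ℝ)), cfc_const_zero]
      intro r _
      by_cases h : r = 0 <;> simp [hχ, h]
    have h2 : u * cfc χ c = 0 := by
      rw [← CStarRing.star_mul_self_eq_zero_iff, star_mul, mul_assoc, ← mul_assoc (star u), ← hc,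
        h1, mul_zero]
    rw [hu, sub_mul, sub_eq_zero, Algebra.algebraMap_eq_smul_one, smul_mul_assoc, one_mul] at h2
    exact h2

/-! ### Triangularisation -/

theorem norm_sum_smul_proj_le {e : ℕ → A} (he : ∀ n, IsStarProjection (e n))
    (horth : ∀ m n, m ≠ n → e m * e n = 0) (l : ℕ → ℂ) (F : Finset ℕ) {M : ℝ} (hM : 0 ≤ M)
    (hl : ∀ n ∈ F, ‖l n‖ ≤ M) : ‖∑ n ∈ F, l n • e n‖ ≤ M := by
  have hE := isStarProjection_sum he horth F
  set x := ∑ n ∈ F, l n • e n with hx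
  have h1 : star x * x = ∑ n ∈ F, star (l n • e n) * (l n • e n) := by
    rw [hx, star_sum, Finset.sum_mul]
    refine Finset.sum_congr rfl fun n hn => ?_
    rw [Finset.mul_sum, Finset.sum_eq_single_of_mem n hn fun m _ hm => by
      rw [star_smul, (he n).isSelfAdjoint.star_eq, smul_mul_smul_comm, horth n m hm.symm, smul_zero]]
  let _ : PartialOrder A := CStarAlgebra.spectralOrder A
  have _ : StarOrderedRing A := CStarAlgebra.spectralOrderedRing A
  have h2 : star x * x ≤ ((M ^ 2 : ℝ) : ℂ) • ∑ n ∈ F, e n := by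
    rw [h1, Finset.smul_sum]
    refine Finset.sum_le_sum fun n hn => ?_
    have h3 : ‖l n‖ ^ 2 ≤ M ^ 2 := by gcongr; exact hl n hn
    rw [← sub_nonneg]
    have h4 : ((M ^ 2 : ℝ) : ℂ) • e n - star (l n • e n) * (l n • e n)
        = star (((√(M ^ 2 - ‖l n‖ ^ 2) : ℝ) : ℂ) • e n) *
          (((√(M ^ 2 - ‖l n‖ ^ 2) : ℝ) : ℂ) • e n) := by
      rw [star_smul, star_smul, (he n).isSelfAdjoint.star_eq, smul_mul_smul_comm,
        smul_mul_smul_comm, (he n).isIdempotentElem.eq, ← sub_smul]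
      congr 1
      have h5 : star (l n) * l n = ((‖l n‖ ^ 2 : ℝ) : ℂ) := by
        push_cast; exact Complex.conj_mul' _
      have h6 : star ((√(M ^ 2 - ‖l n‖ ^ 2) : ℝ) : ℂ) = ((√(M ^ 2 - ‖l n‖ ^ 2) : ℝ) : ℂ) :=
        Complex.conj_ofReal _
      rw [h5, h6, ← Complex.ofReal_mul, Real.mul_self_sqrt (by linarith), ← Complex.ofReal_sub]
    rw [h4]
    exact star_mul_self_nonneg _
  have h7 := CStarAlgebra.norm_le_norm_of_nonneg_of_le (star_mul_self_nonneg x) h2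
  rw [CStarRing.norm_star_mul_self, norm_smul, Complex.norm_real, Real.norm_eq_abs,
    abs_of_nonneg (by positivity)] at h7
  have h8 := IsStarProjection.norm_le _ hE
  refine (abs_le_of_sq_le_sq' (b := M) ?_ hM).2
  nlinarith [sq_nonneg M]

theorem exists_diag_sum {e : ℕ → A} (he : ∀ n, IsStarProjection (e n))
    (horth : ∀ m n, m ≠ n → e m * e n = 0) {l : ℕ → ℂ} (hl : Tendsto l atTop (𝓝 0)) :
    ∃ d, Tendsto (fun N => ∑ n ∈ Finset.range N, l n • e n) atTop (𝓝 d) := by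
  refine cauchySeq_tendsto_of_complete (Metric.cauchySeq_iff'.2 fun ε hε => ?_)
  obtain ⟨N, hN⟩ := Metric.tendsto_atTop.1 hl (ε / 2) (half_pos hε)
  refine ⟨N, fun n hn => ?_⟩
  rw [dist_eq_norm, ← Finset.sum_Ico_eq_sub _ hn]
  refine (norm_sum_smul_proj_le he horth l _ (half_pos hε).le fun m hm => ?_).trans_lt
    (half_lt_self hε)
  have := hN m (Finset.mem_Ico.1 hm).1
  rw [dist_zero_right] at this
  exact this.le

/-- Greedy Schur triangularisation: `x n` is the compression of `a` left after removing the
orthogonal eigenprojections `e 0, …, e (n - 1)`, and `l n` is its next eigenvalue, of modulus the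
spectral radius of `x n`. Once `x n` is quasinilpotent, `e n = 0` and `l n = 0`. -/
theorem exists_schur [Nontrivial A] {T : A →ₐ[ℂ] B} (hT : Continuous T) (hR : RieszProperty T)
    {a : A} (ha : spectrum ℂ (T a) ⊆ {0}) :
    ∃ (x e : ℕ → A) (l : ℕ → ℂ), (∀ n, IsStarProjection (e n)) ∧ (∀ n, T (e n) = 0) ∧
      (∀ m n, m ≠ n → e m * e n = 0) ∧
      (∀ n, x n = (1 - ∑ k ∈ Finset.range n, e k) * a) ∧
      (∀ n, x n * e n = l n • e n) ∧ (∀ m n, m < n → x n * e m = 0) ∧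
      (∀ n, l n = 0 ↔ e n = 0) ∧ (∀ n, ∀ z ∈ spectrum ℂ (x n), ‖z‖ ≤ ‖l n‖) := by
  have h0 : ∀ y : {y : A // spectrum ℂ (T y) ⊆ {0}}, ∃ (e : A) (l : ℂ), IsStarProjection e ∧
      T e = 0 ∧ y.1 * e = l • e ∧ (l = 0 ↔ e = 0) ∧ (∀ z ∈ spectrum ℂ y.1, ‖z‖ ≤ ‖l‖) :=
    fun y => exists_eigenproj hT hR y.2
  choose E L hE hTE hyE hLE hmax using h0
  let X : ℕ → {y : A // spectrum ℂ (T y) ⊆ {0}} := fun n => Nat.rec ⟨a, ha⟩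
    (fun _ y => ⟨(1 - E y) * y.1, by
      rw [map_mul, map_sub, hTE, sub_zero, map_one, one_mul]; exact y.2⟩) n
  have hX0 : (X 0).1 = a := rfl
  have hXs : ∀ n, (X (n + 1)).1 = (1 - E (X n)) * (X n).1 := fun n => rfl
  have hEE : ∀ n, E (X n) * E (X n) = E (X n) := fun n => (hE _).isIdempotentElem
  have horth_of : ∀ m n, E (X m) * (X n).1 = 0 → E (X m) * E (X n) = 0 := by
    intro m n h
    by_cases hl : L (X n) = 0
    · rw [(hLE _).1 hl, mul_zero]
    · have : L (X n) • (E (X m) * E (X n)) = 0 := by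
        rw [← mul_smul_comm, ← hyE, ← mul_assoc, h, zero_mul]
      exact (smul_eq_zero.1 this).resolve_left hl
  have hlt : ∀ m n, m < n → E (X m) * (X n).1 = 0 := by
    intro m n hmn
    induction n, hmn using Nat.le_induction with
    | base => rw [hXs, ← mul_assoc, mul_sub, mul_one, hEE, sub_self, zero_mul]
    | succ n _ ih => rw [hXs, ← mul_assoc, mul_sub, mul_one, horth_of m n ih, sub_zero, ih]
  have horth : ∀ m n, m ≠ n → E (X m) * E (X n) = 0 := by
    intro m n hmn
    rcases lt_or_gt_of_ne hmn with h | h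
    · exact horth_of m n (hlt m n h)
    · exact star_mul_eq (hE _) (hE _) (IsStarProjection.zero A) (horth_of n m (hlt n m h))
  refine ⟨fun n => (X n).1, fun n => E (X n), fun n => L (X n), fun n => hE _, fun n => hTE _,
    horth, ?_, fun n => hyE _, ?_, fun n => hLE _, fun n => hmax _⟩
  · intro n
    induction n with
    | zero => simp [hX0]
    | succ n ih =>
      simp only at ih ⊢
      rw [hXs, ih, ← mul_assoc, Finset.sum_range_succ]
      congr 1
      have : E (X n) * ∑ k ∈ Finset.range n, E (X k) = 0 := by
        rw [Finset.mul_sum]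
        exact Finset.sum_eq_zero fun k hk => horth n k (Finset.mem_range.1 hk).ne'
      rw [sub_mul, one_mul, mul_sub, this]
      abel_nf
      simp
  · intro m n hmn
    simp only
    induction n, hmn using Nat.le_induction with
    | base => rw [hXs, mul_assoc, hyE, mul_smul_comm, sub_mul, one_mul, hEE, sub_self, smul_zero]
    | succ n _ ih => rw [hXs, mul_assoc, ih, mul_zero]

theorem tendsto_eigenvalues [CompleteSpace B] {T : A →ₐ[ℂ] B} (hT : Continuous T)
    (hR : RieszProperty T) {a : A} (ha : spectrum ℂ (T a) ⊆ {0}) {x e : ℕ → A} {l : ℕ → ℂ}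
    (he : ∀ n, IsStarProjection (e n)) (horth : ∀ m n, m ≠ n → e m * e n = 0)
    (hx : ∀ n, x n = (1 - ∑ k ∈ Finset.range n, e k) * a)
    (hxe : ∀ n, x n * e n = l n • e n) (hxm : ∀ m n, m < n → x n * e m = 0)
    (hl : ∀ n, l n = 0 ↔ e n = 0) : Tendsto l atTop (𝓝 0) := by
  have heP : ∀ n, e n * ∑ k ∈ Finset.range n, e k = 0 := fun n => by
    rw [Finset.mul_sum]
    exact Finset.sum_eq_zero fun k hk => horth n k (Finset.mem_range.1 hk).ne'
  have hxP : ∀ n, x n * ∑ k ∈ Finset.range n, e k = 0 := fun n => by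
    rw [Finset.mul_sum]
    exact Finset.sum_eq_zero fun k hk => hxm k n (Finset.mem_range.1 hk)
  have hea : ∀ n, e n * a = e n * x n := fun n => by
    rw [hx, ← mul_assoc, mul_sub, heP, mul_one, sub_zero]
  have hxx : ∀ n, x n * a = x n * x n := fun n => by
    conv_rhs => rw [hx n]
    rw [← mul_assoc, ← hx n, mul_sub, hxP, mul_one, sub_zero]
  have hpow : ∀ n k, x n * a ^ k = x n ^ (k + 1) := fun n k => by
    induction k with
    | zero => simp
    | succ k ih => rw [pow_succ, ← mul_assoc, ih, pow_succ, mul_assoc, hxx, ← mul_assoc, ← pow_succ,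
        ← pow_succ]
  have hpe : ∀ n k, x n ^ k * e n = l n ^ k • e n := fun n k => by
    induction k with
    | zero => simp
    | succ k ih => rw [pow_succ, mul_assoc, hxe, mul_smul_comm, ih, smul_smul, pow_succ' (l n)]
  -- the diagonal entries of `a ^ (k + 1)` are the powers of those of `a`
  have hmain : ∀ n k, e n * a ^ (k + 1) * e n = l n ^ (k + 1) • e n := fun n k => by
    rw [pow_succ', ← mul_assoc (e n), hea, mul_assoc (e n), hpow, mul_assoc, hpe, mul_smul_comm,
      (he n).isIdempotentElem.eq]
  rw [Metric.tendsto_atTop]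
  intro δ hδ
  obtain ⟨k, j, hTj, hj⟩ := exists_pow_approx T hT ha hδ
  obtain ⟨N, hN⟩ := Metric.tendsto_atTop.1 (tendsto_ker_mul hT hR he horth hTj)
    (δ ^ (k + 1) - ‖a ^ (k + 1) - j‖) (by linarith)
  refine ⟨N, fun n hn => ?_⟩
  have h1 := hN n hn
  rw [dist_zero_right] at h1 ⊢
  by_cases h0 : e n = 0
  · rw [(hl n).2 h0, norm_zero]; exact hδ
  have hn1 : ‖e n‖ ≤ 1 := IsStarProjection.norm_le _ (he n)
  have hn2 : 1 ≤ ‖e n‖ := by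
    have h2 := norm_mul_le (e n) (e n)
    rw [(he n).isIdempotentElem.eq] at h2
    have h3 : 0 < ‖e n‖ := norm_pos_iff.2 h0
    nlinarith
  have h2 : ‖l n‖ ^ (k + 1) < δ ^ (k + 1) := by
    calc ‖l n‖ ^ (k + 1) ≤ ‖l n ^ (k + 1) • e n‖ := by
          rw [norm_smul, norm_pow]; exact le_mul_of_one_le_right (by positivity) hn2
      _ = ‖e n * (a ^ (k + 1) - j) * e n + e n * (j * e n)‖ := by
          rw [← hmain, ← mul_assoc (e n) j, ← add_mul, ← mul_add, sub_add_cancel]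
      _ ≤ ‖e n‖ * ‖a ^ (k + 1) - j‖ * ‖e n‖ + ‖e n‖ * ‖j * e n‖ :=
          (norm_add_le _ _).trans (add_le_add ((norm_mul_le _ _).trans
            (by gcongr; exact norm_mul_le _ _)) (norm_mul_le _ _))
      _ ≤ 1 * ‖a ^ (k + 1) - j‖ * 1 + 1 * ‖j * e n‖ := by gcongr
      _ < δ ^ (k + 1) := by linarith
  exact lt_of_pow_lt_pow_left₀ _ hδ.le h2

theorem exists_decomposition [Nontrivial A] [CompleteSpace B] {T : A →ₐ[ℂ] B} (hT : Continuous T)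
    (hR : RieszProperty T) {a : A} (ha : spectrum ℂ (T a) ⊆ {0}) :
    ∃ c d : A, a = c + d ∧ spectrum ℂ c = {0} ∧ T d = 0 ∧ star d * d = d * star d := by
  obtain ⟨x, e, l, he, hTe, horth, hx, hxe, hxm, hl, hmax⟩ := exists_schur hT hR ha
  have hl0 := tendsto_eigenvalues hT hR ha he horth hx hxe hxm hl
  obtain ⟨d, hd⟩ := exists_diag_sum he horth hl0
  have hTd : T d = 0 := by
    refine tendsto_nhds_unique ((hT.tendsto d).comp hd) (tendsto_const_nhds.congr fun N => ?_)
    simp [hTe]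
  have hde : ∀ n, d * e n = l n • e n := by
    intro n
    refine tendsto_nhds_unique (hd.mul_const (e n)) (tendsto_const_nhds.congr' ?_)
    filter_upwards [eventually_gt_atTop n] with N hN
    rw [Finset.sum_mul, Finset.sum_eq_single_of_mem n (Finset.mem_range.2 hN) fun m _ hm => by
      rw [smul_mul_assoc, horth m n hm, smul_zero], smul_mul_assoc, (he n).isIdempotentElem.eq]
  have hnorm : star d * d = d * star d := by
    refine tendsto_nhds_unique (hd.star.mul hd) ((hd.mul hd.star).congr fun N => ?_)
    rw [star_sum, Finset.sum_mul_sum, Finset.sum_mul_sum, Finset.sum_comm]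
    refine Finset.sum_congr rfl fun i _ => Finset.sum_congr rfl fun k _ => ?_
    rw [star_smul, (he i).isSelfAdjoint.star_eq, smul_mul_smul_comm, smul_mul_smul_comm]
    by_cases h : i = k
    · subst h; rw [mul_comm]
    · rw [horth i k h, horth k i (Ne.symm h), smul_zero, smul_zero]
  refine ⟨a - d, d, by abel, ?_, hTd, hnorm⟩
  have hc : spectrum ℂ (T (star (a - d))) ⊆ {0} :=
    star_riesz T hT (by rwa [map_sub, hTd, sub_zero])
  obtain ⟨f, m, hf, -, hcf, hmf, hcmax⟩ := exists_eigenproj hT hR hc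
  -- a left eigenprojection of `a - d`
  have hfc : f * (a - d) = star m • f := by
    have := congrArg star hcf
    rwa [star_mul, star_star, star_smul, hf.isSelfAdjoint.star_eq] at this
  have hm0 : m = 0 := by
    by_contra hm
    have hsm : star m ≠ 0 := star_ne_zero.2 hm
    -- `a - d` is strictly upper triangular along the `e n`, so `f` annihilates every `e n`
    have hfe : ∀ n, f * e n = 0 := by
      intro n
      induction n using Nat.strong_induction_on with
      | _ n ih =>
      have hfP : f * ∑ k ∈ Finset.range n, e k = 0 := by
        rw [Finset.mul_sum]
        exact Finset.sum_eq_zero fun k hk => ih k (Finset.mem_range.1 hk)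
      have h1 : f * a * e n = l n • (f * e n) := by
        have h2 : f * a = f * x n := by
          rw [hx, ← mul_assoc, mul_sub, hfP, mul_one, sub_zero]
        rw [h2, mul_assoc, hxe, mul_smul_comm]
      have h3 : star m • (f * e n) = 0 := by
        rw [← smul_mul_assoc, ← hfc, mul_sub, sub_mul, h1, mul_assoc, hde, mul_smul_comm, sub_self]
      exact (smul_eq_zero.1 h3).resolve_left hsm
    have hfd : f * d = 0 := by
      refine tendsto_nhds_unique (hd.const_mul f) (tendsto_const_nhds.congr fun N => ?_)
      rw [Finset.mul_sum]
      exact (Finset.sum_eq_zero fun k _ => by rw [mul_smul_comm, hfe, smul_zero]).symm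
    have hle : ∀ n, ‖star m‖ ≤ ‖l n‖ := fun n => by
      refine hmax n _ (mem_spectrum_of_mul_eq' (fun h => hm (hmf.2 h)) ?_)
      have hfP : f * ∑ k ∈ Finset.range n, e k = 0 := by
        rw [Finset.mul_sum]
        exact Finset.sum_eq_zero fun k _ => hfe k
      rw [hx, ← mul_assoc, mul_sub, hfP, mul_one, sub_zero, ← hfc, mul_sub, hfd, sub_zero]
    have h4 := ge_of_tendsto' hl0.norm hle
    rw [norm_zero] at h4
    exact hsm (norm_le_zero_iff.1 h4)
  have hsub : spectrum ℂ (a - d) ⊆ {0} := by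
    intro z hz
    have h5 : star z ∈ spectrum ℂ (star (a - d)) := by
      rw [spectrum.map_star]
      simpa using hz
    have h6 := hcmax _ h5
    rw [hm0, norm_zero, norm_le_zero_iff] at h6
    exact star_eq_zero.1 h6
  exact (Set.subset_singleton_iff_eq.1 hsub).resolve_left (spectrum.nonempty _).ne_empty

end helpers

/-- West-type decomposition of `T`-Riesz elements in a C*-algebra:
if `T : A → B` is a continuous unital algebra homomorphism with the Riesz property,
then the `T`-Riesz elements of `A` are exactly the sums of a quasinilpotent element
and a normal element of `ker T`. -/
theorem tRiesz_decomposition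
    {A B : Type*}
    [NormedRing A] [StarRing A] [CStarRing A] [NormedAlgebra ℂ A]
    [CompleteSpace A] [StarModule ℂ A] [Nontrivial A]
    [NormedRing B] [StarRing B] [CStarRing B] [NormedAlgebra ℂ B]
    [CompleteSpace B] [StarModule ℂ B] [Nontrivial B]
    (T : A →ₐ[ℂ] B) (hTcont : Continuous T)
    (hRiesz : ∀ x : A, T x = 0 →
      {z : ℂ | z ∈ closure (spectrum ℂ x \ {z})} ⊆ {0}) :
    (∀ a : A, spectrum ℂ (T a) ⊆ {0} →
      ∃ c d : A, a = c + d ∧ spectrum ℂ c = {0} ∧ T d = 0 ∧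
        star d * d = d * star d) ∧
    (∀ c d : A, spectrum ℂ c ⊆ {0} → T d = 0 →
      spectrum ℂ (T (c + d)) ⊆ {0}) := by
  let _ : CStarAlgebra A := {}
  refine ⟨fun a ha => exists_decomposition hTcont hRiesz ha, fun c d hc hd => ?_⟩
  rw [map_add, hd, add_zero]
  exact (AlgHom.spectrum_apply_subset T c).trans hc
end

section
/- Let A and B be unital complex Banach algebras and T : A → B a continuous unital algebra homomorphism. For every a ∈ A the following chain of inclusions holds: σ_T(a) ⊆ ω_T(a) ⊆ β_T(a) ⊆ σ_T(a) ∪ acc σ_A(a) ⊆ σ_A(a). In particular (the third inclusion), every almost invertible T-Fredholm element is T-Browder: if T a is invertible in B and 0 ∉ acc σ_A(a), then there exist c, d ∈ A with a = c + d, T c = 0, d invertible, and c·d = d·c. -/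
/-!
Everything but the third inclusion is formal: `T d` is invertible when `d` is, `T` shrinks spectra,
and the spectrum is closed.

For the third inclusion, and its reformulation for almost invertible elements, let `b : A` be such
that `T b` is invertible and a closed disc of radius `r` around `0` meets the spectrum of `b` at most
in `0`. The element `p = (2πi)⁻¹ ∮_{|z| = r} (z - b)⁻¹ dz` commutes with `b`, and
`T p = (2πi)⁻¹ ∮_{|z| = r} (z - T b)⁻¹ dz = 0` by Cauchy's theorem, the resolvent of `T b` being
holomorphic on the whole disc. So `b = -p + (b + p)` is the required decomposition as soon as `b + p`
is invertible.

Invertibility of `b + p` is read off from Gelfand theory in the bicommutant of `b`, a closed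
commutative subalgebra in which the spectrum of `b` is unchanged. A character `φ` sends
`p` to `(2πi)⁻¹ ∮_{|z| = r} (z - φ b)⁻¹ dz`, which is `1` if `φ b = 0` and `0` if `r < |φ b|`; since
`φ b` lies in the spectrum of `b`, no other case occurs, and `φ (b + p) ≠ 0` in both. In particular
it is not needed that `p` is idempotent.
-/

open Metric in
/-- Algebra homomorphisms commute with the contour integral of the resolvent. -/
lemma map_circleIntegral_resolvent {C D : Type*}
    [NormedRing C] [NormedAlgebra ℂ C] [CompleteSpace C]
    [NormedRing D] [NormedAlgebra ℂ D] [CompleteSpace D]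
    (S : C →ₐ[ℂ] D) (hS : Continuous S) (b : C) {r : ℝ} (hr : 0 < r)
    (hb : ∀ z ∈ sphere (0 : ℂ) r, z ∈ resolventSet ℂ b) :
    S (∮ z in C(0, r), resolvent b z) = ∮ z in C(0, r), resolvent (S b) z := by
  have hcont : ContinuousOn (resolvent b) (sphere (0 : ℂ) r) := fun z hz =>
    (spectrum.hasDerivAt_resolvent_const_left (hb z hz)).continuousAt.continuousWithinAt
  have hint : CircleIntegrable (resolvent b) 0 r := hcont.circleIntegrable hr.le
  let L : C →L[ℂ] D := ⟨S.toLinearMap, hS⟩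
  have hL : ∀ x, L x = S x := fun _ => rfl
  have hcomm := L.intervalIntegral_comp_comm ((circleIntegrable_iff r).1 hint)
  rw [← hL, circleIntegral, circleIntegral, ← hcomm]
  refine intervalIntegral.integral_congr fun θ _ => ?_
  have hu : IsUnit (algebraMap ℂ C (circleMap 0 r θ) - b) :=
    hb _ (circleMap_mem_sphere 0 hr.le θ)
  have hres : S (resolvent b (circleMap 0 r θ)) = resolvent (S b) (circleMap 0 r θ) := by
    have h1 : algebraMap ℂ D (circleMap 0 r θ) - S b
        = ((hu.unit.map (S : C →* D) : Dˣ) : D) := by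
      simp
    rw [resolvent, resolvent, h1, Ring.inverse_unit]
    conv_lhs => rw [← hu.unit_spec, Ring.inverse_unit]
    rfl
  simp only [map_smul, hL, hres]

/-- Gelfand theory for a Banach algebra whose multiplication happens to be commutative. -/
lemma exists_character_apply_eq_zero {C : Type*}
    [NormedRing C] [NormedAlgebra ℂ C] [CompleteSpace C]
    (hcomm : ∀ x y : C, x * y = y * x) {c : C} (hc : ¬ IsUnit c) :
    ∃ φ : C →ₐ[ℂ] ℂ, Continuous φ ∧ φ c = 0 := by
  let _ : NormedCommRing C := { (inferInstance : NormedRing C) with mul_comm := hcomm }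
  obtain ⟨f, hf⟩ := WeakDual.CharacterSpace.exists_apply_eq_zero hc
  exact ⟨WeakDual.CharacterSpace.toAlgHom f, map_continuous f, hf⟩

open Metric in
/-- The commutative case: `p` is the contour integral of the resolvent around `0`. -/
lemma exists_map_eq_zero_isUnit_add_of_comm {C B : Type*}
    [NormedRing C] [NormedAlgebra ℂ C] [CompleteSpace C] (hcomm : ∀ x y : C, x * y = y * x)
    [NormedRing B] [NormedAlgebra ℂ B] [CompleteSpace B]
    (S : C →ₐ[ℂ] B) (hS : Continuous S) (b : C) {r : ℝ} (hr : 0 < r)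
    (hb : ∀ z ∈ spectrum ℂ b, ‖z‖ ≤ r → z = 0) (hSb : IsUnit (S b)) :
    ∃ p : C, S p = 0 ∧ IsUnit (b + p) := by
  have hsphere : ∀ z ∈ sphere (0 : ℂ) r, z ∈ resolventSet ℂ b := by
    intro z hz
    rw [mem_sphere_zero_iff_norm] at hz
    by_contra h
    have h0 := hb z h hz.le
    rw [h0, norm_zero] at hz
    exact hr.ne hz
  refine ⟨(2 * Real.pi * Complex.I : ℂ)⁻¹ • ∮ z in C(0, r), resolvent b z, ?_, ?_⟩
  · rw [map_smul, map_circleIntegral_resolvent S hS b hr hsphere]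
    have hdisc : ∀ z ∈ closedBall (0 : ℂ) r, z ∈ resolventSet ℂ (S b) := by
      intro z hz
      by_contra h
      have h0 := hb z (AlgHom.spectrum_apply_subset S b h) (mem_closedBall_zero_iff.1 hz)
      subst h0
      exact h (spectrum.zero_mem_resolventSet_of_unit hSb.unit)
    have hderiv := fun z hz => spectrum.hasDerivAt_resolvent_const_left (hdisc z hz)
    rw [Complex.circleIntegral_eq_zero_of_differentiable_on_off_countable hr.le
      Set.countable_empty (fun z hz => (hderiv z hz).continuousAt.continuousWithinAt)
      (fun z hz => (hderiv z (ball_subset_closedBall hz.1)).differentiableAt), smul_zero]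
  · by_contra hunit
    obtain ⟨φ, hφ, h0⟩ := exists_character_apply_eq_zero hcomm hunit
    rw [map_add, map_smul, map_circleIntegral_resolvent φ hφ b hr hsphere] at h0
    have hres : resolvent (φ b) = fun z : ℂ => (z - φ b)⁻¹ := by
      ext z
      simp [resolvent]
    have hspec : φ b ∈ spectrum ℂ b := AlgHom.apply_mem_spectrum φ b
    rw [hres] at h0
    by_cases hle : ‖φ b‖ ≤ r
    · have hz := hb _ hspec hle
      rw [circleIntegral.integral_sub_inv_of_mem_ball (by simpa [hz] using hr), hz, zero_add,
        smul_eq_mul, inv_mul_cancel₀ Complex.two_pi_I_ne_zero] at h0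
      exact one_ne_zero h0
    · have hne : ∀ z ∈ closedBall (0 : ℂ) r, z - φ b ≠ 0 := by
        intro z hz h
        rw [sub_eq_zero.1 h, mem_closedBall_zero_iff] at hz
        exact hle hz
      have hdiff : ∀ z ∈ closedBall (0 : ℂ) r,
          DifferentiableAt ℂ (fun z : ℂ => (z - φ b)⁻¹) z :=
        fun z hz => (differentiableAt_id.sub_const _).inv (hne z hz)
      rw [Complex.circleIntegral_eq_zero_of_differentiable_on_off_countable hr.le
        Set.countable_empty (fun z hz => (hdiff z hz).continuousAt.continuousWithinAt)
        (fun z hz => hdiff z (ball_subset_closedBall hz.1)), smul_zero, add_zero] at h0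
      exact hle (by rw [h0, norm_zero]; exact hr.le)

/-- An almost invertible `T`-Fredholm element is `T`-Browder, obtained by passing to the
bicommutant. -/
lemma exists_browder_decomposition {A B : Type*}
    [NormedRing A] [NormedAlgebra ℂ A] [CompleteSpace A]
    [NormedRing B] [NormedAlgebra ℂ B] [CompleteSpace B]
    (T : A →ₐ[ℂ] B) (hT : Continuous T) (b : A) (hTb : IsUnit (T b))
    (hacc : (0 : ℂ) ∉ closure (spectrum ℂ b \ {0})) :
    ∃ c d : A, b = c + d ∧ T c = 0 ∧ IsUnit d ∧ c * d = d * c := by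
  obtain ⟨ε, hε, hball⟩ : ∃ ε > 0, ∀ z ∈ spectrum ℂ b \ {0}, ε ≤ ‖z‖ := by
    simpa [Metric.mem_closure_iff] using hacc
  let C : Subalgebra ℂ A := Subalgebra.centralizer ℂ (Set.centralizer {b})
  have hbC : b ∈ C := Set.subset_centralizer_centralizer (Set.mem_singleton b)
  have hclosed : IsClosed (C : Set A) := Set.isClosed_centralizer _
  have : CompleteSpace C := hclosed.completeSpace_coe
  have hcomm : ∀ x y : C, x * y = y * x := fun x y => Subtype.ext <|
    Set.centralizer_centralizer_comm_of_comm (S := {b}) (by simp) _ x.2 _ y.2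
  -- the bicommutant contains the inverses of its invertible elements
  have hinv : ∀ x : C, IsUnit (x : A) → IsUnit x := by
    rintro ⟨_, hx⟩ ⟨u, rfl⟩
    have hu : (↑u⁻¹ : A) ∈ C := by
      intro g hg
      exact ((show Commute g (u : A) from hx g hg).units_inv_right).eq
    exact ⟨⟨⟨_, hx⟩, ⟨_, hu⟩, Subtype.ext u.mul_inv, Subtype.ext u.inv_mul⟩, rfl⟩
  have hspec : ∀ z ∈ spectrum ℂ (⟨b, hbC⟩ : C), z ∈ spectrum ℂ b :=
    fun z hz h => hz (hinv _ h)
  obtain ⟨p, hp, hunit⟩ := exists_map_eq_zero_isUnit_add_of_comm hcomm (T.comp C.val)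
    (hT.comp continuous_subtype_val) ⟨b, hbC⟩ (half_pos hε)
    (fun z hz hle => by
      by_contra h0
      linarith [hball z ⟨hspec z hz, h0⟩])
    hTb
  let q : C := ⟨b, hbC⟩ + p
  refine ⟨((-p : C) : A), (q : A), by simp [q], ?_, hunit.map C.val,
    congrArg Subtype.val (hcomm _ _)⟩
  change T.comp C.val (-p) = 0
  rw [map_neg, hp, neg_zero]

/-- The chain of inclusions
`σ_T(a) ⊆ ω_T(a) ⊆ β_T(a) ⊆ σ_T(a) ∪ acc σ_A(a) ⊆ σ_A(a)`,
together with the "in particular" statement that every almost invertible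
`T`-Fredholm element is `T`-Browder. -/
theorem tSpectra_inclusions
    {A B : Type*}
    [NormedRing A] [NormedAlgebra ℂ A] [CompleteSpace A] [Nontrivial A]
    [NormedRing B] [NormedAlgebra ℂ B] [CompleteSpace B] [Nontrivial B]
    (T : A →ₐ[ℂ] B) (hTcont : Continuous T) (a : A) :
    spectrum ℂ (T a) ⊆
        {z : ℂ | ¬ ∃ c d : A, algebraMap ℂ A z - a = c + d ∧ T c = 0 ∧ IsUnit d} ∧
    {z : ℂ | ¬ ∃ c d : A, algebraMap ℂ A z - a = c + d ∧ T c = 0 ∧ IsUnit d} ⊆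
        {z : ℂ | ¬ ∃ c d : A, algebraMap ℂ A z - a = c + d ∧ T c = 0 ∧ IsUnit d ∧
          c * d = d * c} ∧
    {z : ℂ | ¬ ∃ c d : A, algebraMap ℂ A z - a = c + d ∧ T c = 0 ∧ IsUnit d ∧
          c * d = d * c} ⊆
        spectrum ℂ (T a) ∪ {z : ℂ | z ∈ closure (spectrum ℂ a \ {z})} ∧
    spectrum ℂ (T a) ∪ {z : ℂ | z ∈ closure (spectrum ℂ a \ {z})} ⊆ spectrum ℂ a ∧
    (IsUnit (T a) → (0 : ℂ) ∉ closure (spectrum ℂ a \ {0}) →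
      ∃ c d : A, a = c + d ∧ T c = 0 ∧ IsUnit d ∧ c * d = d * c) := by
  refine ⟨?_, ?_, ?_, ?_, exists_browder_decomposition T hTcont a⟩
  · rintro z hz ⟨c, d, h, hc, hd⟩
    refine hz ?_
    have hTz : algebraMap ℂ B z - T a = T d := by
      rw [← AlgHom.commutes T, ← map_sub, h, map_add, hc, zero_add]
    change IsUnit (algebraMap ℂ B z - T a)
    rw [hTz]
    exact hd.map T
  · rintro z hz ⟨c, d, h, hc, hd, -⟩
    exact hz ⟨c, d, h, hc, hd⟩
  · intro z hz
    by_contra hnot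
    rw [Set.mem_union, not_or] at hnot
    obtain ⟨hσ, hacc⟩ := hnot
    refine hz (exists_browder_decomposition T hTcont _ ?_ fun h0 => hacc ?_)
    · rw [map_sub, AlgHom.commutes]
      exact spectrum.notMem_iff.1 hσ
    -- the reflection `w ↦ z - w` carries the spectrum of `z - a` onto that of `a`
    · have hmap := map_mem_closure (f := fun w : ℂ => z - w) (t := spectrum ℂ a \ {z})
        (continuous_const.sub continuous_id) h0 (fun w hw => by
          refine ⟨?_, fun h => hw.2 (by simpa using h)⟩
          have hw1 := hw.1
          rw [← spectrum.singleton_sub_eq, Set.singleton_sub] at hw1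
          obtain ⟨v, hv, rfl⟩ := hw1
          simpa using hv)
      simpa using hmap
  · rintro z (hz | hz)
    · exact AlgHom.spectrum_apply_subset T a hz
    · exact (spectrum.isClosed a).closure_subset_iff.2 Set.sdiff_subset hz
end

section
/- Let A and B be unital complex Banach algebras and T : A → B a continuous unital algebra homomorphism satisfying the Riesz property. Then for every a ∈ A the T-Browder spectrum equals the almost invertible T-Fredholm spectrum: β_T(a) = σ_T(a) ∪ acc σ_A(a). -/
/-!
Write `b = z₀ - a`. Membership of `z₀` in the right-hand side fails exactly when `T b` is
invertible and `z + b` is invertible for all small `z ≠ 0`, so the claim is that this condition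
characterises the `T`-Browder elements `b`. Both implications are tested on characters: a pair of
commuting elements lies in a commutative Banach algebra with the same invertible elements, its
bicommutant (`exists_commutative_inverseClosed`), where an element is invertible as soon as no
character kills it.

If `b = c + d` is a Browder decomposition, put `e = d⁻¹ c ∈ ker T`. If a character `φ` kills
`z + b = z + d (1 + e)`, then `φ e = -1 - z φ(d⁻¹)` belongs to the spectrum of `e`; it is close to
`-1` but different from it when `z ≠ 0` is small. As the Riesz property forbids `-1` to be an
accumulation point, such `z` do not exist near `0` (`eventually_isUnit_of_browder`).

Conversely, take `c = ∮ (z + b)⁻¹ dz` over a small circle around `0`, which is `2πi` times the Riesz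
projection of `b` at `0`. Then `T c = ∮ (z + T b)⁻¹ dz = 0` by Cauchy's theorem, since `T b` is
invertible. A character `φ` sends `c` to `2πi` if `φ b = 0` and to `0` if `φ b` lies outside the
circle, so `φ (b - c)` never vanishes and `d = b - c` is invertible
(`exists_browder_of_eventually_isUnit`). It is not needed that a multiple of `c` is idempotent.
-/

open Filter Topology

universe u

/-- The bicommutant of two commuting elements of a Banach algebra, presented as an abstract
commutative Banach algebra `C` with a continuous homomorphism `i` into `A` reflecting
invertibility. -/
lemma exists_commutative_inverseClosed {A : Type u} [NormedRing A] [NormedAlgebra ℂ A]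
    [CompleteSpace A] (x y : A) (hxy : x * y = y * x) :
    ∃ (C : Type u) (_ : NormedCommRing C) (_ : NormedAlgebra ℂ C) (_ : CompleteSpace C)
      (i : C →ₐ[ℂ] A), Continuous i ∧ (∀ w : C, IsUnit (i w) → IsUnit w) ∧
        ∃ x' y' : C, i x' = x ∧ i y' = y := by
  let P : Set A := {x, y}
  let S : Subalgebra ℂ A := Subalgebra.centralizer ℂ (Set.centralizer P)
  have hS : ∀ w, w ∈ S ↔ w ∈ P.centralizer.centralizer := fun w => Iff.rfl
  have hP : ∀ p ∈ P, ∀ q ∈ P, p * q = q * p := by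
    rintro p (rfl | rfl) q (rfl | rfl) <;> first | rfl | exact hxy | exact hxy.symm
  have hcomm : ∀ u v : S, u * v = v * u := fun u v =>
    Subtype.ext (Set.centralizer_centralizer_comm_of_comm hP _ u.2 _ v.2)
  letI inst : NormedCommRing S := { (inferInstance : NormedRing S) with mul_comm := hcomm }
  have hclosed : IsClosed (S : Set A) := Set.isClosed_centralizer _
  have hcomplete : CompleteSpace S := hclosed.completeSpace_coe
  refine ⟨S, inst, (inferInstance : NormedAlgebra ℂ S), hcomplete, S.val, continuous_subtype_val,
    ?_, ⟨x, Set.subset_centralizer_centralizer (by simp [P])⟩,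
    ⟨y, Set.subset_centralizer_centralizer (by simp [P])⟩, rfl, rfl⟩
  rintro w ⟨t, ht⟩
  have ht' : (t : A) = w := ht
  have hinv : (↑t⁻¹ : A) ∈ S := by
    rw [hS, Set.mem_centralizer_iff]
    intro m hm
    have h := (hS w).1 w.2 m hm
    rw [← ht'] at h
    exact (show Commute m (t : A) from h).units_inv_right
  refine IsUnit.of_mul_eq_one ⟨_, hinv⟩ (Subtype.ext ?_)
  change (w : A) * ↑t⁻¹ = 1
  rw [← ht', Units.mul_inv]

lemma differentiableOn_inverse_algebraMap_add {C : Type*} [NormedRing C] [NormedAlgebra ℂ C]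
    [CompleteSpace C] (b : C) (s : Set ℂ) (h : ∀ z ∈ s, IsUnit (algebraMap ℂ C z + b)) :
    DifferentiableOn ℂ (fun z : ℂ => Ring.inverse (algebraMap ℂ C z + b)) s := by
  intro z hz
  refine DifferentiableAt.differentiableWithinAt ?_
  have h1 : DifferentiableAt ℂ (fun z : ℂ => algebraMap ℂ C z + b) z :=
    (algebraMapCLM ℂ C).differentiableAt.add_const b
  exact DifferentiableAt.comp z (differentiableAt_inverse (h z hz)) h1

lemma map_circleIntegral {E F : Type*} [NormedAddCommGroup E] [NormedSpace ℂ E] [CompleteSpace E]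
    [NormedAddCommGroup F] [NormedSpace ℂ F] [CompleteSpace F] (L : E →L[ℂ] F) (f : ℂ → E) {r : ℝ}
    (hr : 0 ≤ r) (hf : ContinuousOn f (Metric.sphere 0 r)) :
    L (∮ z in C(0, r), f z) = ∮ z in C(0, r), L (f z) := by
  have h := (circleIntegrable_iff r).1 (hf.circleIntegrable hr)
  simp only [circleIntegral]
  rw [← L.intervalIntegral_comp_comm h]
  simp

lemma map_ringInverse {M N F : Type*} [Ring M] [Ring N] [FunLike F M N] [RingHomClass F M N]
    (f : F) {x : M} (hx : IsUnit x) : f (Ring.inverse x) = Ring.inverse (f x) := by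
  obtain ⟨t, rfl⟩ := hx
  have h : f (t : M) = (Units.map (f : M →* N) t : N) := rfl
  rw [h, Ring.inverse_unit, Ring.inverse_unit, ← map_inv]
  rfl

/-- Subtracting the unnormalised Riesz projection at `0` makes `b` invertible. -/
lemma isUnit_sub_circleIntegral {C : Type*} [NormedCommRing C] [NormedAlgebra ℂ C]
    [CompleteSpace C] (b : C) {r : ℝ} (hr : 0 < r)
    (h : ∀ z : ℂ, z ≠ 0 → ‖z‖ ≤ r → IsUnit (algebraMap ℂ C z + b)) :
    IsUnit (b - ∮ z in C(0, r), Ring.inverse (algebraMap ℂ C z + b)) := by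
  by_contra hcon
  obtain ⟨φ, hφ⟩ := WeakDual.CharacterSpace.exists_apply_eq_zero hcon
  have hsph : ∀ z ∈ Metric.sphere (0 : ℂ) r, IsUnit (algebraMap ℂ C z + b) := by
    intro z hz
    have hz' : ‖z‖ = r := by simpa using hz
    exact h z (by rintro rfl; simp at hz'; linarith) hz'.le
  have hφadd : ∀ z : ℂ, φ (algebraMap ℂ C z + b) = z + φ b := by
    intro z
    rw [map_add, AlgHomClass.commutes]
    rfl
  have hint : φ (∮ z in C(0, r), Ring.inverse (algebraMap ℂ C z + b)) =
      ∮ z in C(0, r), (z - -φ b)⁻¹ := by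
    have h1 := map_circleIntegral (WeakDual.CharacterSpace.toCLM φ) _ hr.le
      (differentiableOn_inverse_algebraMap_add b _ hsph).continuousOn
    refine h1.trans (circleIntegral.integral_congr hr.le fun z hz => ?_)
    change φ (Ring.inverse (algebraMap ℂ C z + b)) = _
    rw [map_ringInverse φ (hsph z hz), hφadd, Ring.inverse_eq_inv', sub_neg_eq_add]
  rw [map_sub, hint] at hφ
  by_cases hb : φ b = 0
  · rw [hb, neg_zero, circleIntegral.integral_sub_inv_of_mem_ball (by simpa using hr)] at hφ
    simp [Real.pi_ne_zero] at hφ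
  · have hlt : r < ‖φ b‖ := by
      by_contra! hle
      have := (h (-φ b) (neg_ne_zero.2 hb) (by simpa using hle)).map φ
      rw [hφadd] at this
      simp at this
    have hne : ∀ z ∈ Metric.closedBall (0 : ℂ) r, z - -φ b ≠ 0 := by
      intro z hz h0
      have hz' : ‖z‖ ≤ r := by simpa using hz
      rw [sub_eq_zero.1 h0, norm_neg] at hz'
      linarith
    have hd : DifferentiableOn ℂ (fun z : ℂ => (z - -φ b)⁻¹) (Metric.closedBall 0 r) :=
      (differentiableOn_id.sub_const _).inv hne
    have h0 : ∮ z in C(0, r), (z - -φ b)⁻¹ = 0 :=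
      Complex.circleIntegral_eq_zero_of_differentiable_on_off_countable hr.le Set.countable_empty
        hd.continuousOn fun z hz => hd.differentiableAt
          (Filter.mem_of_superset (Metric.isOpen_ball.mem_nhds hz.1) Metric.ball_subset_closedBall)
    rw [h0, sub_zero] at hφ
    exact hb hφ

lemma exists_browder_of_eventually_isUnit {A B : Type*}
    [NormedRing A] [NormedAlgebra ℂ A] [CompleteSpace A]
    [NormedRing B] [NormedAlgebra ℂ B] [CompleteSpace B]
    (T : A →ₐ[ℂ] B) (hT : Continuous T) (b : A) (hTb : IsUnit (T b))
    (hb : ∀ᶠ z in 𝓝[≠] (0 : ℂ), IsUnit (algebraMap ℂ A z + b)) :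
    ∃ c d : A, b = c + d ∧ T c = 0 ∧ IsUnit d ∧ c * d = d * c := by
  obtain ⟨C, _, _, _, i, hi, hunit, b', -, hb', -⟩ := exists_commutative_inverseClosed b b rfl
  have hTnear : ∀ᶠ z in 𝓝 (0 : ℂ), IsUnit (algebraMap ℂ B z + T b) := by
    have hc : Continuous fun z : ℂ => algebraMap ℂ B z + T b :=
      (continuous_algebraMap ℂ B).add continuous_const
    refine hc.continuousAt.eventually (Units.isOpen.mem_nhds ?_)
    simpa using hTb
  obtain ⟨r, hr, hball⟩ := Metric.nhds_basis_closedBall.eventually_iff.1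
    ((eventually_nhdsWithin_iff.1 hb).and hTnear)
  have hC : ∀ z : ℂ, z ≠ 0 → ‖z‖ ≤ r → IsUnit (algebraMap ℂ C z + b') := by
    intro z hz hzr
    apply hunit
    rw [map_add, AlgHomClass.commutes, hb']
    exact (hball (by simpa using hzr)).1 hz
  set c := ∮ z in C(0, r), Ring.inverse (algebraMap ℂ C z + b') with hc
  have hsph : ∀ z ∈ Metric.sphere (0 : ℂ) r, IsUnit (algebraMap ℂ C z + b') := by
    intro z hz
    have hz' : ‖z‖ = r := by simpa using hz
    exact hC z (by rintro rfl; simp at hz'; linarith) hz'.le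
  refine ⟨i c, i (b' - c), by rw [← map_add, add_sub_cancel, hb'], ?_,
    (isUnit_sub_circleIntegral b' hr hC).map i, by rw [← map_mul, mul_comm, map_mul]⟩
  let L : C →L[ℂ] B := ⟨(T.comp i).toLinearMap, hT.comp hi⟩
  have hL : ∀ w, L w = (T.comp i) w := fun _ => rfl
  have h1 : T (i c) = ∮ z in C(0, r), Ring.inverse (algebraMap ℂ B z + T b) := by
    refine (map_circleIntegral L _ hr.le
      (differentiableOn_inverse_algebraMap_add b' _ hsph).continuousOn).trans
      (circleIntegral.integral_congr hr.le fun z hz => ?_)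
    change L (Ring.inverse (algebraMap ℂ C z + b')) = _
    rw [hL, map_ringInverse _ (hsph z hz), map_add, AlgHomClass.commutes, AlgHom.comp_apply, hb']
  have hd := differentiableOn_inverse_algebraMap_add (T b) (Metric.closedBall (0 : ℂ) r)
    fun z hz => (hball hz).2
  rw [h1]
  exact Complex.circleIntegral_eq_zero_of_differentiable_on_off_countable hr.le Set.countable_empty
    hd.continuousOn fun z hz => hd.differentiableAt
      (Filter.mem_of_superset (Metric.isOpen_ball.mem_nhds hz.1) Metric.ball_subset_closedBall)

lemma notMem_closure_diff_singleton_iff (s : Set ℂ) (w : ℂ) :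
    w ∉ closure (s \ {w}) ↔ ∀ᶠ z in 𝓝[≠] w, z ∉ s := by
  rw [mem_closure_iff_frequently, not_frequently, eventually_nhdsWithin_iff]
  refine eventually_congr (Eventually.of_forall fun z => ?_)
  simp only [Set.mem_sdiff, Set.mem_singleton_iff, Set.mem_compl_iff]
  tauto

lemma eventually_isUnit_of_browder {A B : Type*}
    [NormedRing A] [NormedAlgebra ℂ A] [CompleteSpace A]
    [NormedRing B] [NormedAlgebra ℂ B]
    (T : A →ₐ[ℂ] B)
    (hRiesz : ∀ x : A, T x = 0 → {z : ℂ | z ∈ closure (spectrum ℂ x \ {z})} ⊆ {0})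
    (c d : A) (hTc : T c = 0) (hd : IsUnit d) (hcd : c * d = d * c) :
    ∀ᶠ z in 𝓝[≠] (0 : ℂ), IsUnit (algebraMap ℂ A z + (c + d)) := by
  obtain ⟨C, _, _, _, i, hi, hunit, c', d', rfl, rfl⟩ := exists_commutative_inverseClosed c d hcd
  obtain ⟨t, rfl⟩ := hunit d' hd
  have hT : T (i (↑t⁻¹ * c')) = 0 := by rw [map_mul, map_mul, hTc, mul_zero]
  have hacc : (-1 : ℂ) ∉ closure (spectrum ℂ (i (↑t⁻¹ * c')) \ {-1}) := fun h => by
    have := hRiesz _ hT h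
    simp at this
  rw [notMem_closure_diff_singleton_iff, eventually_nhdsWithin_iff, Metric.eventually_nhds_iff]
    at hacc
  obtain ⟨ε, hε, hacc⟩ := hacc
  have hsmall : ∀ᶠ z in 𝓝[≠] (0 : ℂ), ‖z‖ * (‖(↑t⁻¹ : C)‖ * ‖(1 : C)‖) < ε := by
    apply Filter.Eventually.filter_mono nhdsWithin_le_nhds
    have hcont : Continuous fun z : ℂ => ‖z‖ * (‖(↑t⁻¹ : C)‖ * ‖(1 : C)‖) := by fun_prop
    exact hcont.continuousAt.eventually (gt_mem_nhds (by simpa using hε))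
  filter_upwards [hsmall, self_mem_nhdsWithin] with z hz hz0
  have hz0' : z ≠ 0 := hz0
  by_contra hcon
  have hcon' : ¬ IsUnit (algebraMap ℂ C z + (c' + t)) := fun h => hcon <| by
    have := h.map i
    rwa [map_add, map_add, AlgHomClass.commutes] at this
  obtain ⟨φ, hφ⟩ := WeakDual.CharacterSpace.exists_apply_eq_zero hcon'
  have hφz : φ (algebraMap ℂ C z) = z := AlgHomClass.commutes φ z
  have hts : φ (↑t⁻¹ : C) * φ (t : C) = 1 := by rw [← map_mul, Units.inv_mul, map_one]
  have hs0 : φ (↑t⁻¹ : C) ≠ 0 := left_ne_zero_of_mul_eq_one hts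
  have hval : φ (↑t⁻¹ * c') = -1 - z * φ (↑t⁻¹ : C) := by
    rw [map_add, map_add, hφz] at hφ
    rw [map_mul]
    linear_combination φ (↑t⁻¹ : C) * hφ - hts
  have hmem : φ (↑t⁻¹ * c') ∈ spectrum ℂ (i (↑t⁻¹ * c')) := by
    intro h
    refine WeakDual.CharacterSpace.apply_mem_spectrum φ (↑t⁻¹ * c') (hunit _ ?_)
    rwa [map_sub, AlgHomClass.commutes]
  refine hacc (y := φ (↑t⁻¹ * c')) ?_ ?_ hmem
  · rw [hval, dist_eq_norm]
    have hs := spectrum.norm_le_norm_mul_of_mem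
      (WeakDual.CharacterSpace.apply_mem_spectrum φ (↑t⁻¹ : C))
    calc ‖-1 - z * φ (↑t⁻¹ : C) - -1‖ = ‖z‖ * ‖φ (↑t⁻¹ : C)‖ := by
          rw [← norm_mul, ← norm_neg]; congr 1; ring
      _ ≤ ‖z‖ * (‖(↑t⁻¹ : C)‖ * ‖(1 : C)‖) := by gcongr
      _ < ε := hz
  · rw [hval]
    intro h
    have h' : -1 - z * φ (↑t⁻¹ : C) = -1 := h
    exact mul_ne_zero hz0' hs0 (by linear_combination -h')

/-- If `T` has the Riesz property, then the `T`-Browder spectrum equals the almost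
invertible `T`-Fredholm spectrum: `β_T(a) = σ_T(a) ∪ acc σ_A(a)`. -/
theorem browder_spectrum_eq_of_riesz_property
    {A B : Type*}
    [NormedRing A] [NormedAlgebra ℂ A] [CompleteSpace A] [Nontrivial A]
    [NormedRing B] [NormedAlgebra ℂ B] [CompleteSpace B] [Nontrivial B]
    (T : A →ₐ[ℂ] B) (hTcont : Continuous T)
    (hRiesz : ∀ x : A, T x = 0 →
      {z : ℂ | z ∈ closure (spectrum ℂ x \ {z})} ⊆ {0})
    (a : A) :
    {z : ℂ | ¬ ∃ c d : A, algebraMap ℂ A z - a = c + d ∧ T c = 0 ∧ IsUnit d ∧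
        c * d = d * c} =
      spectrum ℂ (T a) ∪ {z : ℂ | z ∈ closure (spectrum ℂ a \ {z})} := by
  ext w
  rw [← not_iff_not]
  simp only [Set.mem_setOf_eq, Set.mem_union, not_not, not_or]
  rw [notMem_closure_diff_singleton_iff, spectrum.notMem_iff]
  have hTw : algebraMap ℂ B w - T a = T (algebraMap ℂ A w - a) := by
    rw [map_sub, AlgHomClass.commutes]
  have hshift : (∀ᶠ z in 𝓝[≠] w, z ∉ spectrum ℂ a) ↔
      ∀ᶠ z in 𝓝[≠] (0 : ℂ), IsUnit (algebraMap ℂ A z + (algebraMap ℂ A w - a)) := by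
    have hmap : 𝓝[≠] w = map (fun z => z + w) (𝓝[≠] (0 : ℂ)) := by
      have := (Homeomorph.addRight w).isEmbedding.map_nhdsWithin_eq {0}ᶜ 0
      rw [Set.image_compl_eq (Homeomorph.addRight w).bijective] at this
      simpa using this.symm
    rw [hmap, eventually_map]
    refine eventually_congr (Eventually.of_forall fun z => ?_)
    rw [spectrum.notMem_iff, map_add, add_sub_assoc]
  rw [hTw, hshift]
  constructor
  · rintro ⟨c, d, h, hc, hd, hcd⟩
    rw [h]
    refine ⟨?_, eventually_isUnit_of_browder T hRiesz c d hc hd hcd⟩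
    rw [map_add, hc, zero_add]
    exact hd.map T
  · rintro ⟨h1, h2⟩
    exact exists_browder_of_eventually_isUnit T hTcont _ h1 h2
end

section
/- Let A and B be unital complex C*-algebras and T : A → B a continuous unital algebra homomorphism satisfying the strong Riesz property. Let a ∈ A be polynomially T-Riesz, and let P ∈ ℂ[X] be a nonzero polynomial of minimal degree among all nonzero polynomials Q with σ_B(T (Q(a))) ⊆ {0}. Then σ_T(a) = ω_T(a) = β_T(a) = {λ ∈ ℂ : P(λ) = 0}. -/
/-!
By spectral mapping `P(σ(T a)) ⊆ {0}`, so `σ(T a)` consists of roots of `P`; it is finite, and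
minimality of `deg P`, tested against `∏ (X - μ)` over `μ ∈ σ(T a)`, forces every root of `P` to lie
in `σ(T a)`.

The inclusions `σ_T(a) ⊆ ω_T(a) ⊆ β_T(a)` are immediate, so what remains is that `z - a` is
`T`-Browder whenever `z ∉ σ(T a)`. The strong Riesz property puts `∂σ(a)` inside the union of the
finite set `σ(T a)` and the isolated points of `σ(a)`. The frontier of the interior of `σ(a)` has no
isolated points of `σ(a)`, hence is finite; since the plane minus a finite set is connected and
unbounded, `σ(a)` has empty interior (`interior_eq_empty_of_frontier_subset_finite`). Hence a point
`z` of `σ(a)` outside `σ(T a)` is isolated in `σ(a)`.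

For such `z`, let `p = (2πi)⁻¹ ∮ (w - a)⁻¹ dw` over a small circle about `z`. Then `T p = 0` by
Cauchy's theorem, as the resolvent of `T a` is holomorphic near `z`. The sum `z - a + p` is
invertible: computed in a commutative inverse-closed Banach subalgebra containing `a`, here the
bicommutant of `a`, each character `φ` satisfies `φ p = 1` if `φ a = z` and `φ p = 0` otherwise. So
`z - a = -p + (z - a + p)` is a Browder decomposition. Working with characters avoids
proving that `p` is idempotent.
-/

open Polynomial Metric

/-- An algebra homomorphism sends resolvents to resolvents on the resolvent set. -/
lemma algHom_resolvent {C D : Type*} [Ring C] [Algebra ℂ C] [Ring D] [Algebra ℂ D]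
    (f : C →ₐ[ℂ] D) {a : C} {z : ℂ} (hz : z ∉ spectrum ℂ a) :
    f (resolvent a z) = resolvent (f a) z := by
  have h1 : IsUnit (algebraMap ℂ C z - a) := spectrum.notMem_iff.mp hz
  have h2 : algebraMap ℂ D z - f a = f (algebraMap ℂ C z - a) := by simp
  obtain ⟨u, hu⟩ := h1
  have h3 : f (u : C) = (Units.map (f : C →* D) u : D) := rfl
  rw [resolvent, resolvent, h2, ← hu, Ring.inverse_unit, h3, Ring.inverse_unit, ← map_inv]
  rfl

lemma continuousOn_resolvent {C : Type*} [NormedRing C] [NormedAlgebra ℂ C] [CompleteSpace C]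
    (a : C) {s : Set ℂ} (hs : ∀ z ∈ s, z ∉ spectrum ℂ a) : ContinuousOn (resolvent a) s :=
  fun z hz => (spectrum.hasDerivAt_resolvent_const_left
    (Set.notMem_compl_iff.mp (hs z hz))).continuousAt.continuousWithinAt

/-- Cauchy's theorem for the resolvent over a disc disjoint from the spectrum. -/
lemma circleIntegral_resolvent_eq_zero {D : Type*} [NormedRing D] [NormedAlgebra ℂ D]
    [CompleteSpace D] (b : D) {z : ℂ} {r : ℝ} (hr : 0 < r)
    (h : ∀ w ∈ closedBall z r, w ∉ spectrum ℂ b) :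
    (∮ w in C(z, r), resolvent b w) = 0 := by
  refine Complex.circleIntegral_eq_zero_of_differentiable_on_off_countable hr.le
    Set.countable_empty (continuousOn_resolvent b h) fun w hw => ?_
  exact (spectrum.hasDerivAt_resolvent_const_left
    (Set.notMem_compl_iff.mp (h w (ball_subset_closedBall hw.1)))).differentiableAt

/-- A continuous algebra homomorphism carries the contour integral of the resolvent of `a` to that
of the resolvent of its image. -/
lemma algHom_circleIntegral_resolvent {C D : Type*} [NormedRing C] [NormedAlgebra ℂ C]
    [CompleteSpace C] [NormedRing D] [NormedAlgebra ℂ D] [CompleteSpace D]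
    (f : C →ₐ[ℂ] D) (hf : Continuous f) (a : C) {z : ℂ} {r : ℝ} (hr : 0 < r)
    (h : ∀ w ∈ sphere z r, w ∉ spectrum ℂ a) :
    f (∮ w in C(z, r), resolvent a w) = ∮ w in C(z, r), resolvent (f a) w := by
  let F : C →L[ℂ] D := ⟨f.toLinearMap, hf⟩
  have hint := ((continuousOn_resolvent a h).circleIntegrable hr.le).out
  have := F.intervalIntegral_comp_comm hint
  have h2 : F (∮ w in C(z, r), resolvent a w) = ∮ w in C(z, r), F (resolvent a w) := by
    simp only [circleIntegral]
    rw [← this]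
    simp only [map_smul]
  refine h2.trans (circleIntegral.integral_congr hr.le fun w hw => ?_)
  exact algHom_resolvent f (h w hw)

/-- In the commutative case, a point isolated from the rest of `σ(a)` by a disc and lying off `σ(T a)`
is removed from the spectrum by subtracting from `a` an element killed by `T`. -/
lemma exists_isUnit_add_of_comm {C B : Type*} [NormedCommRing C] [NormedAlgebra ℂ C]
    [CompleteSpace C] [NormedRing B] [NormedAlgebra ℂ B] [CompleteSpace B]
    (T : C →ₐ[ℂ] B) (hT : Continuous T) (a : C) {z : ℂ} {r : ℝ} (hr : 0 < r)
    (h : ∀ w ∈ spectrum ℂ a, w ∈ closedBall z r → w = z) (hz : z ∉ spectrum ℂ (T a)) :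
    ∃ p : C, T p = 0 ∧ IsUnit (algebraMap ℂ C z - a + p) := by
  have hsph : ∀ w ∈ sphere z r, w ∉ spectrum ℂ a := by
    intro w hw hw'
    have := h w hw' (sphere_subset_closedBall hw)
    rw [this, mem_sphere, dist_self] at hw
    exact hr.ne hw
  refine ⟨(2 * Real.pi * Complex.I : ℂ)⁻¹ • ∮ w in C(z, r), resolvent a w, ?_, ?_⟩
  · rw [map_smul, algHom_circleIntegral_resolvent T hT a hr hsph,
      circleIntegral_resolvent_eq_zero _ hr, smul_zero]
    intro w hw hw'
    have := h w (AlgHom.spectrum_apply_subset T a hw') hw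
    exact hz (this ▸ hw')
  · by_contra hu
    obtain ⟨φ, hφ⟩ := WeakDual.CharacterSpace.exists_apply_eq_zero hu
    let f : C →ₐ[ℂ] ℂ := WeakDual.CharacterSpace.toAlgHom φ
    have hf : Continuous f := map_continuous φ
    have hfa : f a ∈ spectrum ℂ a := AlgHom.apply_mem_spectrum f a
    have h0 : z - f a + (2 * Real.pi * Complex.I : ℂ)⁻¹ *
        f (∮ w in C(z, r), resolvent a w) = 0 := by
      have h1 : f (algebraMap ℂ C z - a +
        (2 * Real.pi * Complex.I : ℂ)⁻¹ • ∮ w in C(z, r), resolvent a w) = 0 := hφ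
      simpa only [map_add, map_sub, map_smul, AlgHom.commutes, smul_eq_mul,
        Algebra.algebraMap_self, RingHom.id_apply] using h1
    rw [algHom_circleIntegral_resolvent f hf a hr hsph] at h0
    by_cases hc : f a = z
    · have h2 : (∮ w in C(z, r), resolvent (f a) w) = 2 * Real.pi * Complex.I := by
        rw [← circleIntegral.integral_sub_inv_of_mem_ball (mem_ball_self (x := z) hr)]
        simp [resolvent, hc]
      rw [h2, hc, sub_self, zero_add, inv_mul_cancel₀ Complex.two_pi_I_ne_zero] at h0
      exact one_ne_zero h0
    · rw [circleIntegral_resolvent_eq_zero _ hr, mul_zero, add_zero] at h0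
      · exact hc (sub_eq_zero.mp h0).symm
      · intro w hw hw'
        have hw2 : w = f a := by
          have := spectrum.mem_iff.mp hw'
          simp only [Algebra.algebraMap_self, RingHom.id_apply, isUnit_iff_ne_zero, ne_eq,
            not_not] at this
          exact sub_eq_zero.mp this
        exact hc (h _ hfa (hw2 ▸ hw))

/-- The general case of `exists_isUnit_add_of_comm`, obtained by working in the bicommutant of `a`,
which is commutative, closed and inverse-closed. -/
lemma exists_isUnit_add {A B : Type*} [NormedRing A] [NormedAlgebra ℂ A]
    [CompleteSpace A] [NormedRing B] [NormedAlgebra ℂ B] [CompleteSpace B]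
    (T : A →ₐ[ℂ] B) (hT : Continuous T) (a : A) {z : ℂ} {r : ℝ} (hr : 0 < r)
    (h : ∀ w ∈ spectrum ℂ a, w ∈ closedBall z r → w = z) (hz : z ∉ spectrum ℂ (T a)) :
    ∃ p : A, T p = 0 ∧ IsUnit (algebraMap ℂ A z - a + p) ∧ Commute a p := by
  let S : Subalgebra ℂ A := Subalgebra.centralizer ℂ (Set.centralizer {a})
  have haS : a ∈ S := Subalgebra.mem_centralizer_iff ℂ |>.mpr fun g hg =>
    (Set.mem_centralizer_iff.mp hg a rfl).symm
  have hcomm : ∀ x ∈ S, ∀ y ∈ S, x * y = y * x := by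
    intro x hx y hy
    refine Subalgebra.mem_centralizer_iff ℂ |>.mp hy x ?_
    refine Set.mem_centralizer_iff.mpr fun m hm => ?_
    rw [Set.mem_singleton_iff.mp hm]
    refine Subalgebra.mem_centralizer_iff ℂ |>.mp hx a ?_
    exact Set.mem_centralizer_iff.mpr fun m hm => by rw [Set.mem_singleton_iff.mp hm]
  have hclosed : IsClosed (S : Set A) := Set.isClosed_centralizer _
  have : CompleteSpace S := hclosed.completeSpace_coe
  let : NormedCommRing S :=
    { (inferInstance : NormedRing S) with
      mul_comm := fun x y => Subtype.ext (hcomm x x.2 y y.2) }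
  -- a unit of `A` lying in the bicommutant is a unit of the bicommutant
  have hinv : ∀ x : S, IsUnit (x : A) → IsUnit x := by
    rintro x ⟨u, hu⟩
    have hm : (↑u⁻¹ : A) ∈ S := by
      refine Subalgebra.mem_centralizer_iff ℂ |>.mpr fun g hg => ?_
      have h1 : Commute g (u : A) := by
        rw [hu]; exact Subalgebra.mem_centralizer_iff ℂ |>.mp x.2 g hg
      exact h1.units_inv_right
    refine IsUnit.of_mul_eq_one (⟨(↑u⁻¹ : A), hm⟩ : S) (Subtype.ext ?_)
    change (x : A) * (↑u⁻¹ : A) = 1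
    rw [← hu, Units.mul_inv]
  have hspec : ∀ w ∈ spectrum ℂ (⟨a, haS⟩ : S), w ∈ spectrum ℂ a := by
    intro w hw hw'
    exact hw (hinv _ hw')
  obtain ⟨p, hp, hu⟩ := exists_isUnit_add_of_comm (T.comp S.val)
    (hT.comp continuous_subtype_val) (⟨a, haS⟩ : S) hr (fun w hw => h w (hspec w hw)) hz
  exact ⟨p, hp, hu.map S.val, hcomm a haS p p.2⟩

/-- A compact plane set whose frontier lies in a finite set, up to isolated points, has no
interior. -/
lemma interior_eq_empty_of_frontier_subset_finite {K F : Set ℂ} (hK : IsCompact K) (hF : F.Finite)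
    (h : frontier K ⊆ F ∪ (K \ {z | z ∈ closure (K \ {z})})) : interior K = ∅ := by
  have hfr : frontier (interior K) ⊆ F := by
    intro z hz
    rw [frontier, interior_interior] at hz
    have hzK : z ∈ frontier K := ⟨closure_mono interior_subset hz.1, hz.2⟩
    refine (h hzK).resolve_right fun hiso => hiso.2 ?_
    have hsub : interior K ⊆ K \ {z} := fun w hw =>
      ⟨interior_subset hw, fun hwz => hz.2 (Set.mem_singleton_iff.mp hwz ▸ hw)⟩
    exact closure_mono hsub hz.1
  have hconn : IsPreconnected Fᶜ :=
    (hF.countable.isConnected_compl_of_one_lt_rank (by simp)).isPreconnected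
  have hdense : Dense Fᶜ := hF.countable.dense_compl ℝ
  have hcover : Fᶜ ⊆ interior K ∪ (closure (interior K))ᶜ := by
    intro w hw
    by_contra hcon
    simp only [Set.mem_union, Set.mem_compl_iff, not_or, not_not] at hcon
    exact hw (hfr ⟨hcon.2, by rw [interior_interior]; exact hcon.1⟩)
  rcases hconn.subset_or_subset (u := interior K) (v := (closure (interior K))ᶜ) isOpen_interior
    isClosed_closure.isOpen_compl (Set.disjoint_compl_right_iff_subset.mpr subset_closure) hcover
    with h1 | h1
  · exfalso
    have : (Set.univ : Set ℂ) ⊆ K := by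
      rw [← hdense.closure_eq]
      exact closure_minimal (h1.trans interior_subset) hK.isClosed
    exact noncompact_univ ℂ (Set.univ_subset_iff.mp this ▸ hK)
  · by_contra hne
    obtain ⟨w, hw, hwF⟩ := hdense.inter_open_nonempty _ isOpen_interior
      (Set.nonempty_iff_ne_empty.mpr hne)
    exact h1 hwF (subset_closure hw)


/-- If `T` has the strong Riesz property and `a` is polynomially `T`-Riesz with `P`
a nonzero polynomial of minimal degree such that `P(a)` is `T`-Riesz, then
`σ_T(a) = ω_T(a) = β_T(a) = P⁻¹(0)`. -/
theorem tSpectra_eq_roots_of_minimal_polynomial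
    {A B : Type*}
    [NormedRing A] [StarRing A] [CStarRing A] [NormedAlgebra ℂ A]
    [CompleteSpace A] [StarModule ℂ A] [Nontrivial A]
    [NormedRing B] [StarRing B] [CStarRing B] [NormedAlgebra ℂ B]
    [CompleteSpace B] [StarModule ℂ B] [Nontrivial B]
    (T : A →ₐ[ℂ] B) (hTcont : Continuous T)
    (hStrongRiesz : ∀ x : A, frontier (spectrum ℂ x) ⊆
      spectrum ℂ (T x) ∪
        (spectrum ℂ x \ {z : ℂ | z ∈ closure (spectrum ℂ x \ {z})}))
    (a : A) (P : Polynomial ℂ) (hP : P ≠ 0)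
    (hPa : spectrum ℂ (T (Polynomial.aeval a P)) ⊆ {0})
    (hPmin : ∀ Q : Polynomial ℂ, Q ≠ 0 →
      spectrum ℂ (T (Polynomial.aeval a Q)) ⊆ {0} → P.degree ≤ Q.degree) :
    spectrum ℂ (T a) = {z : ℂ | Polynomial.eval z P = 0} ∧
    {z : ℂ | ¬ ∃ c d : A, algebraMap ℂ A z - a = c + d ∧ T c = 0 ∧ IsUnit d} =
      {z : ℂ | Polynomial.eval z P = 0} ∧
    {z : ℂ | ¬ ∃ c d : A, algebraMap ℂ A z - a = c + d ∧ T c = 0 ∧ IsUnit d ∧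
        c * d = d * c} = {z : ℂ | Polynomial.eval z P = 0} := by
  have hmap : ∀ Q : ℂ[X], spectrum ℂ (T (aeval a Q)) = (fun k => eval k Q) '' spectrum ℂ (T a) := by
    intro Q
    rw [← aeval_algHom_apply, spectrum.map_polynomial_aeval]
  have hsub : spectrum ℂ (T a) ⊆ {z : ℂ | eval z P = 0} := fun z hz =>
    hPa (by rw [hmap]; exact ⟨z, hz, rfl⟩)
  have hfin : (spectrum ℂ (T a)).Finite :=
    P.roots.toFinset.finite_toSet.subset fun z hz => by
      simpa [hP] using hsub hz
  have hσ : spectrum ℂ (T a) = {z : ℂ | eval z P = 0} := by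
    let Q : ℂ[X] := ∏ μ ∈ hfin.toFinset, (X - C μ)
    have hQ : Q.Monic := monic_prod_of_monic _ _ fun μ _ => monic_X_sub_C μ
    have hle : P.degree ≤ Q.degree := by
      refine hPmin Q hQ.ne_zero ?_
      rw [hmap]
      rintro _ ⟨w, hw, rfl⟩
      simp only [Q, eval_prod, Set.mem_singleton_iff]
      exact Finset.prod_eq_zero (hfin.mem_toFinset.mpr hw) (by simp)
    have hdeg : Q.natDegree = hfin.toFinset.card := by
      simp [Q, natDegree_prod_of_monic _ (fun μ : ℂ => X - C μ) fun μ _ => monic_X_sub_C μ]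
    have hss : hfin.toFinset ⊆ P.roots.toFinset := fun z hz => by
      simpa [hP] using hsub (hfin.mem_toFinset.mp hz)
    have heq := Finset.eq_of_subset_of_card_le hss
      ((Multiset.toFinset_card_le _).trans ((card_roots' P).trans
        ((natDegree_le_natDegree hle).trans hdeg.le)))
    ext z
    rw [← hfin.mem_toFinset, heq]
    simp [hP]
  have hint := interior_eq_empty_of_frontier_subset_finite (spectrum.isCompact (𝕜 := ℂ) a) hfin
    (hStrongRiesz a)
  have hbrowder : ∀ z ∉ spectrum ℂ (T a),
      ∃ c d : A, algebraMap ℂ A z - a = c + d ∧ T c = 0 ∧ IsUnit d ∧ c * d = d * c := by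
    intro z hz
    have hacc : z ∉ closure (spectrum ℂ a \ {z}) := by
      intro hcl
      have hmem : z ∈ closure (spectrum ℂ a) := closure_mono Set.sdiff_subset hcl
      rcases hStrongRiesz a ⟨hmem, by rw [hint]; exact Set.notMem_empty z⟩ with h | h
      · exact hz h
      · exact h.2 hcl
    obtain ⟨r, hr, hball⟩ := Metric.nhds_basis_closedBall.mem_iff.mp
      (isClosed_closure.isOpen_compl.mem_nhds hacc)
    obtain ⟨p, hp, hu, hc⟩ := exists_isUnit_add T hTcont a hr (z := z) (fun w hw hwb => by
      by_contra hne
      exact hball hwb (subset_closure ⟨hw, hne⟩)) hz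
    refine ⟨-p, algebraMap ℂ A z - a + p, by abel, by simp [hp], hu, ?_⟩
    have : Commute p (algebraMap ℂ A z - a + p) :=
      ((Algebra.commute_algebraMap_right z p).sub_right hc.symm).add_right (Commute.refl p)
    exact this.neg_left
  have hweyl : ∀ z, (∃ c d : A, algebraMap ℂ A z - a = c + d ∧ T c = 0 ∧ IsUnit d) →
      z ∉ spectrum ℂ (T a) := by
    rintro z ⟨c, d, h, hc, hd⟩
    rw [spectrum.notMem_iff]
    have : algebraMap ℂ B z - T a = T d := by
      rw [← AlgHom.commutes T, ← map_sub, h, map_add, hc, zero_add]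
    rw [this]
    exact hd.map T
  refine ⟨hσ, ?_, ?_⟩
  · rw [← hσ]
    ext z
    refine ⟨fun h => by_contra fun hz => h ?_, fun hz h => hweyl z h hz⟩
    obtain ⟨c, d, h1, h2, h3, -⟩ := hbrowder z hz
    exact ⟨c, d, h1, h2, h3⟩
  · rw [← hσ]
    ext z
    refine ⟨fun h => by_contra fun hz => h (hbrowder z hz), ?_⟩
    rintro hz ⟨c, d, h1, h2, h3, -⟩
    exact hweyl z ⟨c, d, h1, h2, h3⟩ hz
end

section
/- Let A and B be unital complex C*-algebras and T : A → B a continuous unital algebra homomorphism satisfying the strong Riesz property. If a ∈ A is polynomially T-Riesz, then acc σ_A(a) ⊆ ω_T(a), i.e. every accumulation point of the spectrum of a lies in the T-Weyl spectrum of a. -/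
/-!
The polynomial hypothesis makes `spectrum ℂ (T a)` finite: by spectral mapping `P` sends it into
`spectrum ℂ (T (P(a))) ⊆ {0}`, so it consists of roots of `P`. The isolated points of
`spectrum ℂ a` form a countable set, hence the strong Riesz property makes the frontier of
`spectrum ℂ a` countable. A compact subset of the plane with countable frontier has empty interior,
because the complement of a countable set is connected and so cannot be split into the interior and
the exterior. Thus `spectrum ℂ a` equals its own frontier, and the strong Riesz property now says
that its accumulation points lie in `spectrum ℂ (T a)`. Finally, if `z - a = c + d` with `T c = 0`
and `d` invertible, then `z - T a = T d` is invertible, so `spectrum ℂ (T a)` is contained in the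
`T`-Weyl spectrum.
-/

theorem countable_isolated_points (S : Set ℂ) :
    (S \ {z : ℂ | z ∈ closure (S \ {z})}).Countable := by
  refine (HereditarilyLindelofSpace.isLindelof _).countable_of_isDiscrete
    (isDiscrete_iff_forall_mem_exists_isOpen.2 ?_)
  rintro y ⟨hyS, hy⟩
  refine ⟨(closure (S \ {y}))ᶜ, isClosed_closure.isOpen_compl, ?_⟩
  ext x
  constructor
  · rintro ⟨hx, hxS, -⟩
    by_contra hne
    exact hx (subset_closure ⟨hxS, hne⟩)
  · rintro rfl
    exact ⟨hy, hyS, hy⟩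

theorem interior_eq_empty_of_countable_frontier {K : Set ℂ} (hK : IsCompact K)
    (hF : (frontier K).Countable) : interior K = ∅ := by
  by_contra hne
  have hint : (interior K).Nonempty := Set.nonempty_iff_ne_empty.2 hne
  have hext : (Kᶜ).Nonempty := Set.nonempty_compl.2 hK.ne_univ
  have hconn : IsPreconnected (frontier K)ᶜ :=
    (hF.isConnected_compl_of_one_lt_rank
      (by rw [Complex.rank_real_complex]; norm_num)).isPreconnected
  have hcover : (frontier K)ᶜ ⊆ interior K ∪ Kᶜ := by
    rw [compl_frontier_eq_union_interior]
    exact Set.union_subset_union_right _ interior_subset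
  have h1 : ((frontier K)ᶜ ∩ interior K).Nonempty :=
    hint.mono fun x hx => ⟨fun h => h.2 hx, hx⟩
  have h2 : ((frontier K)ᶜ ∩ Kᶜ).Nonempty :=
    hext.mono fun x (hx : x ∉ K) => ⟨fun h => hx (hK.isClosed.frontier_subset h), hx⟩
  obtain ⟨x, -, hx, hx'⟩ :=
    hconn _ _ isOpen_interior hK.isClosed.isOpen_compl hcover h1 h2
  exact hx' (interior_subset hx)

theorem finite_spectrum_of_aeval_subset_zero {B : Type*} [Ring B] [Algebra ℂ B]
    {b : B} {P : Polynomial ℂ} (hP : P ≠ 0) (h : spectrum ℂ (Polynomial.aeval b P) ⊆ {0}) :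
    (spectrum ℂ b).Finite := by
  refine (P.rootSet_finite ℂ).subset fun z hz => ?_
  have h0 : P.eval z = 0 := h (spectrum.subset_polynomial_aeval b P ⟨z, hz, rfl⟩)
  rw [Polynomial.mem_rootSet]
  exact ⟨hP, by simpa using h0⟩


/-- If `T` has the strong Riesz property and `a` is polynomially `T`-Riesz, then
`acc σ_A(a) ⊆ ω_T(a)`. -/
theorem acc_spectrum_subset_weyl_of_polyTRiesz
    {A B : Type*}
    [NormedRing A] [StarRing A] [CStarRing A] [NormedAlgebra ℂ A]
    [CompleteSpace A] [StarModule ℂ A] [Nontrivial A]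
    [NormedRing B] [StarRing B] [CStarRing B] [NormedAlgebra ℂ B]
    [CompleteSpace B] [StarModule ℂ B] [Nontrivial B]
    (T : A →ₐ[ℂ] B) (hTcont : Continuous T)
    (hStrongRiesz : ∀ x : A, frontier (spectrum ℂ x) ⊆
      spectrum ℂ (T x) ∪
        (spectrum ℂ x \ {z : ℂ | z ∈ closure (spectrum ℂ x \ {z})}))
    (a : A) (ha : ∃ P : Polynomial ℂ, P ≠ 0 ∧
      spectrum ℂ (T (Polynomial.aeval a P)) ⊆ {0}) :
    {z : ℂ | z ∈ closure (spectrum ℂ a \ {z})} ⊆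
      {z : ℂ | ¬ ∃ c d : A, algebraMap ℂ A z - a = c + d ∧ T c = 0 ∧ IsUnit d} := by
  obtain ⟨P, hP0, hP⟩ := ha
  rw [← Polynomial.aeval_algHom_apply] at hP
  have hfin : (spectrum ℂ (T a)).Finite := finite_spectrum_of_aeval_subset_zero hP0 hP
  have hint : interior (spectrum ℂ a) = ∅ :=
    interior_eq_empty_of_countable_frontier (spectrum.isCompact a)
      ((hfin.countable.union (countable_isolated_points _)).mono (hStrongRiesz a))
  intro z hz
  have hzF : z ∈ frontier (spectrum ℂ a) := by
    rw [(spectrum.isClosed a).frontier_eq, hint, Set.sdiff_empty]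
    exact (spectrum.isClosed a).closure_subset_iff.2 Set.sdiff_subset hz
  rintro ⟨c, d, hcd, hc, hd⟩
  rcases hStrongRiesz a hzF with hzT | hziso
  · refine hzT ?_
    have hT : algebraMap ℂ B z - T a = T d := by
      rw [← AlgHom.commutes T z, ← map_sub, hcd, map_add, hc, zero_add]
    change IsUnit (algebraMap ℂ B z - T a)
    rw [hT]
    exact hd.map T
  · exact hziso.2 hz
end

section
/- Let A and B be unital complex C*-algebras and T : A → B a continuous unital algebra homomorphism satisfying the strong Riesz property. If a ∈ A has finite T-Weyl spectrum ω_T(a), then a admits a decomposition a = c + d + f where c is quasinilpotent (σ_A(c) = {0}), T d = 0, and σ_A(f) = ω_T(a). -/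
/-!
Write `W = σ(T a)`, a subset of the finite set `ω_T(a)`.

By the strong Riesz property and the connectedness of `ℂ \ W`, the points of `σ(a) \ W` are
isolated in `σ(a)` (`isolated_of_strongRiesz`). Each has a Riesz idempotent `p`
(`exists_isSpectralIdempotent`), and `T p = 0`
(`IsSpectralIdempotent.map_eq_zero`), because `T p` is an idempotent on which `T (a - z)` is both
invertible and quasinilpotent. It follows that `z - a` is `T`-Weyl for `z ∉ W`, so
`ω_T(a) = W`.

It remains to move the points of `σ(a) \ W` into `W` by an element of the kernel of `T`, which
is a version of West's decomposition. Enumerate these points as `λ_n`, with idempotents `p_n`,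
and let `ν_n` be a point of `W` nearest to `λ_n`; then `λ_n - ν_n → 0` (`finite_far`). Let
`q_n` be the range projection of `p_0 + ⋯ + p_{n-1}` (`exists_range_projection`) and put
`d = ∑ (λ_n - ν_n) (q_{n+1} - q_n)`. The series converges because the `q_{n+1} - q_n` are
orthogonal projections (`norm_sum_orthogonal_le`), and `T d = 0`.

The claim `σ(a - d) = W` is proved without a representation on a Hilbert space
(`exists_perturbation`). For `μ ∉ W` let `J` be the closed right ideal generated by
`g = a - d - μ`. Since `d p_n = (λ_n - ν_n) p_n` modulo `q_n A`, induction on `n` puts all `q_n`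
and `p_n` in `J`; then `d` and `a - μ` are in `J`, and finally so is `1`, as `a - μ` is right
invertible modulo at most one of the `p_k`. Hence `g` is right invertible, and connectedness of
`ℂ \ W` makes it invertible (`spectrum_subset_of_right_inverse`). The converse inclusion is
`σ(T (a - d)) ⊆ σ(a - d)`.

Finally `a - d` has finite spectrum `W`, so it differs from `f = ∑ w ∈ W, w p_w`, built from its
own Riesz idempotents, by a quasinilpotent element (`exists_finite_spectrum_part`).
-/

/-! ### Riesz idempotents by contour integration -/

section P1
variable {A : Type*} [NormedRing A] [NormedAlgebra ℂ A] [CompleteSpace A]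

/-- `p` behaves like the Riesz projection of `a` at the point `l`: it is idempotent, `a - l` is
invertible modulo `p`, and `a - m` is invertible on the range of `p` for every `m ≠ l`. Only
these algebraic consequences of the contour integral are recorded; `p = 0` is allowed, and
occurs when `l` is not in the spectrum. -/
structure IsSpectralIdempotent (a : A) (l : ℂ) (p : A) : Prop where
  idem : p * p = p
  outer : ∃ y : A, (a - algebraMap ℂ A l) * y = 1 - p ∧ y * (a - algebraMap ℂ A l) = 1 - p
  inner : ∀ m : ℂ, m ≠ l →
    ∃ v : A, (a - algebraMap ℂ A m) * v = p ∧ v * (a - algebraMap ℂ A m) = p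

open Metric

lemma clm_circleIntegral (L : A →L[ℂ] A) {f : ℂ → A} {c : ℂ} {ρ : ℝ}
    (hf : CircleIntegrable f c ρ) : L (∮ w in C(c, ρ), f w) = ∮ w in C(c, ρ), L (f w) := by
  simp only [circleIntegral]
  rw [← L.intervalIntegral_comp_comm hf.out]
  simp

omit [CompleteSpace A] in
lemma circleIntegrable_cauchy {R : ℂ → A} {c z : ℂ} {ρ : ℝ} (hρ : 0 ≤ ρ)
    (hR : ContinuousOn R (sphere c ρ)) (hz : z ∉ sphere c ρ) :
    CircleIntegrable (fun w => (w - z)⁻¹ • R w) c ρ := by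
  refine ContinuousOn.circleIntegrable hρ (ContinuousOn.smul (ContinuousOn.inv₀ (by fun_prop) ?_) hR)
  intro w hw h
  rw [sub_eq_zero] at h
  exact hz (h ▸ hw)

/-- If `R w` inverts `L` up to the resolvent identity on a circle, then `L` applied to the Cauchy
integral of `R` at `z` is the winding number term minus `∮ R`. For left and right
multiplication by `z - a` this produces inverses modulo the Riesz projection. -/
lemma clm_cauchy_resolvent (L : A →L[ℂ] A) {R : ℂ → A} {c z : ℂ} {ρ : ℝ} (hρ : 0 ≤ ρ)
    (hR : ContinuousOn R (sphere c ρ)) (hz : z ∉ sphere c ρ)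
    (hL : ∀ w ∈ sphere c ρ, L (R w) = 1 - (w - z) • R w) :
    L (∮ w in C(c, ρ), (w - z)⁻¹ • R w) =
      (∮ w in C(c, ρ), (w - z)⁻¹) • (1 : A) - ∮ w in C(c, ρ), R w := by
  rw [clm_circleIntegral L (circleIntegrable_cauchy hρ hR hz),
    ← circleIntegral.integral_smul_const, ← circleIntegral.integral_sub]
  · refine circleIntegral.integral_congr hρ fun w hw => ?_
    have : w - z ≠ 0 := fun h => hz ((sub_eq_zero.1 h) ▸ hw)
    simp [hL w hw, smul_sub, smul_smul, this]
  · exact circleIntegrable_cauchy (R := fun _ => (1 : A)) hρ continuousOn_const hz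
  · exact hR.circleIntegrable hρ

/-- Riesz projection: a point `l` with a punctured disc free of spectrum has a spectral
idempotent, `(2πi)⁻¹ ∮ (w - a)⁻¹`. The inverses modulo it are the Cauchy integrals of the
resolvent evaluated inside, respectively outside, the contour. -/
lemma exists_isSpectralIdempotent (a : A) (l : ℂ) {r : ℝ} (hr : 0 < r)
    (hU : ∀ z : ℂ, z ≠ l → ‖z - l‖ ≤ r → z ∉ spectrum ℂ a) :
    ∃ p, IsSpectralIdempotent a l p := by
  set R : ℂ → A := resolvent a with hRdef
  have hU' : ∀ z : ℂ, z ≠ l → ‖z - l‖ ≤ r → IsUnit (algebraMap ℂ A z - a) := fun z h1 h2 => by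
    simpa [spectrum.mem_iff] using hU z h1 h2
  have hd : ∀ z : ℂ, z ≠ l → ‖z - l‖ ≤ r → DifferentiableAt ℂ R z := fun z h1 h2 =>
    (spectrum.hasDerivAt_resolvent_const_left (by simpa [spectrum] using hU z h1 h2)).differentiableAt
  have hc : ∀ ρ : ℝ, 0 < ρ → ρ ≤ r → ContinuousOn R (sphere l ρ) := by
    intro ρ h0 h1 z hz
    rw [mem_sphere_iff_norm] at hz
    refine (hd z ?_ (hz.trans_le h1)).continuousAt.continuousWithinAt
    rintro rfl
    simp at hz; linarith
  have hl : ∀ ρ : ℝ, 0 < ρ → ρ ≤ r → ∀ z w, w ∈ sphere l ρ →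
      (algebraMap ℂ A z - a) * R w = 1 - (w - z) • R w := by
    intro ρ h0 h1 z w hw
    rw [mem_sphere_iff_norm] at hw
    have := Ring.mul_inverse_cancel _ (hU' w (by rintro rfl; simp at hw; linarith) (hw.trans_le h1))
    change _ * R w = 1 at this
    rw [← this, Algebra.smul_def, ← sub_mul]
    congr 1
    rw [map_sub]; abel
  have hrr : ∀ ρ : ℝ, 0 < ρ → ρ ≤ r → ∀ z w, w ∈ sphere l ρ →
      R w * (algebraMap ℂ A z - a) = 1 - (w - z) • R w := by
    intro ρ h0 h1 z w hw
    rw [mem_sphere_iff_norm] at hw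
    have := Ring.inverse_mul_cancel _ (hU' w (by rintro rfl; simp at hw; linarith) (hw.trans_le h1))
    change R w * _ = 1 at this
    rw [← this, Algebra.smul_def, (Algebra.commutes (w - z) (R w)), ← mul_sub]
    congr 1
    rw [map_sub]; abel
  -- Cauchy theorem on an annulus: the integral of the resolvent is independent of the radius.
  have hrad : ∀ ρ : ℝ, 0 < ρ → ρ ≤ r → (∮ w in C(l, ρ), R w) = ∮ w in C(l, r), R w := by
    intro ρ h0 h1
    symm
    refine Complex.circleIntegral_eq_of_differentiable_on_annulus_off_countable h0 h1
      Set.countable_empty ?_ ?_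
    · intro z hz
      refine (hd z ?_ ?_).continuousAt.continuousWithinAt
      · rintro rfl; simp [h0] at hz
      · have := hz.1
        rwa [mem_closedBall_iff_norm] at this
    · intro z hz
      refine hd z ?_ ?_
      · rintro rfl; simp [h0.le] at hz
      · have := hz.1.1
        rw [mem_ball_iff_norm] at this
        exact this.le
  set q : ℂ := (2 * Real.pi * Complex.I)⁻¹ with hq
  have hq0 : (2 * Real.pi * Complex.I : ℂ) ≠ 0 := by simp [Real.pi_ne_zero]
  set p : A := q • ∮ w in C(l, r), R w with hp
  set I : ℝ → ℂ → A := fun ρ z => q • ∮ w in C(l, ρ), (w - z)⁻¹ • R w with hI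
  have key : ∀ ρ : ℝ, 0 < ρ → ρ ≤ r → ∀ z, z ∉ sphere l ρ →
      (algebraMap ℂ A z - a) * I ρ z = (q * ∮ w in C(l, ρ), (w - z)⁻¹) • (1 : A) - p ∧
      I ρ z * (algebraMap ℂ A z - a) = (q * ∮ w in C(l, ρ), (w - z)⁻¹) • (1 : A) - p := by
    intro ρ h0 h1 z hz
    have e1 := clm_cauchy_resolvent (ContinuousLinearMap.mul ℂ A (algebraMap ℂ A z - a)) h0.le
      (hc ρ h0 h1) hz (fun w hw => hl ρ h0 h1 z w hw)
    have e2 := clm_cauchy_resolvent ((ContinuousLinearMap.mul ℂ A).flip (algebraMap ℂ A z - a)) h0.le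
      (hc ρ h0 h1) hz (fun w hw => hrr ρ h0 h1 z w hw)
    simp only [ContinuousLinearMap.mul_apply', ContinuousLinearMap.flip_apply] at e1 e2
    rw [hrad ρ h0 h1] at e1 e2
    constructor
    · rw [hI, mul_smul_comm, e1, smul_sub, smul_smul]
    · rw [hI, smul_mul_assoc, e2, smul_sub, smul_smul]
  have hin : ∀ z, ‖z - l‖ < r → (algebraMap ℂ A z - a) * I r z = 1 - p ∧
      I r z * (algebraMap ℂ A z - a) = 1 - p := by
    intro z hz
    have := key r hr le_rfl z (by rw [mem_sphere_iff_norm]; exact hz.ne)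
    rw [circleIntegral.integral_sub_inv_of_mem_ball (by rwa [mem_ball_iff_norm]), hq,
      inv_mul_cancel₀ hq0, one_smul] at this
    exact this
  have hout : ∀ ρ : ℝ, 0 < ρ → ρ ≤ r → ∀ z, ρ < ‖z - l‖ → (algebraMap ℂ A z - a) * I ρ z = - p ∧
      I ρ z * (algebraMap ℂ A z - a) = - p := by
    intro ρ h0 h1 z hz
    have := key ρ h0 h1 z (by rw [mem_sphere_iff_norm]; exact hz.ne')
    have h0 : (∮ w in C(l, ρ), (w - z)⁻¹) = 0 := by
      refine DiffContOnCl.circleIntegral_eq_zero h0.le (DifferentiableOn.diffContOnCl ?_)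
      intro w hw
      have hw' : w ∈ closedBall l ρ := closure_ball_subset_closedBall hw
      have : w - z ≠ 0 := by
        intro h
        rw [sub_eq_zero] at h
        rw [mem_closedBall_iff_norm, h] at hw'
        linarith
      exact (DifferentiableAt.fun_inv (differentiableAt_id.sub_const z) this).differentiableWithinAt
    rw [h0] at this
    simpa using this
  refine ⟨p, ?_, ?_, ?_⟩
  · -- On a smaller circle, `R z (1 - p)` equals the Cauchy integral `I r z`, which is holomorphic
    -- in the disc; integrating gives `p (1 - p) = 0`.
    have hH : DifferentiableOn ℂ (I r) (ball l r) := by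
      have := (hasFPowerSeriesOn_cauchy_integral (f := R) (c := l) (R := ⟨r, hr.le⟩)
        ((hc r hr le_rfl).circleIntegrable hr.le) (by exact_mod_cast hr)).differentiableOn
      rw [← Metric.eball_ofReal, ENNReal.ofReal_eq_coe_nnreal hr.le]
      exact this
    have h2 : 0 < r / 2 := by linarith
    have h3 : r / 2 ≤ r := by linarith
    have hI_zero : (∮ z in C(l, r / 2), I r z) = 0 := by
      refine DiffContOnCl.circleIntegral_eq_zero h2.le (DifferentiableOn.diffContOnCl ?_)
      refine hH.mono (closure_ball_subset_closedBall.trans (closedBall_subset_ball (by linarith)))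
    have e : p * (1 - p) = 0 := by
      have := clm_circleIntegral ((ContinuousLinearMap.mul ℂ A).flip (1 - p))
        ((hc _ h2 h3).circleIntegrable h2.le)
      simp only [ContinuousLinearMap.mul_apply', ContinuousLinearMap.flip_apply] at this
      rw [hp, ← hrad _ h2 h3, smul_mul_assoc, hrad _ h2 h3, ← hp, ← hrad _ h2 h3, this]
      rw [circleIntegral.integral_congr h2.le (g := I r), hI_zero, smul_zero]
      intro z hz
      rw [mem_sphere_iff_norm] at hz
      change R z * (1 - p) = I r z
      rw [← (hin z (by linarith)).1, ← mul_assoc]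
      have := Ring.inverse_mul_cancel _ (hU' z (by rintro rfl; simp at hz; linarith) (hz.trans_le h3))
      change R z * _ = 1 at this
      rw [this, one_mul]
    rw [mul_sub, mul_one, sub_eq_zero] at e
    exact e.symm
  · refine ⟨- I r l, ?_, ?_⟩
    · rw [← (hin l (by simpa using hr)).1, mul_neg, ← neg_mul, neg_sub]
    · rw [← (hin l (by simpa using hr)).2, neg_mul, ← mul_neg, neg_sub]
  · intro m hm
    have hm' : 0 < ‖m - l‖ := norm_pos_iff.2 (sub_ne_zero.2 hm)
    obtain ⟨h1, h2⟩ := hout (min r (‖m - l‖ / 2)) (lt_min hr (by linarith)) (min_le_left _ _) m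
      ((min_le_right _ _).trans_lt (by linarith))
    refine ⟨I (min r (‖m - l‖ / 2)) m, ?_, ?_⟩
    · rw [← neg_sub (algebraMap ℂ A m), neg_mul, h1, neg_neg]
    · rw [← neg_sub (algebraMap ℂ A m), mul_neg, h2, neg_neg]
end P1

/-! ### Quasinilpotent elements and spectral idempotents -/

section P2
variable {A : Type*} [NormedRing A] [NormedAlgebra ℂ A] [CompleteSpace A]

/-- Quasinilpotence, phrased as invertibility of `t - m` for `m ≠ 0`, that is `σ(t) ⊆ {0}`. -/
def IsQuasinilpotent (t : A) : Prop := ∀ m : ℂ, m ≠ 0 → IsUnit (t - algebraMap ℂ A m)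

lemma IsQuasinilpotent.spectrum_eq [Nontrivial A] {t : A} (ht : IsQuasinilpotent t) :
    spectrum ℂ t = {0} := by
  have h : spectrum ℂ t ⊆ {0} := by
    intro z hz
    by_contra hz0
    rw [spectrum.mem_iff, ← neg_sub, IsUnit.neg_iff] at hz
    exact hz (ht z hz0)
  exact (Set.subset_singleton_iff_eq.1 h).resolve_left (spectrum.nonempty t).ne_empty

/-- Iterating `b = t b s` gives `b = tⁿ b sⁿ`, and `‖tⁿ‖` decays faster than any geometric
sequence by the spectral radius formula. -/
lemma IsQuasinilpotent.eq_zero_of_eq_mul [Nontrivial A] {t b s : A} (ht : IsQuasinilpotent t)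
    (hb : b = t * b * s) : b = 0 := by
  have hpow : ∀ n : ℕ, b = t ^ n * b * s ^ n := by
    intro n
    induction n with
    | zero => simp
    | succ n ih =>
      calc b = t ^ n * (t * b * s) * s ^ n := by rw [← hb]; exact ih
        _ = _ := by rw [pow_succ, pow_succ' s]; simp only [mul_assoc]
  have hlim := spectrum.pow_norm_pow_one_div_tendsto_nhds_spectralRadius t
  have hr : spectralRadius ℂ t = 0 := by
    simp [spectralRadius, ht.spectrum_eq]
  rw [hr] at hlim
  -- Eventually `‖tⁿ‖ ≤ εⁿ` for an `ε` chosen so that `ε (‖s‖ + 1) = 1 / 2`.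
  have hε : 0 < (2 * (‖s‖ + 1))⁻¹ := by positivity
  have hev := hlim.eventually (gt_mem_nhds (ENNReal.ofReal_pos.2 hε))
  have hgeom : Filter.Tendsto (fun n : ℕ => (1 / 2 : ℝ) ^ n * ‖b‖) Filter.atTop (nhds 0) := by
    simpa using (tendsto_pow_atTop_nhds_zero_of_lt_one (r := (1 / 2 : ℝ)) (by norm_num) (by norm_num)).mul_const ‖b‖
  refine norm_le_zero_iff.1 (ge_of_tendsto hgeom ?_)
  filter_upwards [hev, Filter.eventually_gt_atTop 0] with n hn hn0
  rw [ENNReal.ofReal_lt_ofReal_iff hε] at hn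
  have h1 : ‖t ^ n‖ ≤ ((2 * (‖s‖ + 1))⁻¹) ^ n := by
    have := pow_le_pow_left₀ (by positivity) hn.le n
    rwa [← Real.rpow_natCast, ← Real.rpow_mul (norm_nonneg _), one_div,
      inv_mul_cancel₀ (by exact_mod_cast hn0.ne'), Real.rpow_one] at this
  have h2 : ‖s ^ n‖ ≤ (‖s‖ + 1) ^ n :=
    (norm_pow_le' s hn0).trans (pow_le_pow_left₀ (norm_nonneg _) (by linarith) n)
  calc ‖b‖ = ‖t ^ n * b * s ^ n‖ := by rw [← hpow n]
    _ ≤ ‖t ^ n‖ * ‖b‖ * ‖s ^ n‖ := by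
        refine (norm_mul_le _ _).trans ?_
        gcongr
        exact norm_mul_le _ _
    _ ≤ ((2 * (‖s‖ + 1))⁻¹) ^ n * ‖b‖ * (‖s‖ + 1) ^ n := by gcongr
    _ = (1 / 2) ^ n * ‖b‖ := by
        have : (‖s‖ + 1) ≠ 0 := by positivity
        rw [mul_right_comm, ← mul_pow]
        congr 2
        field_simp

omit [CompleteSpace A] in
/-- If `g` commutes with the idempotent `p` and `g - m` is invertible on the range of `p`, then
`g p - m` is invertible for `m ≠ 0`, because it acts as `-m` on the complement. -/
lemma isUnit_mul_sub {g p : A} (hp : p * p = p) (hc : g * p = p * g) {m : ℂ} (hm : m ≠ 0)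
    {u w : A} (hu : p * (g - algebraMap ℂ A m) * u = p) (hw : w * (g - algebraMap ℂ A m) * p = p) :
    IsUnit (g * p - algebraMap ℂ A m) := by
  have hm' : ∀ x : A, algebraMap ℂ A m * x = x * algebraMap ℂ A m := fun x => Algebra.commutes m x
  have hmi : algebraMap ℂ A m * algebraMap ℂ A m⁻¹ = 1 := by
    rw [← map_mul, mul_inv_cancel₀ hm, map_one]
  have hmi' : algebraMap ℂ A m⁻¹ * algebraMap ℂ A m = 1 := by
    rw [← map_mul, inv_mul_cancel₀ hm, map_one]
  generalize algebraMap ℂ A m = M at *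
  generalize algebraMap ℂ A m⁻¹ = N at *
  have hr : (g * p - M) * (p * u - (1 - p) * N) = 1 := by
    have : (g * p - M) * (p * u - (1 - p) * N) =
      (g * p * p * u - M * p * u) - g * (p - p * p) * N + M * N - M * p * N := by noncomm_ring
    rw [this, hp, mul_assoc g p p, hp, hmi, hm' p, mul_assoc p M N, hmi, hc]
    rw [mul_sub, sub_mul] at hu
    rw [hu]; noncomm_ring
  have hl : (w * p - N * (1 - p)) * (g * p - M) = 1 := by
    have : (w * p - N * (1 - p)) * (g * p - M) =
      (w * (p * g) * p - w * (p * M)) - N * g * p + N * (p * g) * p + N * M - N * (p * M) := by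
      noncomm_ring
    rw [this, ← hm' p, ← hc, mul_assoc w, mul_assoc g p p, hp, mul_assoc N (g * p) p,
      mul_assoc g p p, hp, ← mul_assoc N M p, hmi']
    rw [mul_sub, sub_mul] at hw
    rw [← mul_assoc w, ← mul_assoc w, hw]; noncomm_ring
  exact ⟨⟨_, _, hr, left_inv_eq_right_inv hl hr ▸ hl⟩, rfl⟩

namespace IsSpectralIdempotent
variable {a p : A} {l : ℂ}

omit [CompleteSpace A] in
lemma comm (h : IsSpectralIdempotent a l p) : a * p = p * a := by
  obtain ⟨y, h1, h2⟩ := h.outer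
  have e1 : p = 1 - (a - algebraMap ℂ A l) * y := by rw [h1]; abel
  have e2 : p = 1 - y * (a - algebraMap ℂ A l) := by rw [h2]; abel
  have e3 : (a - algebraMap ℂ A l) * p = p * (a - algebraMap ℂ A l) := by
    conv_lhs => rw [e2]
    conv_rhs => rw [e1]
    noncomm_ring
  rw [sub_mul, mul_sub, Algebra.commutes l p] at e3
  exact sub_left_injective e3

omit [CompleteSpace A] in
lemma comm_sub (h : IsSpectralIdempotent a l p) (m : ℂ) :
    (a - algebraMap ℂ A m) * p = p * (a - algebraMap ℂ A m) := by
  rw [sub_mul, mul_sub, Algebra.commutes m p, h.comm]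

omit [CompleteSpace A] in
lemma quasinilpotent (h : IsSpectralIdempotent a l p) :
    IsQuasinilpotent ((a - algebraMap ℂ A l) * p) := by
  intro m hm
  obtain ⟨v, h1, h2⟩ := h.inner (l + m) (by simpa using hm)
  have e : a - algebraMap ℂ A l - algebraMap ℂ A m = a - algebraMap ℂ A (l + m) := by
    rw [map_add]; abel
  refine isUnit_mul_sub h.idem (h.comm_sub l) hm (u := v) (w := v) ?_ ?_
  · rw [e, mul_assoc, h1, h.idem]
  · rw [e, h2, h.idem]

/-- Spectral idempotents at distinct points are orthogonal: with `v` an inverse of `a - s` on the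
range of `q`, one has `p q = ((a - s) p) (p q) v` with `(a - s) p` quasinilpotent. -/
lemma mul_eq_zero [Nontrivial A] {s t : ℂ} {p q : A} (hp : IsSpectralIdempotent a s p)
    (hq : IsSpectralIdempotent a t q) (hst : s ≠ t) : p * q = 0 := by
  obtain ⟨v, h1, -⟩ := hq.inner s hst
  refine hp.quasinilpotent.eq_zero_of_eq_mul (s := v) ?_
  calc p * q = p * (q * q) := by rw [hq.idem]
    _ = p * (q * (a - algebraMap ℂ A s)) * v := by
      rw [mul_assoc, mul_assoc, h1, ]
    _ = p * (a - algebraMap ℂ A s) * q * v := by rw [← hq.comm_sub]; simp only [mul_assoc]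
    _ = (a - algebraMap ℂ A s) * p * (p * q) * v := by
      rw [← hp.comm_sub, mul_assoc _ p (p * q), ← mul_assoc p p q, hp.idem]
      simp only [mul_assoc]

omit [CompleteSpace A] in
/-- If `l` is outside the spectrum of `T a`, then `T` kills `p`: `T ((a - l) p)` is
quasinilpotent, while `T (a - l)` is invertible. -/
lemma map_eq_zero [Nontrivial A] {B : Type*} [NormedRing B] [NormedAlgebra ℂ B] [CompleteSpace B]
    [Nontrivial B] (T : A →ₐ[ℂ] B) (h : IsSpectralIdempotent a l p) (hl : l ∉ spectrum ℂ (T a)) :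
    T p = 0 := by
  have ht : IsQuasinilpotent (T ((a - algebraMap ℂ A l) * p)) := fun m hm => by
    simpa using (h.quasinilpotent m hm).map T
  rw [spectrum.notMem_iff, ← neg_sub, IsUnit.neg_iff] at hl
  obtain ⟨u, hu⟩ := hl
  refine ht.eq_zero_of_eq_mul (s := ↑u⁻¹) ?_
  have e : T ((a - algebraMap ℂ A l) * p) * T p = T p * u := by
    rw [← map_mul, mul_assoc, h.idem, h.comm_sub, map_mul, hu, map_sub, AlgHom.commutes]
  rw [e, mul_assoc, Units.mul_inv, mul_one]

end IsSpectralIdempotent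

/-- An element with finite spectrum `s` is the sum of a quasinilpotent element and of
`f = ∑ i ∈ s, i p_i`, where `p_i` are its spectral idempotents. -/
lemma exists_finite_spectrum_part [Nontrivial A] (a : A) (s : Finset ℂ) (hs : spectrum ℂ a = s) :
    ∃ f : A, IsQuasinilpotent (a - f) ∧ spectrum ℂ f = s := by
  classical
  have hex : ∀ l : ℂ, ∃ p, IsSpectralIdempotent a l p := by
    intro l
    have hfin : IsClosed (((s.erase l : Finset ℂ)) : Set ℂ) := (Finset.finite_toSet _).isClosed
    obtain ⟨r, hr, hb⟩ := Metric.isOpen_iff.1 hfin.isOpen_compl l (by simp)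
    refine exists_isSpectralIdempotent a l (r := r / 2) (by linarith) fun z hz hzr hmem => ?_
    have := hb (a := z) (by rw [mem_ball_iff_norm]; linarith)
    rw [hs] at hmem
    exact this (by simpa [hz] using hmem)
  choose P hP using hex
  have horth : ∀ i j, i ≠ j → P i * P j = 0 := fun i j hij => (hP i).mul_eq_zero (hP j) hij
  have hPS : ∀ i ∈ s, P i * ∑ j ∈ s, P j = P i := by
    intro i hi
    rw [Finset.mul_sum, Finset.sum_eq_single i (fun j _ hji => horth i j hji.symm)
      (fun h => absurd hi h), (hP i).idem]
  have hSP : ∀ i ∈ s, (∑ j ∈ s, P j) * P i = P i := by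
    intro i hi
    rw [Finset.sum_mul, Finset.sum_eq_single i (fun j _ hji => horth j i hji)
      (fun h => absurd hi h), (hP i).idem]
  -- The complementary idempotent `e` is zero: `(a - l) e` is quasinilpotent since `a - m` is
  -- invertible on the range of `e` for every `m`, and in particular `a - l` is.
  have hsum : ∑ i ∈ s, P i = 1 := by
    obtain ⟨l, hl⟩ := spectrum.nonempty a
    rw [hs] at hl
    set e := 1 - ∑ i ∈ s, P i with he
    have hPe : ∀ i ∈ s, P i * e = 0 := fun i hi => by rw [he, mul_sub, hPS i hi]; simp
    have heP : ∀ i ∈ s, e * P i = 0 := fun i hi => by rw [he, sub_mul, hSP i hi]; simp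
    have hee : e * e = e := by
      conv_lhs => rw [he, sub_mul, one_mul, Finset.sum_mul, Finset.sum_eq_zero hPe, sub_zero]
    have hea : ∀ m, (a - algebraMap ℂ A m) * e = e * (a - algebraMap ℂ A m) := by
      intro m
      rw [he, mul_sub, mul_one, Finset.mul_sum, sub_mul (1 : A), one_mul, Finset.sum_mul,
        Finset.sum_congr rfl fun i _ => (hP i).comm_sub m]
    have hq : IsQuasinilpotent ((a - algebraMap ℂ A l) * e) := by
      intro m hm
      have e1 : a - algebraMap ℂ A l - algebraMap ℂ A m = a - algebraMap ℂ A (l + m) := by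
        rw [map_add]; abel
      by_cases hμ : l + m ∈ s
      · obtain ⟨y, h1, h2⟩ := (hP (l + m)).outer
        refine isUnit_mul_sub hee (hea l) hm (u := y) (w := y) ?_ ?_
        · rw [e1, mul_assoc, h1, mul_sub, heP _ hμ]; simp
        · rw [e1, h2, sub_mul, hPe _ hμ]; simp
      · have hu : l + m ∉ spectrum ℂ a := by rw [hs]; exact hμ
        rw [spectrum.notMem_iff, ← neg_sub, IsUnit.neg_iff] at hu
        obtain ⟨u, hu⟩ := hu
        refine isUnit_mul_sub hee (hea l) hm (u := ↑u⁻¹) (w := ↑u⁻¹) ?_ ?_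
        · rw [e1, ← hu]; simp [mul_assoc]
        · rw [e1, ← hu]; simp
    obtain ⟨y, h1, h2⟩ := (hP l).outer
    have : e = 0 := by
      refine hq.eq_zero_of_eq_mul (s := y) ?_
      rw [mul_assoc _ e e, hee, hea, mul_assoc, h1, mul_sub, heP l hl]; simp
    rw [he, sub_eq_zero] at this
    exact this.symm
  have hPf : ∀ i ∈ s, P i * ∑ j ∈ s, algebraMap ℂ A j * P j = algebraMap ℂ A i * P i := by
    intro i hi
    have : ∀ j, P i * (algebraMap ℂ A j * P j) = algebraMap ℂ A j * (P i * P j) := by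
      intro j; rw [← mul_assoc, ← Algebra.commutes j (P i), mul_assoc]
    simp only [Finset.mul_sum, this]
    rw [Finset.sum_eq_single i (fun j _ hji => by rw [horth i j hji.symm, mul_zero])
      (fun h => absurd hi h), (hP i).idem]
  have hfP : ∀ i ∈ s, (∑ j ∈ s, algebraMap ℂ A j * P j) * P i = algebraMap ℂ A i * P i := by
    intro i hi
    rw [Finset.sum_mul, Finset.sum_eq_single i
      (fun j _ hji => by rw [mul_assoc, horth j i hji, mul_zero])
      (fun h => absurd hi h), mul_assoc, (hP i).idem]
  set f := ∑ j ∈ s, algebraMap ℂ A j * P j with hf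
  refine ⟨f, ?_, ?_⟩
  · intro m hm
    have hu := fun i => (hP i).quasinilpotent m hm
    choose u hu using hu
    -- The inverse of `a - f - m` is assembled from the inverses on the ranges of the `P i`.
    have hr : (a - f - algebraMap ℂ A m) * (∑ i ∈ s, P i * ↑(u i)⁻¹) = 1 := by
      rw [Finset.mul_sum, ← hsum]
      refine Finset.sum_congr rfl fun i hi => ?_
      have : (a - f - algebraMap ℂ A m) * P i = P i * (u i : A) := by
        rw [hu, sub_mul, sub_mul, hfP i hi, mul_sub, ← mul_assoc, ← (hP i).comm_sub, mul_assoc,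
          (hP i).idem, sub_mul, Algebra.commutes m (P i)]
      rw [← mul_assoc, this, mul_assoc, Units.mul_inv, mul_one]
    have hl : (∑ i ∈ s, ↑(u i)⁻¹ * P i) * (a - f - algebraMap ℂ A m) = 1 := by
      rw [Finset.sum_mul, ← hsum]
      refine Finset.sum_congr rfl fun i hi => ?_
      have : P i * (a - f - algebraMap ℂ A m) = (u i : A) * P i := by
        rw [hu, mul_sub, mul_sub, hPf i hi, sub_mul, mul_assoc, (hP i).idem, sub_mul, (hP i).comm,
          Algebra.commutes m (P i)]
      rw [mul_assoc, this, ← mul_assoc, Units.inv_mul, one_mul]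
    exact ⟨⟨_, _, hr, left_inv_eq_right_inv hl hr ▸ hl⟩, rfl⟩
  · ext z
    constructor
    · intro hz
      by_contra hzs
      rw [spectrum.mem_iff] at hz
      apply hz
      have hne : ∀ i ∈ s, z - i ≠ 0 := fun i hi h => hzs (by rw [sub_eq_zero.1 h]; exact hi)
      have hr : (algebraMap ℂ A z - f) * (∑ i ∈ s, P i * algebraMap ℂ A (z - i)⁻¹) = 1 := by
        rw [Finset.mul_sum, ← hsum]
        refine Finset.sum_congr rfl fun i hi => ?_
        rw [← mul_assoc, sub_mul, hfP i hi, ← sub_mul, ← map_sub, Algebra.commutes, mul_assoc,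
          ← map_mul, mul_inv_cancel₀ (hne i hi), map_one, mul_one]
      have hl : (∑ i ∈ s, algebraMap ℂ A (z - i)⁻¹ * P i) * (algebraMap ℂ A z - f) = 1 := by
        rw [Finset.sum_mul, ← hsum]
        refine Finset.sum_congr rfl fun i hi => ?_
        rw [mul_assoc, mul_sub, hPf i hi, ← Algebra.commutes z, ← sub_mul, ← map_sub, ← mul_assoc,
          ← map_mul, inv_mul_cancel₀ (hne i hi), map_one, one_mul]
      exact ⟨⟨_, _, hr, left_inv_eq_right_inv hl hr ▸ hl⟩, rfl⟩
    · intro hz hu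
      -- `P z = 0`, so `a - z` would be invertible
      have h0 : (algebraMap ℂ A z - f) * P z = 0 := by rw [sub_mul, hfP z hz, sub_self]
      have hPz : P z = 0 := (IsUnit.mul_right_eq_zero hu).1 h0
      obtain ⟨y, h1, h2⟩ := (hP z).outer
      rw [hPz, sub_zero] at h1 h2
      have : z ∈ spectrum ℂ a := by rw [hs]; exact hz
      rw [spectrum.mem_iff, ← neg_sub, IsUnit.neg_iff] at this
      exact this ⟨⟨_, y, h1, h2⟩, rfl⟩
end P2

/-! ### Range projections and the perturbation -/

section P3
variable {A : Type*} [NormedRing A] [StarRing A] [CStarRing A] [NormedAlgebra ℂ A]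
  [CompleteSpace A] [StarModule ℂ A]

/-- Every idempotent `P` of a C⋆-algebra has a range projection `q`, a self-adjoint element with
`q A = P A`. The formula of Kaplansky: `q = P P⋆ (1 + (P - P⋆)⋆ (P - P⋆))⁻¹`. -/
lemma exists_range_projection (P : A) (hP : P * P = P) :
    ∃ q : A, star q = q ∧ q * P = P ∧ P * q = q := by
  let _ : CStarAlgebra A := {}
  have hu : IsUnit (1 + star (P - star P) * (P - star P)) := by
    by_contra h
    have h1 : (-1 : ℝ) ∈ spectrum ℝ (star (P - star P) * (P - star P)) := by
      rw [spectrum.mem_iff, ← IsUnit.neg_iff]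
      convert h using 2
      simp; abel
    have := spectrum_star_mul_self_nonneg (b := P - star P) _ h1
    linarith
  have hP' : star P * star P = star P := by rw [← star_mul, hP]
  have hh : 1 + star (P - star P) * (P - star P) = 1 - P - star P + P * star P + star P * P := by
    have : star (P - star P) * (P - star P) =
        star P * P + P * star P - P * P - star P * star P := by
      rw [star_sub, star_star]; noncomm_ring
    rw [this, hP, hP']; abel
  obtain ⟨u, hu⟩ := hu
  rw [hh] at hu
  have hPu : P * u = P * star P * P := by
    rw [hu]
    have : P * (1 - P - star P + P * star P + star P * P) =
      P - P * P - P * star P + P * P * star P + P * star P * P := by noncomm_ring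
    rw [this, hP]; abel
  have huP : u * P = P * star P * P := by
    rw [hu]
    have : (1 - P - star P + P * star P + star P * P) * P =
      P - P * P - star P * P + star P * (P * P) + P * star P * P := by noncomm_ring
    rw [this, hP]; abel
  have hus : star (u : A) = u := by
    rw [hu]; simp only [star_add, star_sub, star_mul, star_star, star_one]; abel
  have hc : Commute (P : A) (↑u⁻¹ : A) := by
    refine Commute.units_inv_right ?_
    change P * u = u * P
    rw [hPu, huP]
  have hsi : star (↑u⁻¹ : A) = ↑u⁻¹ := by
    rw [← Units.coe_star_inv]
    congr 1
    rw [inv_inj]; ext; exact hus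
  have hc' : Commute (star P : A) (↑u⁻¹ : A) := by
    have := hc.star_star
    rwa [hsi] at this
  refine ⟨P * star P * ↑u⁻¹, ?_, ?_, ?_⟩
  · rw [star_mul, star_mul, star_star, hsi, ← mul_assoc, ← hc.eq, mul_assoc, ← hc'.eq, mul_assoc]
  · rw [mul_assoc, ← hc.eq, ← mul_assoc, ← hPu, mul_assoc, Units.mul_inv, mul_one]
  · rw [← mul_assoc, ← mul_assoc, hP]

/-- A combination of pairwise orthogonal projections is bounded in norm by the supremum of its
coefficients. -/
lemma norm_sum_orthogonal_le {r : ℕ → A} (hs : ∀ i, star (r i) = r i) (hi : ∀ i, r i * r i = r i)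
    (ho : ∀ i j, i ≠ j → r i * r j = 0) (α : ℕ → ℂ) (t : Finset ℕ) {M : ℝ} (hM : 0 ≤ M)
    (hα : ∀ i ∈ t, ‖α i‖ ≤ M) : ‖∑ i ∈ t, α i • r i‖ ≤ M := by
  classical
  rcases subsingleton_or_nontrivial A with hA | hA
  · rw [Subsingleton.elim (∑ i ∈ t, α i • r i) 0, norm_zero]; exact hM
  let _ : CStarAlgebra A := {}
  let _ := CStarAlgebra.spectralOrder A
  have := CStarAlgebra.spectralOrderedRing A
  have hprod : ∀ β γ : ℕ → ℂ, (∑ i ∈ t, β i • r i) * (∑ i ∈ t, γ i • r i) =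
      ∑ i ∈ t, (β i * γ i) • r i := by
    intro β γ
    rw [Finset.sum_mul]
    refine Finset.sum_congr rfl fun i hit => ?_
    rw [Finset.mul_sum, Finset.sum_eq_single i]
    · rw [smul_mul_smul_comm, hi]
    · intro j _ hji
      rw [smul_mul_smul_comm, ho i j hji.symm, smul_zero]
    · exact fun h => absurd hit h
  have hstar : ∀ β : ℕ → ℂ, star (∑ i ∈ t, β i • r i) = ∑ i ∈ t, (star (β i)) • r i := by
    intro β
    rw [star_sum]
    exact Finset.sum_congr rfl fun i _ => by rw [star_smul, hs]
  set s := ∑ i ∈ t, α i • r i with hsdef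
  have hss : star s * s = ∑ i ∈ t, ((‖α i‖ ^ 2 : ℝ) : ℂ) • r i := by
    rw [hsdef, hstar, hprod]
    refine Finset.sum_congr rfl fun i _ => ?_
    congr 1
    have := Complex.conj_mul' (α i)
    rw [Complex.star_def, this]; push_cast; rfl
  have hnn : ∀ β : ℕ → ℝ, (∀ i ∈ t, 0 ≤ β i) → 0 ≤ ∑ i ∈ t, ((β i : ℝ) : ℂ) • r i := by
    intro β hβ
    have := star_mul_self_nonneg (∑ i ∈ t, ((√(β i) : ℝ) : ℂ) • r i)
    rw [hstar, hprod] at this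
    convert this using 1
    refine Finset.sum_congr rfl fun i h => ?_
    congr 1
    rw [Complex.star_def, Complex.conj_ofReal, ← Complex.ofReal_mul, Real.mul_self_sqrt (hβ i h)]
  have hone : 0 ≤ 1 - ∑ i ∈ t, (1 : ℂ) • r i := by
    have := star_mul_self_nonneg (1 - ∑ i ∈ t, (1 : ℂ) • r i)
    have e : star (1 - ∑ i ∈ t, (1 : ℂ) • r i) * (1 - ∑ i ∈ t, (1 : ℂ) • r i) =
        1 - ∑ i ∈ t, (1 : ℂ) • r i := by
      rw [star_sub, star_one, hstar, mul_sub, sub_mul (1 : A), sub_mul (1 : A)]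
      simp only [star_one, hprod]
      simp
    rwa [e] at this
  have hle1 : ∑ i ∈ t, (((1 : ℝ) : ℂ)) • r i ≤ 1 := by
    rw [← sub_nonneg]; simpa using hone
  -- By the C⋆-identity it suffices that `star s * s ≤ M ^ 2 • ∑ r i` and `∑ r i ≤ 1`.
  have hnorm1 : ‖∑ i ∈ t, (((M ^ 2 : ℝ) : ℂ)) • r i‖ ≤ M ^ 2 := by
    have h1 := CStarAlgebra.norm_le_norm_of_nonneg_of_le (hnn (fun _ => 1) (by simp)) hle1
    rw [norm_one] at h1
    have e : ∑ i ∈ t, (((M ^ 2 : ℝ) : ℂ)) • r i =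
        ((M ^ 2 : ℝ) : ℂ) • ∑ i ∈ t, (((1 : ℝ) : ℂ)) • r i := by
      simp [Finset.smul_sum]
    rw [e, norm_smul, Complex.norm_real, Real.norm_of_nonneg (by positivity)]
    exact mul_le_of_le_one_right (by positivity) h1
  have hle : star s * s ≤ ∑ i ∈ t, (((M ^ 2 : ℝ) : ℂ)) • r i := by
    rw [← sub_nonneg, hss, ← Finset.sum_sub_distrib]
    have := hnn (fun i => M ^ 2 - ‖α i‖ ^ 2) fun i h => by
      have := pow_le_pow_left₀ (norm_nonneg _) (hα i h) 2
      linarith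
    convert this using 2 with i h
    rw [← sub_smul]; push_cast; rfl
  have := (CStarAlgebra.norm_le_norm_of_nonneg_of_le (star_mul_self_nonneg s) hle).trans hnorm1
  rw [CStarRing.norm_star_mul_self] at this
  nlinarith [norm_nonneg s]

/-- The perturbation `d` moving the points `lam n` onto `nu n`. Given orthogonal idempotents
`p n` commuting with `a` and killed by `T`, with `a - m` right invertible on the range of `p n` for
`m ≠ lam n`, and with `lam n - nu n → 0`, there is `d`
killed by `T` such that `a - d - μ` is right invertible whenever `μ` is none of the `nu n`
and `a - μ` is right invertible, possibly only modulo one of the `p k`. -/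
lemma exists_perturbation {B : Type*} [NormedRing B] [NormedAlgebra ℂ B]
    (T : A →ₐ[ℂ] B) (hT : Continuous T) (a : A) (p : ℕ → A) (lam nu : ℕ → ℂ)
    (hidem : ∀ n, p n * p n = p n) (horth : ∀ i j, i ≠ j → p i * p j = 0)
    (hcomm : ∀ n, a * p n = p n * a)
    (hlim : Filter.Tendsto (fun n => lam n - nu n) Filter.atTop (nhds 0))
    (hinner : ∀ n m, m ≠ lam n → ∃ v, (a - algebraMap ℂ A m) * v = p n)
    (hTp : ∀ n, T (p n) = 0) :
    ∃ d : A, T d = 0 ∧ ∀ μ : ℂ, (∀ n, μ ≠ nu n) →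
      (∃ y, (a - algebraMap ℂ A μ) * y = 1 ∨ ∃ k, (a - algebraMap ℂ A μ) * y = 1 - p k) →
      ∃ b, (a - d - algebraMap ℂ A μ) * b = 1 := by
  classical
  set P : ℕ → A := fun n => ∑ i ∈ Finset.range n, p i with hPdef
  have hPP : ∀ n m, n ≤ m → P n * P m = P n ∧ P m * P n = P n := by
    intro n m hnm
    have key : ∀ i ∈ Finset.range n, p i * P m = p i ∧ P m * p i = p i := by
      intro i hi
      have him : i ∈ Finset.range m := Finset.mem_range.2 ((Finset.mem_range.1 hi).trans_le hnm)
      constructor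
      · rw [hPdef, Finset.mul_sum, Finset.sum_eq_single i (fun j _ h => horth i j h.symm)
          (fun h => absurd him h), hidem]
      · rw [hPdef, Finset.sum_mul, Finset.sum_eq_single i (fun j _ h => horth j i h)
          (fun h => absurd him h), hidem]
    constructor
    · change (∑ i ∈ Finset.range n, p i) * P m = _
      rw [Finset.sum_mul]; exact Finset.sum_congr rfl fun i hi => (key i hi).1
    · change P m * (∑ i ∈ Finset.range n, p i) = _
      rw [Finset.mul_sum]; exact Finset.sum_congr rfl fun i hi => (key i hi).2
  have hPsucc : ∀ n, P (n + 1) = P n + p n := fun n => Finset.sum_range_succ _ _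
  have hPp : ∀ n, P (n + 1) * p n = p n := by
    intro n
    have : p n = P (n + 1) - P n := by rw [hPsucc]; abel
    rw [this, mul_sub, (hPP _ _ le_rfl).1, (hPP n (n + 1) (by omega)).2]
  choose q hqs hqP hPq using fun n => exists_range_projection (P n) (by exact (hPP n n le_rfl).1)
  have hqq : ∀ n m, n ≤ m → q m * q n = q n := by
    intro n m hnm
    rw [← hPq n, ← (hPP n m hnm).2, ← mul_assoc, ← mul_assoc, hqP]
  have hqq' : ∀ n m, n ≤ m → q n * q m = q n := by
    intro n m hnm
    have := congrArg star (hqq n m hnm)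
    rwa [star_mul, hqs, hqs] at this
  have hq0 : q 0 = 0 := by rw [← hPq 0]; simp [hPdef]
  have hqp : ∀ n, q (n + 1) * p n = p n := by
    intro n
    rw [← hPp n, ← mul_assoc, hqP]
  set r : ℕ → A := fun n => q (n + 1) - q n with hr
  have hrs : ∀ i, star (r i) = r i := fun i => by simp [hr, hqs]
  have hri : ∀ i, r i * r i = r i := fun i => by
    simp only [hr, mul_sub, sub_mul]
    rw [hqq _ _ le_rfl, hqq _ _ le_rfl, hqq i (i + 1) (by omega), hqq' i (i + 1) (by omega)]
    abel
  have hro1 : ∀ i j, i < j → r j * q (i + 1) = 0 := fun i j hij => by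
    simp only [hr, sub_mul]
    rw [hqq _ _ (by omega), hqq _ _ (by omega), sub_self]
  have hro2 : ∀ i j, i < j → r j * r i = 0 := fun i j hij => by
    have : r i = q (i + 1) * r i := by
      simp only [hr, mul_sub]; rw [hqq _ _ le_rfl, hqq i (i + 1) (by omega)]
    rw [this, ← mul_assoc, hro1 i j hij, zero_mul]
  have hro : ∀ i j, i ≠ j → r i * r j = 0 := by
    intro i j hij
    rcases lt_or_gt_of_ne hij with h | h
    · have := congrArg star (hro2 i j h)
      rwa [star_mul, hrs, hrs, star_zero] at this
    · exact hro2 j i h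
  set α : ℕ → ℂ := fun n => lam n - nu n with hα
  have hsum : Summable fun n => α n • r n := by
    rw [summable_iff_vanishing_norm]
    intro ε hε
    obtain ⟨N, hN⟩ := Metric.tendsto_atTop.1 hlim (ε / 2) (by linarith)
    refine ⟨Finset.range N, fun t ht => ?_⟩
    refine (norm_sum_orthogonal_le hrs hri hro α t (M := ε / 2) (by linarith) ?_).trans_lt
      (by linarith)
    intro i hi
    have : N ≤ i := by
      by_contra h
      exact Finset.disjoint_left.1 ht hi (Finset.mem_range.2 (by omega))
    simpa using (hN i this).le
  -- `d = ∑ (lam n - nu n) (q (n + 1) - q n)`, where `q n` is the range projection of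
  -- `p 0 + ⋯ + p (n - 1)`.
  obtain ⟨d, hd⟩ := hsum
  have hdq : ∀ n, d * q (n + 1) = ∑ k ∈ Finset.range (n + 1), α k • r k := by
    intro n
    refine (hd.mul_right (q (n + 1))).unique ?_
    have : ∀ k ∈ Finset.range (n + 1), α k • r k = α k • r k * q (n + 1) := by
      intro k hk
      have hk' := Finset.mem_range.1 hk
      rw [smul_mul_assoc]
      congr 1
      simp only [hr, sub_mul]
      rw [hqq' _ _ (by omega), hqq' _ _ (by omega)]
    rw [Finset.sum_congr rfl this]
    refine hasSum_sum_of_ne_finset_zero fun k hk => ?_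
    rw [smul_mul_assoc, hro1 n k (by simpa using hk), smul_zero]
  refine ⟨d, ?_, ?_⟩
  · have hTP : ∀ n, T (P n) = 0 := fun n => by simp [hPdef, map_sum, hTp]
    have hTq : ∀ n, T (q n) = 0 := fun n => by rw [← hPq, map_mul, hTP, zero_mul]
    have h1 := hd.map T hT
    have h2 : (T ∘ fun n => α n • r n) = fun _ => 0 := by
      funext n
      simp [hr, hTq]
    rw [h2] at h1
    exact h1.unique hasSum_zero
  · intro μ hμ hy
    set g := a - d - algebraMap ℂ A μ with hg
    -- The closed right ideal generated by `g` is shown to contain `1`; then `g b` is within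
    -- distance `1` of `1` for some `b`, and `g` is right invertible.
    set J : Submodule ℂ A := (LinearMap.range (LinearMap.mulLeft ℂ g)).topologicalClosure with hJ
    have hJcl : IsClosed (J : Set A) := Submodule.isClosed_topologicalClosure _
    have hgJ : ∀ b, g * b ∈ J := fun b => Submodule.le_topologicalClosure _ ⟨b, rfl⟩
    have hJmul : ∀ x ∈ J, ∀ b, x * b ∈ J := by
      intro x hx b
      refine map_mem_closure (f := fun x => x * b) (by fun_prop) hx ?_
      rintro _ ⟨c, rfl⟩
      exact ⟨c * b, by simp [mul_assoc]⟩
    -- Modulo `q n A`, `d` acts on `p n` as the scalar `α n`, so `g` acts as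
    -- `a - (lam n + μ - nu n)`, which is right invertible there since `μ ≠ nu n`.
    have hpq : ∀ n, q n ∈ J → p n ∈ J := by
      intro n hn
      obtain ⟨v, hv⟩ := hinner n (lam n + μ - nu n) (by
        intro h; exact hμ n (by linear_combination h))
      set S := ∑ k ∈ Finset.range n, α k • r k with hS
      have hqS : q n * S = S := by
        rw [hS, Finset.mul_sum]
        refine Finset.sum_congr rfl fun k hk => ?_
        have hk' := Finset.mem_range.1 hk
        rw [mul_smul_comm]
        congr 1
        simp only [hr, mul_sub]
        rw [hqq _ _ (by omega), hqq _ _ (by omega)]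
      have hdp : d * p n = α n • p n - q n * (α n • p n - S * p n) := by
        rw [← hqp n, ← mul_assoc, hdq, Finset.sum_range_succ, ← hS, hqp, mul_sub, ← mul_assoc, hqS,
          add_mul, smul_mul_assoc, mul_smul_comm]
        simp only [hr, sub_mul]
        rw [hqp, smul_sub]; abel
      have hav : (a - algebraMap ℂ A (lam n + μ - nu n)) * p n * v = p n := by
        rw [sub_mul, hcomm, Algebra.commutes _ (p n), ← mul_sub, mul_assoc, hv, hidem]
      have e : p n = g * (p n * v) - q n * ((α n • p n - S * p n) * v) := by
        have h1 : g * p n = (a - algebraMap ℂ A (lam n + μ - nu n)) * p n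
            + q n * (α n • p n - S * p n) := by
          rw [hg, sub_mul, sub_mul, hdp, sub_mul, Algebra.smul_def, hα]
          simp only [map_sub, map_add]
          noncomm_ring
        rw [← mul_assoc g, h1, add_mul, hav, mul_assoc (q n)]
        abel
      rw [e]
      exact J.sub_mem (hgJ _) (hJmul _ hn _)
    have hqJ : ∀ n, q n ∈ J := by
      intro n
      induction n with
      | zero => rw [hq0]; exact J.zero_mem
      | succ n ih =>
        rw [← hPq (n + 1)]
        refine hJmul _ ?_ _
        rw [hPsucc]
        refine J.add_mem ?_ (hpq n ih)
        rw [← hqP n]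
        exact hJmul _ ih _
    have hdJ : d ∈ J := by
      refine hJcl.mem_of_tendsto hd (Filter.Eventually.of_forall fun t => ?_)
      exact J.sum_mem fun i _ => J.smul_mem _ (J.sub_mem (hqJ _) (hqJ _))
    have haJ : a - algebraMap ℂ A μ ∈ J := by
      have : a - algebraMap ℂ A μ = g * 1 + d := by rw [hg]; noncomm_ring
      rw [this]
      exact J.add_mem (hgJ _) hdJ
    have h1J : (1 : A) ∈ J := by
      obtain ⟨y, hy | ⟨k, hy⟩⟩ := hy
      · rw [← hy]; exact hJmul _ haJ _
      · have : (1 : A) = (a - algebraMap ℂ A μ) * y + p k := by rw [hy]; abel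
        rw [this]
        exact J.add_mem (hJmul _ haJ _) (hpq k (hqJ k))
    obtain ⟨_, ⟨b, rfl⟩, hb⟩ := Metric.mem_closure_iff.1 h1J 1 one_pos
    rw [dist_eq_norm] at hb
    have hu := isUnit_one_sub_of_norm_lt_one hb
    simp only [LinearMap.mulLeft_apply, sub_sub_cancel] at hu
    obtain ⟨u, hu⟩ := hu
    exact ⟨b * ↑u⁻¹, by rw [← mul_assoc, ← hu, Units.mul_inv]⟩
end P3

/-! ### Topology of spectra outside a finite set -/

section P4
variable {A B : Type*} [NormedRing A] [NormedAlgebra ℂ A] [CompleteSpace A]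

lemma isPreconnected_compl_finite {W : Set ℂ} (hW : W.Finite) : IsPreconnected Wᶜ :=
  (hW.countable.isConnected_compl_of_one_lt_rank (by simp)).isPreconnected

/-- With `W` finite, the spectrum cannot accumulate outside `W`. An accumulation point outside `W`
is not a frontier point, so it is interior; then the connected set `Wᶜ`, which meets the
interior of `σ(x)` but no accumulation point on its frontier, lies in the bounded set `σ(x)`. -/
lemma isolated_of_strongRiesz (x : A) {W : Set ℂ} (hW : W.Finite)
    (h : frontier (spectrum ℂ x) ⊆ W ∪
      (spectrum ℂ x \ {z : ℂ | z ∈ closure (spectrum ℂ x \ {z})}))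
    {z : ℂ} (hzW : z ∉ W) : z ∉ closure (spectrum ℂ x \ {z}) := by
  intro hacc
  have hz : z ∈ spectrum ℂ x :=
    (spectrum.isClosed x).closure_subset_iff.2 Set.sdiff_subset hacc
  by_cases hzi : z ∈ interior (spectrum ℂ x)
  · have hsub : Wᶜ ⊆ interior (spectrum ℂ x) := by
      refine (isPreconnected_compl_finite hW).subset_of_closure_inter_subset isOpen_interior
        ⟨z, hzW, hzi⟩ ?_
      rintro w ⟨hw, hwW⟩
      by_contra hwi
      have hfr : w ∈ frontier (spectrum ℂ x) :=
        ⟨closure_mono interior_subset hw, hwi⟩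
      refine ((h hfr).resolve_left hwW).2 (closure_mono ?_ hw)
      intro v hv
      refine ⟨interior_subset hv, ?_⟩
      rintro rfl
      exact hwi hv
    have hb : Bornology.IsBounded (Set.univ : Set ℂ) := by
      refine (hW.isBounded.union (spectrum.isBounded (𝕜 := ℂ) x)).subset fun w _ => ?_
      by_cases hw : w ∈ W
      · exact Or.inl hw
      · exact Or.inr (interior_subset (hsub hw))
    exact NormedSpace.unbounded_univ ℂ ℂ hb
  · exact ((h ⟨subset_closure hz, hzi⟩).resolve_left hzW).2 hacc

lemma exists_isSpectralIdempotent_of_isolated (x : A) {z : ℂ}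
    (hz : z ∉ closure (spectrum ℂ x \ {z})) : ∃ p, IsSpectralIdempotent x z p := by
  obtain ⟨r, hr, hb⟩ := Metric.isOpen_iff.1 isClosed_closure.isOpen_compl z hz
  refine exists_isSpectralIdempotent x z (r := r / 2) (by linarith) fun w hw hwr hmem => ?_
  exact hb (a := w) (by rw [mem_ball_iff_norm]; linarith) (subset_closure ⟨hmem, hw⟩)

/-- The part of the spectrum at distance at least `ε` from `W` is compact and discrete, hence
finite. -/
lemma finite_far (x : A) {W : Set ℂ}
    (hiso : ∀ z, z ∉ W → z ∉ closure (spectrum ℂ x \ {z})) {ε : ℝ} (hε : 0 < ε) :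
    {z ∈ spectrum ℂ x | ∀ w ∈ W, ε ≤ ‖z - w‖}.Finite := by
  set F := {z ∈ spectrum ℂ x | ∀ w ∈ W, ε ≤ ‖z - w‖} with hF
  have hFc : IsCompact F := by
    refine (spectrum.isCompact x).of_isClosed_subset ?_ (Set.sep_subset _ _)
    have : F = spectrum ℂ x ∩ ⋂ w ∈ W, {z | ε ≤ ‖z - w‖} := by
      ext z; simp [hF]
    rw [this]
    exact (spectrum.isClosed x).inter (isClosed_biInter fun w _ =>
      isClosed_le continuous_const (by fun_prop))
  by_contra hinf
  obtain ⟨z, hzF, hacc⟩ := Set.Infinite.exists_accPt_of_subset_isCompact hinf hFc subset_rfl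
  refine hiso z (fun hzW => ?_) ?_
  · have := hzF.2 z hzW
    simp at this; linarith
  · rw [accPt_principal_iff_clusterPt] at hacc
    exact closure_mono (Set.sdiff_subset_sdiff_left (Set.sep_subset _ _))
      (mem_closure_iff_clusterPt.2 hacc)

/-- If `c - μ` is right invertible for all `μ` outside a finite set `W`, then `σ(c) ⊆ W`. On the
connected set `Wᶜ` two-sided invertibility is both an open and a relatively closed condition: if
`b` is a right inverse of `c - μ`, then `(c - ν) b` is invertible for `ν` near `μ`, and so is `b`
as soon as `c - ν` is. -/
lemma spectrum_subset_of_right_inverse (c : A) {W : Set ℂ} (hW : W.Finite)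
    (h : ∀ μ, μ ∉ W → ∃ b, (c - algebraMap ℂ A μ) * b = 1) : spectrum ℂ c ⊆ W := by
  have hmem : ∀ μ, μ ∈ resolventSet ℂ c ↔ IsUnit (c - algebraMap ℂ A μ) := fun μ => by
    rw [spectrum.mem_resolventSet_iff, ← neg_sub, IsUnit.neg_iff]
  have hsub : Wᶜ ⊆ resolventSet ℂ c := by
    refine (isPreconnected_compl_finite hW).subset_of_closure_inter_subset
      (spectrum.isOpen_resolventSet c) ?_ ?_
    · by_contra hne
      rw [Set.not_nonempty_iff_eq_empty] at hne
      refine NormedSpace.unbounded_univ ℂ ℂ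
        ((hW.isBounded.union (spectrum.isBounded (𝕜 := ℂ) c)).subset fun w _ => ?_)
      by_contra hw
      rw [Set.mem_union, not_or] at hw
      have : w ∈ Wᶜ ∩ resolventSet ℂ c := ⟨hw.1, by simpa [spectrum] using hw.2⟩
      rw [hne] at this
      exact this
    · rintro μ ⟨hμ, hμW⟩
      obtain ⟨b, hb⟩ := h μ hμW
      have hcont : Continuous fun z : ℂ => (c - algebraMap ℂ A z) * b :=
        (continuous_const.sub (continuous_algebraMap ℂ A)).mul continuous_const
      have hopen := (Units.isOpen (R := A)).preimage hcont
      obtain ⟨ν, hν1, hν2⟩ := mem_closure_iff.1 hμ _ hopen (by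
        change IsUnit ((c - algebraMap ℂ A μ) * b)
        rw [hb]; exact isUnit_one)
      have hν1' : IsUnit ((c - algebraMap ℂ A ν) * b) := hν1
      obtain ⟨u, hu⟩ := (hmem ν).1 hν2
      rw [← hu, Units.isUnit_units_mul] at hν1'
      rw [hmem]
      obtain ⟨v, rfl⟩ := hν1'
      rw [Units.mul_eq_one_iff_eq_inv] at hb
      rw [hb]
      exact Units.isUnit _
  intro z hz
  by_contra hzW
  exact hz (hsub hzW)
end P4

/-! ### The decomposition -/


/-- Decomposition of polynomially `T`-Riesz elements: if `T` has the strong Riesz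
property and `ω_T(a)` is finite, then `a = c + d + f` with `c` quasinilpotent,
`T d = 0` and `σ_A(f) = ω_T(a)`. -/
theorem polyTRiesz_decomposition
    {A B : Type*}
    [NormedRing A] [StarRing A] [CStarRing A] [NormedAlgebra ℂ A]
    [CompleteSpace A] [StarModule ℂ A] [Nontrivial A]
    [NormedRing B] [StarRing B] [CStarRing B] [NormedAlgebra ℂ B]
    [CompleteSpace B] [StarModule ℂ B] [Nontrivial B]
    (T : A →ₐ[ℂ] B) (hTcont : Continuous T)
    (hStrongRiesz : ∀ x : A, frontier (spectrum ℂ x) ⊆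
      spectrum ℂ (T x) ∪
        (spectrum ℂ x \ {z : ℂ | z ∈ closure (spectrum ℂ x \ {z})}))
    (a : A)
    (hfin : Set.Finite {z : ℂ | ¬ ∃ c d : A,
      algebraMap ℂ A z - a = c + d ∧ T c = 0 ∧ IsUnit d}) :
    ∃ c d f : A, a = c + d + f ∧ spectrum ℂ c = {0} ∧ T d = 0 ∧
      spectrum ℂ f = {z : ℂ | ¬ ∃ c' d' : A,
        algebraMap ℂ A z - a = c' + d' ∧ T c' = 0 ∧ IsUnit d'} := by
  classical
  set ω : Set ℂ := {z : ℂ | ¬ ∃ c d : A,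
      algebraMap ℂ A z - a = c + d ∧ T c = 0 ∧ IsUnit d} with hω
  have hWω : spectrum ℂ (T a) ⊆ ω := by
    rintro z hz ⟨c, d, h1, h2, h3⟩
    rw [spectrum.mem_iff] at hz
    apply hz
    have : algebraMap ℂ B z - T a = T d := by
      rw [← AlgHom.commutes T z, ← map_sub, h1, map_add, h2, zero_add]
    rw [this]
    exact h3.map T
  have hWfin : (spectrum ℂ (T a)).Finite := hfin.subset hWω
  have hiso : ∀ z, z ∉ spectrum ℂ (T a) → z ∉ closure (spectrum ℂ a \ {z}) := fun z hz =>
    isolated_of_strongRiesz a hWfin (hStrongRiesz a) hz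
  have hex : ∀ z, z ∉ spectrum ℂ (T a) → ∃ p, IsSpectralIdempotent a z p := fun z hz =>
    exists_isSpectralIdempotent_of_isolated a (hiso z hz)
  -- For `z ∉ W` with spectral idempotent `p`, `T p = 0` and `a - z + p` is invertible, so
  -- `z - a` is `T`-Weyl.
  have hωW : ω = spectrum ℂ (T a) := by
    refine Set.Subset.antisymm (fun z hz => ?_) hWω
    by_contra hzW
    obtain ⟨p, hp⟩ := hex z hzW
    apply hz
    refine ⟨p, algebraMap ℂ A z - a - p, by abel, hp.map_eq_zero T hzW, ?_⟩
    have hu : IsUnit ((a - algebraMap ℂ A z) * p + 1) := by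
      simpa using hp.quasinilpotent (-1) (by simp)
    obtain ⟨u, hu⟩ := hu
    obtain ⟨y, h1, h2⟩ := hp.outer
    rw [← IsUnit.neg_iff]
    have e : -(algebraMap ℂ A z - a - p) = (a - algebraMap ℂ A z) + p := by abel
    rw [e]
    have hc := hp.comm_sub z
    generalize a - algebraMap ℂ A z = g at *
    have h0 : (1 - p) * p = 0 := by rw [sub_mul, hp.idem]; simp
    have h0' : p * (1 - p) = 0 := by rw [mul_sub, hp.idem]; simp
    have hgp : (g + p) * p = p * u := by
      rw [hu, add_mul, hp.idem, mul_add, ← mul_assoc, ← hc, mul_assoc, hp.idem, mul_one]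
    have hpg : p * (g + p) = u * p := by
      rw [hu, mul_add, hp.idem, add_mul, mul_assoc, hp.idem, ← hc, one_mul]
    have hr : (g + p) * (p * ↑u⁻¹ + (1 - p) * y * (1 - p)) = 1 := by
      have e1 : (g + p) * (1 - p) = (1 - p) * g := by
        rw [add_mul, h0', mul_sub, sub_mul, hc]; simp
      rw [mul_add, ← mul_assoc, hgp, mul_assoc, Units.mul_inv, ← mul_assoc, ← mul_assoc, e1,
        mul_assoc (1 - p) g y, h1, mul_assoc]
      noncomm_ring
      simp [hp.idem]
      noncomm_ring
    have hl : (↑u⁻¹ * p + (1 - p) * y * (1 - p)) * (g + p) = 1 := by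
      have e1 : (1 - p) * (g + p) = g * (1 - p) := by
        rw [mul_add, h0, mul_sub, sub_mul, hc]; simp
      rw [add_mul, mul_assoc, hpg, ← mul_assoc, Units.inv_mul, mul_assoc, e1,
        mul_assoc (1 - p) y, ← mul_assoc y g, h2]
      noncomm_ring
      simp [hp.idem]
      noncomm_ring
    exact ⟨⟨_, _, hr, left_inv_eq_right_inv hl hr ▸ hl⟩, rfl⟩
  rw [hωW]
  set W := spectrum ℂ (T a) with hW
  obtain ⟨w₀, hw₀⟩ : W.Nonempty := spectrum.nonempty (T a)
  have hnear : ∀ z : ℂ, ∃ w ∈ W, ∀ w' ∈ W, ‖z - w‖ ≤ ‖z - w'‖ := fun z =>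
    Set.exists_min_image W (fun w => ‖z - w‖) hWfin ⟨w₀, hw₀⟩
  choose near hnearW hnear using hnear
  have hnear_self : ∀ w ∈ W, near w = w := fun w hw => by
    have := hnear w w hw
    rw [sub_self, norm_zero] at this
    exact (sub_eq_zero.1 (norm_le_zero_iff.1 this)).symm
  have hfar : ∀ ε : ℝ, 0 < ε → {z ∈ spectrum ℂ a \ W | ε ≤ ‖z - near z‖}.Finite := fun ε hε =>
    (finite_far a hiso hε).subset fun z hz =>
      ⟨hz.1.1, fun w hw => hz.2.trans (hnear z w hw)⟩
  have hcount : (spectrum ℂ a \ W).Countable := by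
    have : spectrum ℂ a \ W ⊆
        ⋃ n : ℕ, {z ∈ spectrum ℂ a \ W | (1 / ((n : ℝ) + 1)) ≤ ‖z - near z‖} := by
      intro z hz
      have hpos : 0 < ‖z - near z‖ := norm_pos_iff.2 (sub_ne_zero.2 fun h =>
        hz.2 (h ▸ hnearW z))
      obtain ⟨n, hn⟩ := exists_nat_one_div_lt hpos
      exact Set.mem_iUnion.2 ⟨n, hz, hn.le⟩
    exact (Set.countable_iUnion fun n => (hfar _ (by positivity)).countable).mono this
  obtain ⟨F, hF⟩ := Set.countable_iff_exists_injOn.1 hcount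
  -- An enumeration of `σ(a) \ W`; unused indices get the value `w₀ ∈ W` and, below, `p n = 0`.
  have hlamEx : ∀ n : ℕ, ∃ z : ℂ, (z ∈ spectrum ℂ a \ W ∧ F z = n) ∨
      (z = w₀ ∧ ∀ s ∈ spectrum ℂ a \ W, F s ≠ n) := by
    intro n
    by_cases h : ∃ s ∈ spectrum ℂ a \ W, F s = n
    · obtain ⟨s, hs, hsn⟩ := h
      exact ⟨s, Or.inl ⟨hs, hsn⟩⟩
    · push Not at h
      exact ⟨w₀, Or.inr ⟨rfl, h⟩⟩
  choose lam hlam using hlamEx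
  have hpEx : ∀ n, ∃ p : A, (lam n ∉ W ∧ F (lam n) = n ∧ IsSpectralIdempotent a (lam n) p) ∨
      (lam n = w₀ ∧ p = 0) := by
    intro n
    rcases hlam n with ⟨h1, h2⟩ | ⟨h1, -⟩
    · obtain ⟨p, hp⟩ := hex _ h1.2
      exact ⟨p, Or.inl ⟨h1.2, h2, hp⟩⟩
    · exact ⟨0, Or.inr ⟨h1, rfl⟩⟩
  choose p hp using hpEx
  obtain ⟨d, hTd, hd⟩ := exists_perturbation T hTcont a p lam (fun n => near (lam n))
    (fun n => by
      rcases hp n with h | h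
      · exact h.2.2.idem
      · rw [h.2, mul_zero])
    (fun i j hij => by
      rcases hp i with hi | hi
      · rcases hp j with hj | hj
        · refine hi.2.2.mul_eq_zero hj.2.2 fun h => hij ?_
          rw [← hi.2.1, ← hj.2.1, h]
        · rw [hj.2, mul_zero]
      · rw [hi.2, zero_mul])
    (fun n => by
      rcases hp n with h | h
      · exact h.2.2.comm
      · rw [h.2, mul_zero, zero_mul])
    (by
      rw [← Nat.cofinite_eq_atTop, Metric.tendsto_nhds]
      intro ε hε
      rw [Filter.eventually_cofinite]
      refine ((hfar ε hε).image F).subset fun n hn => ?_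
      simp only [dist_zero_right, not_lt, Set.mem_ofPred_eq] at hn
      rcases hlam n with h | h
      · exact ⟨lam n, ⟨h.1, hn⟩, h.2⟩
      · rw [h.1, hnear_self w₀ hw₀, sub_self, norm_zero] at hn
        linarith)
    (fun n m hm => by
      rcases hp n with h | h
      · obtain ⟨v, hv, -⟩ := h.2.2.inner m hm
        exact ⟨v, hv⟩
      · exact ⟨0, by rw [h.2, mul_zero]⟩)
    (fun n => by
      rcases hp n with h | h
      · exact h.2.2.map_eq_zero T h.1
      · rw [h.2, map_zero])
  have hspec : spectrum ℂ (a - d) = W := by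
    refine Set.Subset.antisymm (spectrum_subset_of_right_inverse (a - d) hWfin fun μ hμ => ?_) ?_
    · refine hd μ (fun n h => hμ (h ▸ hnearW _)) ?_
      by_cases hμa : μ ∈ spectrum ℂ a
      · have hlamμ : lam (F μ) = μ := by
          rcases hlam (F μ) with h | h
          · exact hF h.1 ⟨hμa, hμ⟩ h.2
          · exact absurd rfl (h.2 μ ⟨hμa, hμ⟩)
        rcases hp (F μ) with h | h
        · obtain ⟨y, hy, -⟩ := h.2.2.outer
          rw [hlamμ] at hy
          exact ⟨y, Or.inr ⟨_, hy⟩⟩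
        · exact absurd (hlamμ ▸ h.1 ▸ hw₀) hμ
      · rw [spectrum.notMem_iff, ← neg_sub, IsUnit.neg_iff] at hμa
        obtain ⟨u, hu⟩ := hμa
        exact ⟨↑u⁻¹, Or.inl (by rw [← hu, Units.mul_inv])⟩
    · have : T (a - d) = T a := by rw [map_sub, hTd, sub_zero]
      rw [hW, ← this]
      exact AlgHom.spectrum_apply_subset T (a - d)
  obtain ⟨f, hf1, hf2⟩ := exists_finite_spectrum_part (a - d) hWfin.toFinset (by simpa using hspec)
  exact ⟨a - d - f, d, f, by abel, hf1.spectrum_eq, hTd, by simpa using hf2⟩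
end

section
/- Let A and B be unital complex C*-algebras and T : A → B a continuous unital algebra homomorphism satisfying the strong Riesz property. If a ∈ A has finite T-Weyl spectrum ω_T(a), then acc σ_A(a) ⊆ ω_T(a), i.e. every accumulation point of σ_A(a) belongs to the T-Weyl spectrum of a. -/
/-!
A `T`-Weyl element has invertible image under `T`, so `σ(T a) ⊆ ω_T(a)` and `σ(T a)` is finite.
Let `V` be the interior of `σ(a)`. A frontier point of `V` is a frontier point of `σ(a)` that is not
isolated in `σ(a)`, so by the strong Riesz property it lies in `σ(T a)`. The complement of the finite
set `σ(T a)` is connected, so it cannot meet both `V` and `Vᶜ` without meeting the frontier of `V`.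
As `σ(a) ⊇ σ(T a)` is compact, it does meet `Vᶜ`, hence `V ⊆ σ(T a)`. Finally, an
accumulation point of `σ(a)` outside `ω_T(a)` is not in `σ(T a)`, so by the strong Riesz property
it would lie in `V`, which is impossible.
-/

/-- If `T` has the strong Riesz property and the `T`-Weyl spectrum of `a` is finite,
then every accumulation point of `σ_A(a)` lies in the `T`-Weyl spectrum. -/
theorem acc_spectrum_subset_weyl_of_finite_weyl
    {A B : Type*}
    [NormedRing A] [StarRing A] [CStarRing A] [NormedAlgebra ℂ A]
    [CompleteSpace A] [StarModule ℂ A] [Nontrivial A]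
    [NormedRing B] [StarRing B] [CStarRing B] [NormedAlgebra ℂ B]
    [CompleteSpace B] [StarModule ℂ B] [Nontrivial B]
    (T : A →ₐ[ℂ] B) (hTcont : Continuous T)
    (hStrongRiesz : ∀ x : A, frontier (spectrum ℂ x) ⊆
      spectrum ℂ (T x) ∪
        (spectrum ℂ x \ {z : ℂ | z ∈ closure (spectrum ℂ x \ {z})}))
    (a : A)
    (hfin : Set.Finite {z : ℂ | ¬ ∃ c d : A,
      algebraMap ℂ A z - a = c + d ∧ T c = 0 ∧ IsUnit d}) :
    {z : ℂ | z ∈ closure (spectrum ℂ a \ {z})} ⊆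
      {z : ℂ | ¬ ∃ c d : A, algebraMap ℂ A z - a = c + d ∧ T c = 0 ∧ IsUnit d} := by
  intro z hz hzW
  change z ∈ closure (spectrum ℂ a \ {z}) at hz
  have hTW : spectrum ℂ (T a) ⊆ {z : ℂ | ¬ ∃ c d : A,
      algebraMap ℂ A z - a = c + d ∧ T c = 0 ∧ IsUnit d} := by
    rintro w hw ⟨c, d, h, hc, hd⟩
    apply hw
    have h' := congrArg T h
    rw [map_sub, map_add, hc, zero_add, AlgHom.commutes] at h'
    change IsUnit (algebraMap ℂ B w - T a)
    rw [h']
    exact hd.map T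
  have hFfin : (spectrum ℂ (T a)).Finite := hfin.subset hTW
  have hzF : z ∉ spectrum ℂ (T a) := fun h => hTW h hzW
  have hSclosed : IsClosed (spectrum ℂ a) := spectrum.isClosed a
  have hzS : z ∈ spectrum ℂ a := hSclosed.closure_subset_iff.2 Set.sdiff_subset hz
  have hzint : z ∈ interior (spectrum ℂ a) := by
    by_contra hni
    rcases hStrongRiesz a ⟨subset_closure hzS, hni⟩ with h | h
    · exact hzF h
    · exact h.2 hz
  have hconn : IsPreconnected (spectrum ℂ (T a))ᶜ :=
    (hFfin.countable.isPathConnected_compl_of_one_lt_rank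
      (by rw [Complex.rank_real_complex]; exact Nat.one_lt_ofNat)).isConnected.isPreconnected
  obtain ⟨y, hy⟩ : ∃ y, y ∉ spectrum ℂ a :=
    (Set.ne_univ_iff_exists_notMem _).1 (spectrum.isCompact a).ne_univ
  -- The connected set `(σ(T a))ᶜ` contains no frontier point of the interior of `σ(a)`.
  have hsub : (spectrum ℂ (T a))ᶜ ⊆ interior (spectrum ℂ a) := by
    refine hconn.subset_of_closure_inter_subset isOpen_interior ⟨z, hzF, hzint⟩ ?_
    rintro w ⟨hwcl, hwF⟩
    by_contra hwi
    rcases hStrongRiesz a (frontier_interior_subset ⟨hwcl, by rwa [interior_interior]⟩) with h | h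
    · exact hwF h
    · -- `w` is a limit of interior points of `σ(a)` without being one, so it is not isolated.
      have hsub' : interior (spectrum ℂ a) ⊆ spectrum ℂ a \ {w} := by
        intro x hx
        refine ⟨interior_subset hx, ?_⟩
        rintro rfl
        exact hwi hx
      exact h.2 (closure_mono hsub' hwcl)
  exact hy (interior_subset (hsub fun h => hy (AlgHom.spectrum_apply_subset T a h)))
end
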